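/- arXiv:2008.12651 — 3 statements merged into one kernel-verified Lean document; each statement's English description precedes it below -/
import Mathlib

section
/- Let F be a finite field of odd order and let X ∈ M_n(F) be invertible. Then there exists a nonsingular quadratic form Q on F^n such that X is an isometry of Q if and only if X is similar to X⁻¹ and, for every λ ∈ {1, −1} and every even m ≥ 2, the multiplicity of (t−λ)^m as an elementary divisor of X is even. -/
open Matrix

/-- The multiplicity of `(t - λ)^m` as an elementary divisor of `X`, computed as
`2·dim ker((X−λI)^m) − dim ker((X−λI)^{m+1}) − dim ker((X−λI)^{m−1})` (as an integer). -/
noncomputable def edMultiplicity {F : Type*} [Field F] {n : ℕ}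
    (X : Matrix (Fin n) (Fin n) F) (lam : F) (m : ℕ) : ℤ :=
  2 * (Module.finrank F (LinearMap.ker (Matrix.toLin' ((X - lam • 1) ^ m))) : ℤ)
    - (Module.finrank F (LinearMap.ker (Matrix.toLin' ((X - lam • 1) ^ (m + 1)))) : ℤ)
    - (Module.finrank F (LinearMap.ker (Matrix.toLin' ((X - lam • 1) ^ (m - 1)))) : ℤ)

open Polynomial in
/-- A cyclic torsion module over `F[X]` carries a nondegenerate bilinear form for which
multiplication by `X` is self-adjoint. -/
lemma exists_separating_form_quotient {F : Type*} [Field F] (f : F[X]) (hf : f ≠ 0) :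
    ∃ β : (F[X] ⧸ Submodule.span F[X] {f}) →ₗ[F] (F[X] ⧸ Submodule.span F[X] {f}) →ₗ[F] F,
      (∀ x y, β ((X : F[X]) • x) y = β x ((X : F[X]) • y)) ∧ β.SeparatingLeft := by
  obtain ⟨g, hg, hfg⟩ : ∃ g : F[X], g.Monic ∧
      Submodule.span F[X] {f} = (Ideal.span {g} : Ideal F[X]) := by
    refine ⟨f * C f.leadingCoeff⁻¹, monic_mul_leadingCoeff_inv hf, ?_⟩
    refine (Ideal.span_singleton_mul_right_unit ?_ f).symm
    exact isUnit_C.2 (IsUnit.mk0 _ (inv_ne_zero (leadingCoeff_ne_zero.2 hf)))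
  rw [hfg]
  let l : AdjoinRoot g →ₗ[F] F := (lcoeff F (g.natDegree - 1)) ∘ₗ AdjoinRoot.modByMonicHom hg
  let β : AdjoinRoot g →ₗ[F] AdjoinRoot g →ₗ[F] F := (LinearMap.mul F (AdjoinRoot g)).compr₂ l
  refine ⟨β, ?_, fun x hx => ?_⟩
  · intro (x : AdjoinRoot g) (y : AdjoinRoot g)
    change l (_ * _) = l (_ * _)
    congr 1
    have h (z : AdjoinRoot g) :
        HSMul.hSMul (β := F[X] ⧸ (Ideal.span {g} : Ideal F[X])) (X : F[X]) z =
          AdjoinRoot.mk g X * z := by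
      obtain ⟨a, rfl⟩ := AdjoinRoot.mk_surjective (g := g) z
      rfl
    have key (x y : AdjoinRoot g) :
        AdjoinRoot.mk g X * x * y = x * (AdjoinRoot.mk g X * y) := by ring
    exact (congrArg (fun z : AdjoinRoot g => z * y) (h x)).trans
      ((key x y).trans (congrArg (fun z : AdjoinRoot g => x * z) (h y)).symm)
  · by_contra hne
    obtain ⟨a, rfl⟩ := AdjoinRoot.mk_surjective (g := g) x
    set r := a %ₘ g with hr
    have hra : AdjoinRoot.mk g r = AdjoinRoot.mk g a := by
      rw [AdjoinRoot.mk_eq_mk, hr, modByMonic_eq_sub_mul_div a]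
      exact ⟨-(a /ₘ g), by ring⟩
    have hr0 : r ≠ 0 := by
      intro h
      rw [h, map_zero] at hra
      exact hne hra.symm
    have hdeg : r.degree < g.degree := degree_modByMonic_lt a hg
    have hnat : r.natDegree < g.natDegree := natDegree_lt_natDegree hr0 hdeg
    have h1 : l (AdjoinRoot.mk g a * AdjoinRoot.mk g (X ^ (g.natDegree - 1 - r.natDegree))) = 0 :=
      hx (AdjoinRoot.mk g (X ^ (g.natDegree - 1 - r.natDegree)))
    rw [← hra, ← map_mul] at h1
    change coeff (AdjoinRoot.modByMonicHom hg _) _ = 0 at h1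
    have hlt : (r * X ^ (g.natDegree - 1 - r.natDegree)).degree < g.degree := by
      rw [degree_mul, degree_X_pow, degree_eq_natDegree hr0, degree_eq_natDegree hg.ne_zero]
      norm_cast
      omega
    rw [AdjoinRoot.modByMonicHom_mk, (modByMonic_eq_self_iff hg).2 hlt] at h1
    have h2 : g.natDegree - 1 = r.natDegree + (g.natDegree - 1 - r.natDegree) := by omega
    rw [h2] at h1
    rw [show r.natDegree + (g.natDegree - 1 - r.natDegree) - r.natDegree =
      g.natDegree - 1 - r.natDegree by omega, coeff_mul_X_pow] at h1
    exact hr0 (leadingCoeff_eq_zero.1 h1)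

open Polynomial in
/-- Every endomorphism is self-adjoint for some nondegenerate bilinear form. -/
lemma exists_separating_form_selfAdjoint {F V : Type*} [Field F] [AddCommGroup V] [Module F V]
    [FiniteDimensional F V] (T : Module.End F V) :
    ∃ g : V →ₗ[F] V →ₗ[F] F, (∀ x y, g (T x) y = g x (T y)) ∧ g.SeparatingLeft := by
  have htors : Module.IsTorsion F[X] (Module.AEval' T) :=
    Module.AEval.isTorsion_of_finiteDimensional F V T
  classical
  obtain ⟨ι, _, p, hp, e, ⟨E⟩⟩ := Module.equiv_directSum_of_isTorsion htors
  have hf (i : ι) : p i ^ e i ≠ 0 := pow_ne_zero _ (hp i).ne_zero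
  choose β hβ hsep using fun i => exists_separating_form_quotient (p i ^ e i) (hf i)
  let E' := E.trans (DirectSum.linearEquivFunOnFintype F[X] ι
    fun i => F[X] ⧸ Submodule.span F[X] {p i ^ e i})
  let φ : V →ₗ[F] (∀ i, F[X] ⧸ Submodule.span F[X] {p i ^ e i}) :=
    (E'.restrictScalars F).toLinearMap ∘ₗ (Module.AEval'.of T).toLinearMap
  have hφT (x : V) (i : ι) : φ (T x) i = (X : F[X]) • φ x i := by
    change E' (Module.AEval'.of T (T x)) i = (X : F[X]) • E' (Module.AEval'.of T x) i
    rw [← Module.AEval'.X_smul_of, map_smul]; rfl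
  have hφs : Function.Surjective φ :=
    E'.surjective.comp (Module.AEval'.of T).surjective
  have hφi : Function.Injective φ :=
    E'.injective.comp (Module.AEval'.of T).injective
  refine ⟨∑ i, (β i).compl₁₂ (LinearMap.proj i ∘ₗ φ) (LinearMap.proj i ∘ₗ φ), fun x y => ?_,
    fun x hx => ?_⟩
  · simp [LinearMap.sum_apply, hφT, hβ]
  · apply hφi
    rw [map_zero]
    funext i
    refine hsep i _ fun z => ?_
    obtain ⟨y, hy⟩ := hφs (Pi.single i z)
    have h := hx y
    simp only [LinearMap.sum_apply, LinearMap.compl₁₂_apply, LinearMap.comp_apply,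
      LinearMap.proj_apply, hy] at h
    rw [Finset.sum_eq_single i (fun j _ hj => by rw [Pi.single_eq_of_ne hj, map_zero])
      (by simp)] at h
    simpa using h

/-- Every square matrix over a field is similar to its transpose. -/
lemma exists_isUnit_transpose_mul_eq {F : Type*} [Field F] {n : ℕ} (X : Matrix (Fin n) (Fin n) F) :
    ∃ S : Matrix (Fin n) (Fin n) F, IsUnit S ∧ Xᵀ * S = S * X := by
  obtain ⟨g, hg, hsep⟩ := exists_separating_form_selfAdjoint (Matrix.toLin' X)
  refine ⟨LinearMap.toMatrix₂' F g, ?_, ?_⟩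
  · rw [Matrix.isUnit_iff_isUnit_det, isUnit_iff_ne_zero]
    exact LinearMap.separatingLeft_iff_det_ne_zero (Pi.basisFun F (Fin n)) |>.1 hsep
  · have h1 := LinearMap.toMatrix₂'_comp (R := F) g (Matrix.toLin' X)
    have h2 := LinearMap.toMatrix₂'_compl₂ (R := F) g (Matrix.toLin' X)
    rw [LinearMap.toMatrix'_toLin'] at h1 h2
    rw [← h1, ← h2]
    congr 1
    exact LinearMap.ext fun x => LinearMap.ext fun y => hg x y

/-- The multiplicity of `(t - λ)^m` as an elementary divisor of an endomorphism. -/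
noncomputable def endMultiplicity {F V : Type*} [Field F] [AddCommGroup V] [Module F V]
    (T : Module.End F V) (lam : F) (m : ℕ) : ℤ :=
  2 * (Module.finrank F (LinearMap.ker ((T - lam • 1) ^ m)) : ℤ)
    - (Module.finrank F (LinearMap.ker ((T - lam • 1) ^ (m + 1))) : ℤ)
    - (Module.finrank F (LinearMap.ker ((T - lam • 1) ^ (m - 1))) : ℤ)

section Forms

variable {F V : Type*} [Field F] [AddCommGroup V] [Module F V]

lemma finrank_map_add_finrank_inf_ker [FiniteDimensional F V] {V' : Type*} [AddCommGroup V']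
    [Module F V'] (f : V →ₗ[F] V') (A : Submodule F V) :
    Module.finrank F (A.map f) + Module.finrank F (A ⊓ LinearMap.ker f : Submodule F V) =
      Module.finrank F A := by
  have h := LinearMap.finrank_range_add_finrank_ker (f.domRestrict A)
  rw [LinearMap.range_domRestrict, LinearMap.ker_domRestrict,
    ← Submodule.finrank_map_subtype_eq, Submodule.map_comap_subtype] at h
  exact h

/-- The rank of a skew-symmetric form is even in characteristic different from two. -/
lemma even_finrank_range_of_skew [FiniteDimensional F V] (h2 : (2 : F) ≠ 0)
    (C : V →ₗ[F] V →ₗ[F] F) (hC : ∀ x y, C x y = -C y x) :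
    Even (Module.finrank F (LinearMap.range C)) := by
  obtain ⟨W, hW⟩ := Submodule.exists_isCompl (LinearMap.ker C)
  have hdim : Module.finrank F (LinearMap.range C) = Module.finrank F W := by
    have h1 := LinearMap.finrank_range_add_finrank_ker C
    have h2 := Submodule.finrank_add_eq_of_isCompl hW
    omega
  rw [hdim]
  let D : W →ₗ[F] W →ₗ[F] F := C.domRestrict₁₂ W W
  have hD : D.SeparatingLeft := by
    intro x hx
    have hxk : (x : V) ∈ LinearMap.ker C := by
      rw [LinearMap.mem_ker]
      ext y
      obtain ⟨u, hu, w, hw, rfl⟩ := Submodule.mem_sup.1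
        (hW.sup_eq_top ▸ Submodule.mem_top : y ∈ LinearMap.ker C ⊔ W)
      have h3 : C x u = 0 := by
        rw [hC, LinearMap.mem_ker.1 hu]; simp
      have h4 : C x w = 0 := hx ⟨w, hw⟩
      simp [h3, h4]
    exact Subtype.ext (Submodule.disjoint_def.1 hW.disjoint _ hxk x.2)
  let b := Module.finBasis F W
  have hdet := (LinearMap.separatingLeft_iff_det_ne_zero b).1 hD
  set M := LinearMap.toMatrix₂ b b D with hM
  have hMt : Mᵀ = -M := by
    ext i j
    simp only [hM, Matrix.transpose_apply, Matrix.neg_apply, LinearMap.toMatrix₂_apply]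
    exact hC _ _
  by_contra hodd
  rw [Nat.not_even_iff_odd] at hodd
  have h3 := Matrix.det_transpose M
  rw [hMt, Matrix.det_neg, Fintype.card_fin, hodd.neg_one_pow] at h3
  apply hdet
  have h4 : 2 * M.det = 0 := by linear_combination -h3
  exact (mul_eq_zero.1 h4).resolve_left h2

lemma surjective_of_isometry [FiniteDimensional F V] {T : Module.End F V}
    {B : V →ₗ[F] V →ₗ[F] F} (hsep : B.SeparatingLeft) (hT : ∀ x y, B (T x) (T y) = B x y) :
    Function.Surjective T := by
  refine LinearMap.injective_iff_surjective.1 ((injective_iff_map_eq_zero T).2 fun x hx => ?_)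
  exact hsep x fun y => by rw [← hT, hx]; simp

lemma sub_smul_pow_isometry {T : Module.End F V} {B : V →ₗ[F] V →ₗ[F] F}
    (hT : ∀ x y, B (T x) (T y) = B x y) {lam : F} (hl : lam ^ 2 = 1) (k : ℕ) (x y : V) :
    B (((T - lam • 1) ^ k) x) ((T ^ k) y) = (-lam) ^ k * B x (((T - lam • 1) ^ k) y) := by
  have h1 (x y : V) : B ((T - lam • 1) x) (T y) = (-lam) * B x ((T - lam • 1) y) := by
    simp only [LinearMap.sub_apply, LinearMap.smul_apply, Module.End.one_apply, map_sub, map_smul,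
      hT, smul_eq_mul]
    linear_combination -(B x y) * hl
  induction k generalizing x y with
  | zero => simp
  | succ k ih =>
    have hc : Commute (T ^ k) (T - lam • 1) := by
      refine Commute.sub_right ((Commute.refl T).pow_left k) ?_
      exact (Commute.one_right _).smul_right _
    rw [pow_succ', pow_succ' T, Module.End.mul_apply, Module.End.mul_apply, h1]
    have h3 : (T - lam • 1) ((T ^ k) y) = (T ^ k) ((T - lam • 1) y) := by
      rw [← Module.End.mul_apply, ← Module.End.mul_apply, hc.eq]
    rw [h3, ih, ← Module.End.mul_apply, ← pow_succ, ← pow_succ']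
    ring

/-- An isometry of a symmetric nondegenerate form has Jordan blocks of even size and eigenvalue
`±1` with even multiplicity. -/
lemma even_endMultiplicity_of_isometry [FiniteDimensional F V] (h2 : (2 : F) ≠ 0)
    {T : Module.End F V} {B : V →ₗ[F] V →ₗ[F] F} (hsep : B.SeparatingLeft)
    (hT : ∀ x y, B (T x) (T y) = B x y) (hsymm : ∀ x y, B x y = B y x)
    {lam : F} (hl : lam ^ 2 = 1) {m : ℕ} (hm : 2 ≤ m) (hev : Even m) :
    Even (endMultiplicity T lam m) := by
  have hl0 : lam ≠ 0 := by rintro rfl; simp at hl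
  have hsurj := surjective_of_isometry hsep hT
  obtain ⟨e, rfl⟩ : ∃ e, m = e + 1 := ⟨m - 1, by omega⟩
  have hodd : Odd e := by
    rcases Nat.even_or_odd e with h | h
    · exact absurd hev (by rw [Nat.not_even_iff_odd]; exact h.add_one)
    · exact h
  have hadj := fun k x y => sub_smul_pow_isometry hT hl k x y
  unfold endMultiplicity
  rw [Nat.add_sub_cancel]
  have hTN (k : ℕ) (x : V) (h : (T - lam • 1) x = 0) : (T ^ k) x = lam ^ k • x := by
    have h1 : T x = lam • x := by
      rw [LinearMap.sub_apply, sub_eq_zero] at h; simpa using h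
    induction k with
    | zero => simp
    | succ k ih => rw [pow_succ', Module.End.mul_apply, ih, map_smul, h1, smul_smul, pow_succ]
  set N : Module.End F V := T - lam • 1 with hN
  have hsucc (k : ℕ) (x : V) : N ((N ^ k) x) = (N ^ (k + 1)) x := by
    rw [pow_succ', Module.End.mul_apply]
  let K := LinearMap.ker (N ^ (e + 1))
  let C : K →ₗ[F] K →ₗ[F] F := (B.compl₁₂ (N ^ e) LinearMap.id).domRestrict₁₂ K K
  have hCapp (x y : K) : C x y = B ((N ^ e) x) y := rfl
  have hskew (x y : K) : C x y = -C y x := by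
    rw [hCapp, hCapp, hsymm ((N ^ e) (y : V)) x]
    have h1 := hadj e (x : V) (y : V)
    have hk : N ((N ^ e) (x : V)) = 0 := by rw [hsucc]; exact x.2
    have hk' := hTN e _ hk
    have h4 (k : ℕ) (u v : V) : B ((T ^ k) u) ((T ^ k) v) = B u v := by
      induction k with
      | zero => simp
      | succ k ih => rw [pow_succ', Module.End.mul_apply, Module.End.mul_apply, hT, ih]
    have h5 := h4 e ((N ^ e) (x : V)) y
    rw [hk', map_smul, LinearMap.smul_apply, smul_eq_mul, h1, hodd.neg_pow] at h5
    have h6 : lam ^ e * lam ^ e = 1 := by rw [← mul_pow, ← sq, hl, one_pow]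
    linear_combination -h5 - B x ((N ^ e) y) * h6
  have hevC := even_finrank_range_of_skew h2 C hskew
  have hker : ((LinearMap.ker C).map K.subtype).map (N ^ e) =
      (LinearMap.ker (N ^ (e + 1 + 1))).map (N ^ (e + 1)) := by
    apply le_antisymm
    · rintro _ ⟨_, ⟨x, hx, rfl⟩, rfl⟩
      have hann : B ((N ^ e) (x : V)) ∈ (LinearMap.ker (N ^ (e + 1))).dualAnnihilator := by
        rw [Submodule.mem_dualAnnihilator]
        intro w hw
        exact LinearMap.congr_fun (LinearMap.mem_ker.1 hx) ⟨w, hw⟩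
      rw [← LinearMap.range_dualMap_eq_dualAnnihilator_ker] at hann
      obtain ⟨ψ, hψ⟩ := hann
      have hBs : Function.Surjective B := by
        refine (LinearMap.injective_iff_surjective_of_finrank_eq_finrank
          (Subspace.dual_finrank_eq).symm).1 ?_
        rw [← LinearMap.ker_eq_bot]
        exact LinearMap.separatingLeft_iff_ker_eq_bot.1 hsep
      obtain ⟨z, rfl⟩ := hBs ψ
      obtain ⟨w, rfl⟩ : ∃ w, (T ^ (e + 1)) w = z := by
        have : Function.Surjective (T ^ (e + 1)) := by
          rw [Module.End.coe_pow]; exact hsurj.iterate _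
        exact this z
      have heq : (N ^ e) (x : V) = (N ^ (e + 1)) ((-lam) ^ (e + 1) • w) := by
        rw [← sub_eq_zero]
        refine hsep _ fun v => ?_
        have h7 := LinearMap.congr_fun hψ v
        rw [LinearMap.dualMap_apply] at h7
        rw [map_sub, LinearMap.sub_apply, ← h7, hsymm, hadj, map_smul, map_smul,
          LinearMap.smul_apply, smul_eq_mul, hsymm v, sub_self]
      refine ⟨(-lam) ^ (e + 1) • w, ?_, heq.symm⟩
      change (N ^ (e + 1 + 1)) _ = 0
      rw [← hsucc (e + 1), ← heq, hsucc]
      exact x.2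
    · rintro _ ⟨z, hz, rfl⟩
      have hz' : (N ^ (e + 1 + 1)) z = 0 := hz
      have hNz : N z ∈ K := by
        change (N ^ (e + 1)) (N z) = 0
        rw [← Module.End.mul_apply, ← pow_succ]; exact hz'
      refine ⟨N z, ⟨⟨N z, hNz⟩, ?_, rfl⟩, ?_⟩
      · apply LinearMap.mem_ker.2
        ext y
        rw [hCapp, LinearMap.zero_apply, hsymm]
        change B y ((N ^ e) (N z)) = 0
        rw [← Module.End.mul_apply, ← pow_succ]
        have h8 := hadj (e + 1) (y : V) z
        have hy : (N ^ (e + 1)) (y : V) = 0 := y.2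
        rw [hy, map_zero, LinearMap.zero_apply, eq_comm, mul_eq_zero] at h8
        exact h8.resolve_left (pow_ne_zero _ (neg_ne_zero.2 hl0))
      · rw [← Module.End.mul_apply, ← pow_succ]
  have hinf : (LinearMap.ker C).map K.subtype ⊓ LinearMap.ker (N ^ e) = LinearMap.ker (N ^ e) := by
    refine inf_eq_right.2 fun x hx => ?_
    have hx' : (N ^ e) x = 0 := hx
    have hxK : x ∈ K := by
      change (N ^ (e + 1)) x = 0
      rw [← hsucc, hx', map_zero]
    refine ⟨⟨x, hxK⟩, ?_, rfl⟩
    apply LinearMap.mem_ker.2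
    ext y
    rw [hCapp, hx']; simp
  have hinf2 : LinearMap.ker (N ^ (e + 1 + 1)) ⊓ LinearMap.ker (N ^ (e + 1)) =
      LinearMap.ker (N ^ (e + 1)) := by
    refine inf_eq_right.2 fun x hx => ?_
    have hx' : (N ^ (e + 1)) x = 0 := hx
    change (N ^ (e + 1 + 1)) x = 0
    rw [← hsucc, hx', map_zero]
  have d1 := finrank_map_add_finrank_inf_ker (N ^ e) ((LinearMap.ker C).map K.subtype)
  have d2 := finrank_map_add_finrank_inf_ker (N ^ (e + 1)) (LinearMap.ker (N ^ (e + 1 + 1)))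
  have d3 := LinearMap.finrank_range_add_finrank_ker C
  rw [hker, hinf, Submodule.finrank_map_subtype_eq] at d1
  rw [hinf2] at d2
  change _ = Module.finrank F (LinearMap.ker (N ^ (e + 1))) at d3
  obtain ⟨r, hr⟩ := hevC
  exact ⟨r, by omega⟩
end Forms

section Decomposition

variable {F V : Type*} [Field F] [AddCommGroup V] [Module F V]

/-- The restriction of the bilinear form `B` to `U` is left-separating. -/
def SepOn (B : V →ₗ[F] V →ₗ[F] F) (U : Submodule F V) : Prop :=
  ∀ x ∈ U, (∀ y ∈ U, B x y = 0) → x = 0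

/-- `T` acts on `U` as an isometry of some nondegenerate symmetric bilinear form. -/
def SymmIsometryOn (T : Module.End F V) (U : Submodule F V) : Prop :=
  ∃ H : V →ₗ[F] V →ₗ[F] F, (∀ x ∈ U, ∀ y ∈ U, H x y = H y x) ∧
    (∀ x ∈ U, ∀ y ∈ U, H (T x) (T y) = H x y) ∧ SepOn H U

lemma SymmIsometryOn.restrict {T : Module.End F V} {U : Submodule F V}
    (h : SymmIsometryOn T U) (hU : ∀ x ∈ U, T x ∈ U) :
    ∃ H : U →ₗ[F] U →ₗ[F] F, H.SeparatingLeft ∧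
      (∀ x y, H (T.restrict hU x) (T.restrict hU y) = H x y) ∧ ∀ x y, H x y = H y x := by
  obtain ⟨H, hs, hi, hsep⟩ := h
  refine ⟨H.domRestrict₁₂ U U, fun x hx => ?_, fun x y => hi x x.2 y y.2,
    fun x y => hs x x.2 y y.2⟩
  exact Subtype.ext (hsep x x.2 fun y hy => hx ⟨y, hy⟩)

/-- Symmetric invariant forms on two complementary invariant subspaces can be added. -/
lemma SymmIsometryOn.of_isCompl {T : Module.End F V} {U W : Submodule F V} (hUW : IsCompl U W)
    (hU : ∀ x ∈ U, T x ∈ U) (hW : ∀ x ∈ W, T x ∈ W)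
    {H₁ : U →ₗ[F] U →ₗ[F] F} {H₂ : W →ₗ[F] W →ₗ[F] F}
    (hsep₁ : H₁.SeparatingLeft) (hsep₂ : H₂.SeparatingLeft)
    (hi₁ : ∀ x y, H₁ (T.restrict hU x) (T.restrict hU y) = H₁ x y)
    (hi₂ : ∀ x y, H₂ (T.restrict hW x) (T.restrict hW y) = H₂ x y)
    (hs₁ : ∀ x y, H₁ x y = H₁ y x) (hs₂ : ∀ x y, H₂ x y = H₂ y x) :
    ∃ H : V →ₗ[F] V →ₗ[F] F, H.SeparatingLeft ∧
      (∀ x y, H (T x) (T y) = H x y) ∧ ∀ x y, H x y = H y x := by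
  set P := U.projectionOnto W hUW with hP
  set R := W.projectionOnto U hUW.symm with hR
  have hdec (x : V) : (P x : V) + R x = x :=
    Submodule.projection_add_projection_eq_self hUW x
  have hPU (x : U) : P x = x := Submodule.projectionOnto_apply_left hUW x
  have hPW (x : W) : P x = 0 := Submodule.projectionOnto_apply_right hUW x
  have hRW (x : W) : R x = x := Submodule.projectionOnto_apply_left hUW.symm x
  have hRU (x : U) : R x = 0 := Submodule.projectionOnto_apply_right hUW.symm x
  have hPT (x : V) : P (T x) = T.restrict hU (P x) := by
    conv_lhs => rw [← hdec x]
    rw [map_add, map_add]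
    have h1 := hPU (T.restrict hU (P x))
    have h2 := hPW (T.restrict hW (R x))
    rw [LinearMap.coe_restrict_apply] at h1 h2
    rw [h1, h2, add_zero]
  have hRT (x : V) : R (T x) = T.restrict hW (R x) := by
    conv_lhs => rw [← hdec x]
    rw [map_add, map_add]
    have h1 := hRU (T.restrict hU (P x))
    have h2 := hRW (T.restrict hW (R x))
    rw [LinearMap.coe_restrict_apply] at h1 h2
    rw [h1, h2, zero_add]
  refine ⟨H₁.compl₁₂ P P + H₂.compl₁₂ R R, fun x hx => ?_, fun x y => ?_, fun x y => ?_⟩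
  · have h1 : P x = 0 := hsep₁ _ fun y => by simpa [hPU, hRU] using hx y
    have h2 : R x = 0 := hsep₂ _ fun y => by simpa [hPW, hRW] using hx y
    rw [← hdec x, h1, h2]; simp
  · simp [hPT, hRT, hi₁, hi₂]
  · simp [hs₁ (P x), hs₂ (R x)]

/-- The kernel of a restricted power, seen in the ambient space. -/
lemma finrank_ker_restrict_sub_smul_pow {T : Module.End F V} {U : Submodule F V}
    (hU : ∀ x ∈ U, T x ∈ U) (lam : F) (k : ℕ) :
    Module.finrank F (LinearMap.ker ((T.restrict hU - lam • 1) ^ k)) =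
      Module.finrank F (LinearMap.ker ((T - lam • 1) ^ k) ⊓ U : Submodule F V) := by
  have hpow (x : U) : ((((T.restrict hU - lam • 1) ^ k) x : U) : V) = ((T - lam • 1) ^ k) x := by
    induction k with
    | zero => simp
    | succ k ih => simp [pow_succ', Module.End.mul_apply, ih]
  rw [← Submodule.finrank_map_subtype_eq]
  suffices h : (LinearMap.ker ((T.restrict hU - lam • 1) ^ k)).map U.subtype =
      LinearMap.ker ((T - lam • 1) ^ k) ⊓ U by rw [h]
  ext x
  constructor
  · rintro ⟨y, hy, rfl⟩
    refine ⟨?_, y.2⟩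
    change ((T - lam • 1) ^ k) (y : V) = 0
    rw [← hpow, LinearMap.mem_ker.1 hy]; rfl
  · rintro ⟨h1, h2⟩
    refine ⟨⟨x, h2⟩, ?_, rfl⟩
    refine LinearMap.mem_ker.2 (Subtype.ext ?_)
    rw [hpow]; exact h1

lemma pow_sub_smul_mem {T : Module.End F V} {U : Submodule F V}
    (hU : ∀ x ∈ U, T x ∈ U) (lam : F) (k : ℕ) {x : V} (hx : x ∈ U) :
    ((T - lam • 1) ^ k) x ∈ U := by
  induction k with
  | zero => simpa
  | succ k ih =>
    rw [pow_succ', Module.End.mul_apply]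
    exact U.sub_mem (hU _ ih) (U.smul_mem _ ih)

lemma finrank_ker_pow_eq_add [FiniteDimensional F V] {T : Module.End F V} {U W : Submodule F V}
    (hUW : IsCompl U W) (hU : ∀ x ∈ U, T x ∈ U) (hW : ∀ x ∈ W, T x ∈ W) (lam : F) (k : ℕ) :
    Module.finrank F (LinearMap.ker ((T - lam • 1) ^ k)) =
      Module.finrank F (LinearMap.ker ((T.restrict hU - lam • 1) ^ k)) +
        Module.finrank F (LinearMap.ker ((T.restrict hW - lam • 1) ^ k)) := by
  rw [finrank_ker_restrict_sub_smul_pow, finrank_ker_restrict_sub_smul_pow]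
  set K := LinearMap.ker ((T - lam • 1) ^ k) with hK
  rw [← Submodule.finrank_sup_add_finrank_inf_eq]
  have h1 : (K ⊓ U) ⊓ (K ⊓ W) = ⊥ := by
    refine eq_bot_iff.2 fun x hx => ?_
    exact Submodule.disjoint_def.1 hUW.disjoint x hx.1.2 hx.2.2
  have h2 : (K ⊓ U) ⊔ (K ⊓ W) = K := by
    refine le_antisymm (sup_le inf_le_left inf_le_left) fun x hx => ?_
    obtain ⟨u, hu, w, hw, rfl⟩ := Submodule.mem_sup.1
      (hUW.sup_eq_top ▸ Submodule.mem_top : x ∈ U ⊔ W)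
    have h3 : ((T - lam • 1) ^ k) u + ((T - lam • 1) ^ k) w = 0 := by
      rw [← map_add]; exact hx
    have hu' := pow_sub_smul_mem hU lam k hu
    have hw' := pow_sub_smul_mem hW lam k hw
    have h4 : ((T - lam • 1) ^ k) u = 0 := by
      refine Submodule.disjoint_def.1 hUW.disjoint _ hu' ?_
      rw [eq_neg_of_add_eq_zero_left h3]
      exact W.neg_mem hw'
    have h5 : ((T - lam • 1) ^ k) w = 0 := by rwa [h4, zero_add] at h3
    exact Submodule.add_mem_sup ⟨h4, hu⟩ ⟨h5, hw⟩
  rw [h1, h2, finrank_bot, add_zero]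

lemma endMultiplicity_eq_add [FiniteDimensional F V] {T : Module.End F V} {U W : Submodule F V}
    (hUW : IsCompl U W) (hU : ∀ x ∈ U, T x ∈ U) (hW : ∀ x ∈ W, T x ∈ W) (lam : F) (m : ℕ) :
    endMultiplicity T lam m =
      endMultiplicity (T.restrict hU) lam m + endMultiplicity (T.restrict hW) lam m := by
  simp only [endMultiplicity, finrank_ker_pow_eq_add hUW hU hW]
  push_cast
  ring

/-- The left orthogonal of a subspace. -/
def leftOrth (G : V →ₗ[F] V →ₗ[F] F) (U : Submodule F V) : Submodule F V where
  carrier := {x | ∀ y ∈ U, G x y = 0}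
  add_mem' := fun hx hy z hz => by simp [hx z hz, hy z hz]
  zero_mem' := fun z _ => by simp
  smul_mem' := fun c x hx z hz => by simp [hx z hz]

lemma isCompl_leftOrth [FiniteDimensional F V] {G : V →ₗ[F] V →ₗ[F] F} {U : Submodule F V}
    (hU : SepOn G U) : IsCompl U (leftOrth G U) := by
  refine ⟨Submodule.disjoint_def.2 fun x hx hx' => hU x hx hx', ?_⟩
  rw [codisjoint_iff, eq_top_iff]
  intro v _
  have hs : Function.Surjective (G.domRestrict₁₂ U U) := by
    refine (LinearMap.injective_iff_surjective_of_finrank_eq_finrank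
      (Subspace.dual_finrank_eq).symm).1 ((injective_iff_map_eq_zero _).2 fun x hx => ?_)
    exact Subtype.ext (hU x x.2 fun y hy => LinearMap.congr_fun hx ⟨y, hy⟩)
  obtain ⟨u, hu⟩ := hs ((G v).domRestrict U)
  refine Submodule.mem_sup.2 ⟨u, u.2, v - u, fun y hy => ?_, by abel⟩
  have h := LinearMap.congr_fun hu ⟨y, hy⟩
  rw [map_sub, LinearMap.sub_apply, sub_eq_zero]
  exact h.symm

lemma exists_apply_eq_of_mem [FiniteDimensional F V] {T : Module.End F V}
    (hinj : Function.Injective T) {U : Submodule F V} (hU : ∀ x ∈ U, T x ∈ U) {y : V}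
    (hy : y ∈ U) : ∃ x ∈ U, T x = y := by
  have hs : Function.Surjective (T.restrict hU) := by
    refine LinearMap.injective_iff_surjective.1 fun a b hab => ?_
    exact Subtype.ext (hinj (congrArg Subtype.val hab))
  obtain ⟨x, hx⟩ := hs ⟨y, hy⟩
  exact ⟨x, x.2, congrArg Subtype.val hx⟩

lemma leftOrth_invariant [FiniteDimensional F V] {T : Module.End F V}
    (hinj : Function.Injective T) {G : V →ₗ[F] V →ₗ[F] F}
    (hG : ∀ x y, G (T x) (T y) = G x y) {U : Submodule F V} (hU : ∀ x ∈ U, T x ∈ U) :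
    ∀ x ∈ leftOrth G U, T x ∈ leftOrth G U := by
  intro x hx y hy
  obtain ⟨z, hz, rfl⟩ := exists_apply_eq_of_mem hinj hU hy
  rw [hG]
  exact hx z hz

end Decomposition

section Cyclic

open Polynomial

variable {F V : Type*} [Field F] [AddCommGroup V] [Module F V]

/-- Two disjoint invariant subspaces that are in duality under an invariant form span a
hyperbolic subspace. -/
lemma SymmIsometryOn.of_pairing {T : Module.End F V} {G : V →ₗ[F] V →ₗ[F] F}
    (hG : ∀ x y, G (T x) (T y) = G x y) {U₁ U₂ : Submodule F V} (hd : Disjoint U₁ U₂)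
    (h₁ : ∀ x ∈ U₁, T x ∈ U₁) (h₂ : ∀ x ∈ U₂, T x ∈ U₂)
    (hp₁ : ∀ x ∈ U₁, (∀ y ∈ U₂, G x y = 0) → x = 0)
    (hp₂ : ∀ y ∈ U₂, (∀ x ∈ U₁, G x y = 0) → y = 0) : SymmIsometryOn T (U₁ ⊔ U₂) := by
  obtain ⟨C, hC₁, hC⟩ := hd.exists_isCompl
  let P : V →ₗ[F] V := C.projection U₂ hC
  have hP₁ (x : V) (hx : x ∈ U₁) : P x = x := by
    change ((C.projectionOnto U₂ hC x : C) : V) = x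
    rw [Submodule.projectionOnto_apply_of_mem_left hC (hC₁ hx)]
  have hP₂ (x : V) (hx : x ∈ U₂) : P x = 0 := by
    change ((C.projectionOnto U₂ hC x : C) : V) = 0
    rw [Submodule.projectionOnto_apply_of_mem_right hC hx]; rfl
  let D := G.compl₁₂ P (LinearMap.id - P)
  have hD (x₁ x₂ y₁ y₂ : V) (hx₁ : x₁ ∈ U₁) (hx₂ : x₂ ∈ U₂) (hy₁ : y₁ ∈ U₁) (hy₂ : y₂ ∈ U₂) :
      (D + D.flip) (x₁ + x₂) (y₁ + y₂) = G x₁ y₂ + G y₁ x₂ := by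
    simp [D, hP₁ x₁ hx₁, hP₁ y₁ hy₁, hP₂ x₂ hx₂, hP₂ y₂ hy₂]
  refine ⟨D + D.flip, fun x _ y _ => ?_, fun x hx y hy => ?_, fun x hx h => ?_⟩
  · simp [add_comm]
  · obtain ⟨x₁, hx₁, x₂, hx₂, rfl⟩ := Submodule.mem_sup.1 hx
    obtain ⟨y₁, hy₁, y₂, hy₂, rfl⟩ := Submodule.mem_sup.1 hy
    rw [hD _ _ _ _ hx₁ hx₂ hy₁ hy₂, map_add T, map_add T,
      hD _ _ _ _ (h₁ _ hx₁) (h₂ _ hx₂) (h₁ _ hy₁) (h₂ _ hy₂), hG, hG]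
  · obtain ⟨x₁, hx₁, x₂, hx₂, rfl⟩ := Submodule.mem_sup.1 hx
    have e1 : x₁ = 0 := by
      refine hp₁ x₁ hx₁ fun y hy => ?_
      have := hD x₁ x₂ 0 y hx₁ hx₂ U₁.zero_mem hy
      rw [h _ (Submodule.add_mem_sup U₁.zero_mem hy)] at this
      simpa using this.symm
    have e2 : x₂ = 0 := by
      refine hp₂ x₂ hx₂ fun y hy => ?_
      have := hD x₁ x₂ y 0 hx₁ hx₂ hy U₂.zero_mem
      rw [h _ (Submodule.add_mem_sup hy U₂.zero_mem)] at this
      simpa using this.symm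
    rw [e1, e2, add_zero]

lemma aeval_apply_mem {T : Module.End F V} {U : Submodule F V} (hU : ∀ x ∈ U, T x ∈ U)
    (a : F[X]) {x : V} (hx : x ∈ U) : aeval T a x ∈ U := by
  induction a using Polynomial.induction_on' with
  | add a b ha hb => rw [map_add]; exact U.add_mem ha hb
  | monomial n c =>
    rw [aeval_monomial, Module.End.mul_apply, Module.algebraMap_end_apply]
    refine U.smul_mem _ ?_
    induction n with
    | zero => simpa
    | succ n ih => rw [pow_succ', Module.End.mul_apply]; exact hU _ ih

lemma aeval_aeval (T : Module.End F V) (a b : F[X]) (x : V) :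
    aeval T a (aeval T b x) = aeval T (a * b) x := by
  rw [map_mul, Module.End.mul_apply]

lemma isometry_pow {T : Module.End F V} {G : V →ₗ[F] V →ₗ[F] F}
    (hG : ∀ x y, G (T x) (T y) = G x y) (k : ℕ) (x y : V) :
    G ((T ^ k) x) ((T ^ k) y) = G x y := by
  induction k with
  | zero => simp
  | succ k ih => rw [pow_succ', Module.End.mul_apply, Module.End.mul_apply, hG, ih]

/-- The adjoint of `q(T)` with respect to an invariant form is given by the reflected
polynomial, up to a power of `T`. -/
lemma aeval_reflect_adjoint {T : Module.End F V} {G : V →ₗ[F] V →ₗ[F] F}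
    (hG : ∀ x y, G (T x) (T y) = G x y) (d : ℕ) (q : F[X]) (hq : q.natDegree ≤ d) (x y : V) :
    G (aeval T q x) ((T ^ d) y) = G x (aeval T (reflect d q) y) := by
  refine induction_with_natDegree_le
    (fun q => G (aeval T q x) ((T ^ d) y) = G x (aeval T (reflect d q) y)) d ?_ ?_ ?_ q hq
  · simp
  · intro n r _ hn
    rw [reflect_C_mul_X_pow, revAt_le hn]
    simp only [map_mul, aeval_C, map_pow, aeval_X, Module.End.mul_apply,
      Module.algebraMap_end_apply, map_smul, LinearMap.smul_apply]
    congr 1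
    obtain ⟨j, rfl⟩ := Nat.exists_eq_add_of_le hn
    rw [Nat.add_sub_cancel_left, pow_add, Module.End.mul_apply, isometry_pow hG]
  · intro f g _ _ hf hg
    simp only [map_add, LinearMap.add_apply, reflect_add, hf, hg]

lemma aeval_reflect_pow_adjoint {T : Module.End F V} {G : V →ₗ[F] V →ₗ[F] F}
    (hG : ∀ x y, G (T x) (T y) = G x y) (d : ℕ) (q : F[X]) (hq : q.natDegree ≤ d) (k : ℕ)
    (x y : V) :
    G (((aeval T q) ^ k) x) ((T ^ (d * k)) y) = G x (((aeval T (reflect d q)) ^ k) y) := by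
  induction k generalizing x y with
  | zero => simp
  | succ k ih =>
    rw [pow_succ, Module.End.mul_apply, Nat.mul_succ, pow_add, Module.End.mul_apply, ih,
      pow_succ' (aeval T (reflect d q)), Module.End.mul_apply,
      ← aeval_reflect_adjoint hG d q hq]
    congr 1
    have hc : Commute (aeval T (reflect d q) ^ k) (T ^ d) := by
      have h1 : aeval T (reflect d q) ^ k = aeval T (reflect d q ^ k) := (map_pow _ _ _).symm
      have h2 : T ^ d = aeval T (X ^ d : F[X]) := by simp
      rw [h1, h2]
      exact (Commute.all _ _).map (aeval T)
    rw [← Module.End.mul_apply, ← Module.End.mul_apply, hc.eq]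

/-- The cyclic subspace generated by a vector. -/
noncomputable def cyclicSubspace (T : Module.End F V) (v : V) : Submodule F V :=
  LinearMap.range ((LinearMap.applyₗ v).comp (aeval (R := F) T).toLinearMap)

lemma mem_cyclicSubspace {T : Module.End F V} {v x : V} :
    x ∈ cyclicSubspace T v ↔ ∃ a : F[X], aeval T a v = x := Iff.rfl

lemma aeval_mem_cyclicSubspace (T : Module.End F V) (v : V) (a : F[X]) :
    aeval T a v ∈ cyclicSubspace T v := ⟨a, rfl⟩

lemma self_mem_cyclicSubspace (T : Module.End F V) (v : V) : v ∈ cyclicSubspace T v :=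
  ⟨1, by simp⟩

lemma cyclicSubspace_invariant (T : Module.End F V) (v : V) :
    ∀ x ∈ cyclicSubspace T v, T x ∈ cyclicSubspace T v := by
  rintro _ ⟨a, rfl⟩
  exact ⟨X * a, by simp⟩

lemma cyclicSubspace_ne_bot {T : Module.End F V} {v : V} (hv : v ≠ 0) :
    cyclicSubspace T v ≠ ⊥ :=
  fun h => hv ((Submodule.mem_bot F).1 (h ▸ self_mem_cyclicSubspace T v))

/-- Every nonzero vector of a primary cyclic subspace has a multiple equal to the generator of
the socle. -/
lemma exists_aeval_eq_socle {T : Module.End F V} {p : F[X]} (hp : Irreducible p) {e : ℕ} {v x : V}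
    (hv : aeval T (p ^ (e + 1)) v = 0) (hx : x ∈ cyclicSubspace T v) (hx0 : x ≠ 0) :
    ∃ b : F[X], aeval T b x = aeval T (p ^ e) v := by
  obtain ⟨a, rfl⟩ := mem_cyclicSubspace.1 hx
  have ha : a ≠ 0 := by rintro rfl; simp at hx0
  obtain ⟨i, a', hna, rfl⟩ := WfDvdMonoid.max_power_factor ha hp
  have hi : i ≤ e := by
    by_contra hlt
    obtain ⟨j, rfl⟩ := Nat.exists_eq_add_of_lt (not_le.1 hlt)
    apply hx0
    rw [show p ^ (e + j + 1) * a' = (p ^ j * a') * p ^ (e + 1) by ring, ← aeval_aeval, hv, map_zero]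
  obtain ⟨j, rfl⟩ := Nat.exists_eq_add_of_le hi
  obtain ⟨c, d, hcd⟩ := IsCoprime.pow_right (n := i + j + 1)
    ((hp.coprime_iff_not_dvd.2 hna).symm : IsCoprime a' p)
  refine ⟨c * p ^ j, ?_⟩
  rw [aeval_aeval, show c * p ^ j * (p ^ i * a') =
    p ^ (i + j) - (p ^ (i + j) * d) * p ^ (i + j + 1) by linear_combination p ^ (i + j) * hcd,
    map_sub, LinearMap.sub_apply, ← aeval_aeval T (p ^ (i + j) * d), hv, map_zero, sub_zero]

lemma sepOn_cyclicSubspace [FiniteDimensional F V] {T : Module.End F V}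
    (hinj : Function.Injective T) {B : V →ₗ[F] V →ₗ[F] F} (hB : ∀ x y, B (T x) (T y) = B x y)
    {p : F[X]} (hp : Irreducible p) {e : ℕ} {v : V}
    (hv : aeval T (p ^ (e + 1)) v = 0) (a b : F[X])
    (h : B (aeval T a (aeval T (p ^ e) v)) (aeval T b v) ≠ 0) :
    SepOn B (cyclicSubspace T v) := by
  intro x hx hxo
  by_contra hx0
  obtain ⟨c, hc⟩ := exists_aeval_eq_socle hp hv hx hx0
  have hxo' : x ∈ leftOrth B (cyclicSubspace T v) := hxo
  have h1 := aeval_apply_mem (leftOrth_invariant hinj hB (cyclicSubspace_invariant T v)) (a * c) hxo'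
  rw [← aeval_aeval, hc] at h1
  exact h (h1 _ (aeval_mem_cyclicSubspace T v b))

lemma apply_reflect_eq_zero {T : Module.End F V} {G : V →ₗ[F] V →ₗ[F] F}
    (hG : ∀ x y, G (T x) (T y) = G x y) (d : ℕ) (q : F[X]) (hq : q.natDegree ≤ d) (k : ℕ)
    {x : V} (hx : ((aeval T q) ^ k) x = 0) (z : V) :
    G x (((aeval T (reflect d q)) ^ k) z) = 0 := by
  rw [← aeval_reflect_pow_adjoint hG d q hq, hx]; simp

lemma ker_aeval_pow_invariant (T : Module.End F V) (q : F[X]) (k : ℕ) :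
    ∀ x ∈ LinearMap.ker ((aeval T q) ^ k), T x ∈ LinearMap.ker ((aeval T q) ^ k) := by
  intro x hx
  rw [← map_pow, LinearMap.mem_ker] at hx ⊢
  have h : aeval T (q ^ k) (T x) = T (aeval T (q ^ k) x) := by
    rw [← Module.End.mul_apply, ← Module.End.mul_apply]
    exact congrArg (fun f : Module.End F V => f x) (by
      simpa using ((Commute.all (q ^ k) (X : F[X])).map (aeval T)).eq)
  rw [h, hx, map_zero]

/-- The orthogonal summand belonging to an irreducible polynomial that is not associated to its
reciprocal. -/
lemma exists_summand_of_isCoprime_reflect [FiniteDimensional F V] {T : Module.End F V}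
    {G : V →ₗ[F] V →ₗ[F] F} (hsep : G.SeparatingLeft) (hG : ∀ x y, G (T x) (T y) = G x y)
    {p : F[X]} (hker : LinearMap.ker (aeval T p) ≠ ⊥)
    (hcop : IsCoprime p (reflect p.natDegree p)) :
    ∃ U : Submodule F V, U ≠ ⊥ ∧ (∀ x ∈ U, T x ∈ U) ∧ SepOn G U ∧ SymmIsometryOn T U := by
  set d := p.natDegree with hd
  set r := reflect d p with hr
  have hrp : reflect d r = p := reflect_reflect
  have hrd : r.natDegree ≤ d := natDegree_reflect_le.trans (by simp [hd])
  have hright : ∀ y, (∀ x, G x y = 0) → y = 0 := by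
    intro y hy
    have hs : Function.Surjective G := by
      refine (LinearMap.injective_iff_surjective_of_finrank_eq_finrank
        (Subspace.dual_finrank_eq).symm).1 ?_
      rw [← LinearMap.ker_eq_bot]
      exact LinearMap.separatingLeft_iff_ker_eq_bot.1 hsep
    refine (Module.forall_dual_apply_eq_zero_iff F y).1 fun φ => ?_
    obtain ⟨x, rfl⟩ := hs φ
    exact hy x
  obtain ⟨k, hk, hc₁, hc₂⟩ := ((Filter.eventually_ge_atTop 1).and
    ((LinearMap.eventually_isCompl_ker_pow_range_pow (aeval T p)).and
      (LinearMap.eventually_isCompl_ker_pow_range_pow (aeval T r)))).exists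
  have hcopk : IsCoprime (p ^ k) (r ^ k) := hcop.pow
  obtain ⟨a, b, hab⟩ := hcopk
  have hdecomp (x : V) : aeval T (p ^ k) (aeval T a x) + aeval T (r ^ k) (aeval T b x) = x := by
    rw [aeval_aeval, aeval_aeval, ← LinearMap.add_apply, ← map_add, mul_comm (p ^ k),
      mul_comm (r ^ k), hab]; simp
  set U₁ := LinearMap.ker (aeval T p ^ k) with hU₁
  set U₂ := LinearMap.ker (aeval T r ^ k) with hU₂
  have hdis : Disjoint U₁ U₂ := by
    have := disjoint_ker_aeval_of_isCoprime T hcop.pow (p := p ^ k) (q := r ^ k)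
    simpa only [map_pow] using this
  have hzero {q : F[X]} {x : V} (c : F[X]) (hx : x ∈ LinearMap.ker (aeval T q ^ k)) :
      aeval T (q ^ k) (aeval T c x) = 0 := by
    rw [aeval_aeval, mul_comm, ← aeval_aeval, map_pow, LinearMap.mem_ker.1 hx, map_zero]
  have hmem₁ {x : V} (hx : x ∈ U₁) : ∃ z, (aeval T r ^ k) z = x := by
    refine ⟨aeval T b x, ?_⟩
    have := hdecomp x
    rwa [hzero a hx, zero_add, map_pow] at this
  have hmem₂ {x : V} (hx : x ∈ U₂) : ∃ z, (aeval T p ^ k) z = x := by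
    refine ⟨aeval T a x, ?_⟩
    have := hdecomp x
    rwa [hzero b hx, add_zero, map_pow] at this
  have ho₁ {x : V} (hx : x ∈ U₁) (z : V) : G x ((aeval T r ^ k) z) = 0 :=
    apply_reflect_eq_zero hG d p le_rfl k hx z
  have ho₂ {x : V} (hx : x ∈ U₂) (z : V) : G x ((aeval T p ^ k) z) = 0 := by
    have := apply_reflect_eq_zero hG d r hrd k hx z
    rwa [hrp] at this
  have ho₂' {y : V} (hy : y ∈ U₂) (z : V) : G ((aeval T p ^ k) z) y = 0 := by
    have := apply_reflect_eq_zero (G := G.flip) (fun x y => hG y x) d r hrd k hy z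
    rwa [hrp] at this
  have hiso₁ {x y : V} (hx : x ∈ U₁) (hy : y ∈ U₁) : G x y = 0 := by
    obtain ⟨z, rfl⟩ := hmem₁ hy
    exact ho₁ hx z
  have hiso₂ {x y : V} (hx : x ∈ U₂) (hy : y ∈ U₂) : G x y = 0 := by
    obtain ⟨z, rfl⟩ := hmem₂ hy
    exact ho₂ hx z
  have hp₁ : ∀ x ∈ U₁, (∀ y ∈ U₂, G x y = 0) → x = 0 := by
    intro x hx h
    refine hsep x fun v => ?_
    obtain ⟨y, hy, _, ⟨z, rfl⟩, rfl⟩ := Submodule.mem_sup.1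
      (hc₂.sup_eq_top ▸ Submodule.mem_top : v ∈ U₂ ⊔ LinearMap.range (aeval T r ^ k))
    rw [map_add, h y hy, ho₁ hx, add_zero]
  have hp₁' : ∀ x ∈ U₂, (∀ y ∈ U₁, G x y = 0) → x = 0 := by
    intro x hx h
    refine hsep x fun v => ?_
    obtain ⟨y, hy, _, ⟨z, rfl⟩, rfl⟩ := Submodule.mem_sup.1
      (hc₁.sup_eq_top ▸ Submodule.mem_top : v ∈ U₁ ⊔ LinearMap.range (aeval T p ^ k))
    rw [map_add, h y hy, ho₂ hx, add_zero]
  have hp₂ : ∀ y ∈ U₂, (∀ x ∈ U₁, G x y = 0) → y = 0 := by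
    intro y hy h
    refine hright y fun v => ?_
    obtain ⟨x, hx, _, ⟨z, rfl⟩, rfl⟩ := Submodule.mem_sup.1
      (hc₁.sup_eq_top ▸ Submodule.mem_top : v ∈ U₁ ⊔ LinearMap.range (aeval T p ^ k))
    rw [map_add, LinearMap.add_apply, h x hx, ho₂' hy, add_zero]
  have hi₁ := ker_aeval_pow_invariant T p k
  have hi₂ := ker_aeval_pow_invariant T r k
  refine ⟨U₁ ⊔ U₂, fun h => ?_, fun x hx => ?_, fun x hx h => ?_,
    SymmIsometryOn.of_pairing hG hdis hi₁ hi₂ hp₁ hp₂⟩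
  · apply hker
    rw [eq_bot_iff, ← h]
    refine le_trans (fun x hx => ?_) le_sup_left
    change (aeval T p ^ k) x = 0
    obtain ⟨j, rfl⟩ := Nat.exists_eq_add_of_le' hk
    rw [pow_succ, Module.End.mul_apply, LinearMap.mem_ker.1 hx, map_zero]
  · obtain ⟨x₁, hx₁, x₂, hx₂, rfl⟩ := Submodule.mem_sup.1 hx
    rw [map_add]
    exact Submodule.add_mem_sup (hi₁ _ hx₁) (hi₂ _ hx₂)
  · obtain ⟨x₁, hx₁, x₂, hx₂, rfl⟩ := Submodule.mem_sup.1 hx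
    have e1 : x₁ = 0 := hp₁ x₁ hx₁ fun y hy => by
      have := h y (Submodule.mem_sup_right hy)
      rwa [map_add, LinearMap.add_apply, hiso₂ hx₂ hy, add_zero] at this
    have e2 : x₂ = 0 := hp₁' x₂ hx₂ fun y hy => by
      have := h y (Submodule.mem_sup_left hy)
      rwa [map_add, LinearMap.add_apply, hiso₁ hx₁ hy, zero_add] at this
    rw [e1, e2, add_zero]

end Cyclic

section Summand

open Polynomial

variable {F V : Type*} [Field F] [AddCommGroup V] [Module F V]

lemma aeval_pow_apply_T (T : Module.End F V) (a : F[X]) (j : ℕ) (x : V) :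
    aeval T a ((T ^ j) x) = aeval T (a * X ^ j) x := by
  rw [← aeval_aeval]; simp

/-- A self-reciprocal polynomial in an isometry is, up to a unit and a power of the isometry,
self-adjoint. -/
lemma aeval_pow_adjoint {T : Module.End F V} {G : V →ₗ[F] V →ₗ[F] F}
    (hG : ∀ x y, G (T x) (T y) = G x y) {p : F[X]} {ε : F}
    (hr : reflect p.natDegree p = C ε * p) (k : ℕ) (x y : V) :
    G (aeval T (p ^ k) x) ((T ^ (p.natDegree * k)) y) = ε ^ k * G x (aeval T (p ^ k) y) := by
  have h := aeval_reflect_pow_adjoint hG p.natDegree p le_rfl k x y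
  rw [hr, ← map_pow, ← map_pow, mul_pow, ← C_pow, map_mul, aeval_C, Module.End.mul_apply,
    Module.algebraMap_end_apply, map_smul, smul_eq_mul] at h
  exact h

/-- The primary component of a self-reciprocal irreducible polynomial is nondegenerate. -/
lemma exists_sepOn_ker_pow [FiniteDimensional F V] {T : Module.End F V}
    {G : V →ₗ[F] V →ₗ[F] F} (hsep : G.SeparatingLeft) (hG : ∀ x y, G (T x) (T y) = G x y)
    {p : F[X]} {ε : F} (hε : ε ≠ 0) (hr : reflect p.natDegree p = C ε * p)
    (hker : LinearMap.ker (aeval T p) ≠ ⊥) :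
    ∃ e : ℕ, LinearMap.ker (aeval T (p ^ (e + 2))) = LinearMap.ker (aeval T (p ^ (e + 1))) ∧
      (∃ v, aeval T (p ^ (e + 1)) v = 0 ∧ aeval T (p ^ e) v ≠ 0) ∧
      SepOn G (LinearMap.ker (aeval T (p ^ (e + 1)))) := by
  classical
  simp only [map_pow]
  set f := aeval T p with hf
  have hex : ∃ k, LinearMap.ker (f ^ k) = LinearMap.ker (f ^ (k + 1)) := by
    obtain ⟨k, _, hk⟩ := Module.End.exists_ker_pow_eq_ker_pow_succ f
    exact ⟨k, hk⟩
  have hmin := fun k => Nat.find_min hex (m := k)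
  have hspec := Nat.find_spec hex
  obtain ⟨e, he⟩ : ∃ e, Nat.find hex = e + 1 := by
    refine Nat.exists_eq_succ_of_ne_zero fun h0 => hker ?_
    rw [h0] at hspec
    rw [← pow_one f, ← zero_add 1, ← hspec, pow_zero]
    exact LinearMap.ker_id
  rw [he] at hspec hmin
  refine ⟨e, hspec.symm, ?_, ?_⟩
  · by_contra! hno
    refine hmin e (Nat.lt_succ_self e) (le_antisymm (fun x hx => ?_) fun x hx => hno x hx)
    rw [LinearMap.mem_ker] at hx ⊢
    rw [pow_succ', Module.End.mul_apply, hx, map_zero]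
  · intro x hx hxo
    refine hsep x fun w => ?_
    obtain ⟨k, hk, hc⟩ := ((Filter.eventually_ge_atTop (e + 1)).and
      (LinearMap.eventually_isCompl_ker_pow_range_pow f)).exists
    obtain ⟨i, rfl⟩ := Nat.exists_eq_add_of_le hk
    obtain ⟨y, hy, _, ⟨z, rfl⟩, rfl⟩ := Submodule.mem_sup.1
      (hc.sup_eq_top ▸ Submodule.mem_top :
        w ∈ LinearMap.ker (f ^ (e + 1 + i)) ⊔ LinearMap.range (f ^ (e + 1 + i)))
    rw [← Module.End.ker_pow_constant hspec] at hy
    have h1 := aeval_pow_adjoint hG hr (e + 1) x ((f ^ i) z)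
    rw [map_pow, LinearMap.mem_ker.1 hx, map_zero, LinearMap.zero_apply] at h1
    have h2 := (mul_eq_zero.1 h1.symm).resolve_left (pow_ne_zero _ hε)
    rw [map_add, hxo y hy, zero_add, pow_add, Module.End.mul_apply, h2]

/-- The orthogonal summand belonging to a self-reciprocal irreducible polynomial that is coprime
to `X ^ 2 - 1`. -/
lemma exists_summand_of_isCoprime_sq_sub_one [FiniteDimensional F V] {T : Module.End F V}
    (hinj : Function.Injective T) {G : V →ₗ[F] V →ₗ[F] F}
    (hG : ∀ x y, G (T x) (T y) = G x y) {p : F[X]} (hp : Irreducible p) {ε : F} (hε : ε ≠ 0)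
    (hr : reflect p.natDegree p = C ε * p) (hcop : IsCoprime (X ^ 2 - 1) p) {e : ℕ}
    (hv : ∃ v, aeval T (p ^ (e + 1)) v = 0 ∧ aeval T (p ^ e) v ≠ 0)
    (hK : SepOn G (LinearMap.ker (aeval T (p ^ (e + 1))))) :
    ∃ U : Submodule F V, U ≠ ⊥ ∧ (∀ x ∈ U, T x ∈ U) ∧ SepOn G U ∧ SymmIsometryOn T U := by
  set E := p.natDegree * e with hE
  have hR (x y : V) := aeval_pow_adjoint hG hr e x y
  have hη : ε ^ e ≠ 0 := pow_ne_zero _ hε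
  by_cases hex : ∃ v c j, aeval T (p ^ (e + 1)) v = 0 ∧
      G (aeval T (c * p ^ e) v) ((T ^ j) v) + G (aeval T (c * X ^ j) v) (aeval T (p ^ e) v) ≠ 0
  · obtain ⟨v, c, j, hv0, hne⟩ := hex
    have hTc (x : V) : aeval T c (T x) = T (aeval T c x) := by
      have h := aeval_pow_apply_T T c 1 x
      rw [mul_comm, ← aeval_aeval] at h
      simpa using h
    let D := G.comp (aeval T c)
    have hDi (x y : V) : D (T x) (T y) = D x y := by simp [D, hTc, hG]
    refine ⟨cyclicSubspace T v, cyclicSubspace_ne_bot ?_, cyclicSubspace_invariant T v, ?_,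
      D + D.flip, fun x _ y _ => by simp [add_comm], fun x _ y _ => by simp [hDi], ?_⟩
    · rintro rfl; simp at hne
    · by_cases h1 : G (aeval T (c * p ^ e) v) ((T ^ j) v) = 0
      · rw [h1, zero_add] at hne
        refine sepOn_cyclicSubspace hinj hG hp hv0 (c * X ^ j) (X ^ E) ?_
        rw [aeval_aeval, mul_comm, ← aeval_aeval, aeval_X_pow, hR]
        exact mul_ne_zero hη hne
      · refine sepOn_cyclicSubspace hinj hG hp hv0 c (X ^ j) ?_
        rw [aeval_aeval, map_pow, aeval_X]
        exact h1
    · refine sepOn_cyclicSubspace hinj (fun x y => by simp [hDi]) hp hv0 1 (X ^ j) ?_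
      simpa [D, ← aeval_aeval T c] using hne
  · exfalso
    push Not at hex
    obtain ⟨a, b, hab⟩ := hcop
    have hred (c : F[X]) {x : V} (hx : aeval T (p ^ (e + 1)) x = 0) :
        aeval T (c * p ^ e) x = aeval T ((c * a) * (X ^ 2 - 1) * p ^ e) x := by
      have h : c * p ^ e = (c * a) * (X ^ 2 - 1) * p ^ e + (c * b) * p ^ (e + 1) := by
        linear_combination (- c * p ^ e) * hab
      conv_lhs => rw [h]
      rw [map_add, LinearMap.add_apply, ← aeval_aeval T (c * b), hx, map_zero, add_zero]
    have halt (c : F[X]) {x : V} (hx : aeval T (p ^ (e + 1)) x = 0) :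
        G (aeval T (c * p ^ e) x) x = 0 := by
      rw [hred c hx]
      generalize c * a = c
      have h1 := hex x c E hx
      have h2 := hex x (c * X) (E + 1) hx
      have e1 : ε ^ e * G (aeval T (c * X ^ E) x) (aeval T (p ^ e) x) =
          G (aeval T (c * p ^ e) x) x := by
        rw [← hR, aeval_aeval, show p ^ e * (c * X ^ E) = X ^ E * (c * p ^ e) by ring,
          ← aeval_aeval, map_pow, aeval_X, isometry_pow hG]
      have e2 : ε ^ e * G (aeval T (c * X * X ^ (E + 1)) x) (aeval T (p ^ e) x) =
          G (aeval T (c * X ^ 2 * p ^ e) x) x := by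
        rw [← hR, aeval_aeval, show p ^ e * (c * X * X ^ (E + 1)) =
          X ^ E * (c * X ^ 2 * p ^ e) by ring, ← aeval_aeval, map_pow, aeval_X, isometry_pow hG]
      have e3 : G (aeval T (c * X * p ^ e) x) ((T ^ (E + 1)) x) =
          G (aeval T (c * p ^ e) x) ((T ^ E) x) := by
        rw [show c * X * p ^ e = X * (c * p ^ e) by ring, ← aeval_aeval, pow_succ',
          Module.End.mul_apply, aeval_X, hG]
      rw [show c * (X ^ 2 - 1) * p ^ e = c * X ^ 2 * p ^ e - c * p ^ e by ring, map_sub,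
        LinearMap.sub_apply, map_sub, LinearMap.sub_apply]
      linear_combination ε ^ e * h2 - ε ^ e * h1 + e1 - e2 - ε ^ e * e3
    have hskew (c : F[X]) {x y : V} (hx : aeval T (p ^ (e + 1)) x = 0)
        (hy : aeval T (p ^ (e + 1)) y = 0) :
        G (aeval T (c * p ^ e) x) y = - G (aeval T (c * p ^ e) y) x := by
      have h := halt c (x := x + y) (by rw [map_add, hx, hy, add_zero])
      simp only [map_add, LinearMap.add_apply, halt c hx, halt c hy] at h
      linear_combination h
    obtain ⟨v, hv0, hve⟩ := hv
    refine hve (hK _ ?_ fun y hy => ?_)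
    · rw [LinearMap.mem_ker, aeval_aeval, mul_comm, ← aeval_aeval, hv0, map_zero]
    · have hTy : aeval T (p ^ (e + 1)) (T y) = 0 := by
        have h := aeval_pow_apply_T T (p ^ (e + 1)) 1 y
        rw [mul_comm, ← aeval_aeval, LinearMap.mem_ker.1 hy, map_zero, pow_one] at h
        exact h
      have h1 := hred 1 hv0
      rw [one_mul, one_mul] at h1
      rw [h1, show a * (X ^ 2 - 1) * p ^ e = a * X ^ 2 * p ^ e - a * p ^ e by ring, map_sub,
        LinearMap.sub_apply, map_sub, LinearMap.sub_apply, hskew _ hv0 hy]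
      have h2 := hskew (a * X) hv0 hTy
      have h3 : aeval T (a * X * p ^ e) (T y) = aeval T (a * X ^ 2 * p ^ e) y := by
        have h := aeval_pow_apply_T T (a * X * p ^ e) 1 y
        rw [pow_one] at h
        rw [h]; congr 2; ring
      have h4 : G (aeval T (a * X * p ^ e) v) (T y) = G (aeval T (a * p ^ e) v) y := by
        rw [show a * X * p ^ e = X * (a * p ^ e) by ring, ← aeval_aeval, aeval_X, hG]
      rw [h3, h4] at h2
      linear_combination -h2

lemma aeval_apply_of_sub_apply_eq_zero {T : Module.End F V} {lam : F} {x : V}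
    (hx : aeval T (X - C lam) x = 0) (c : F[X]) : aeval T c x = c.eval lam • x := by
  obtain ⟨q, hq⟩ := X_sub_C_dvd_sub_C_eval (a := lam) (p := c)
  have h : c = q * (X - C lam) + C (c.eval lam) := by linear_combination hq
  conv_lhs => rw [h]
  rw [map_add, LinearMap.add_apply, ← aeval_aeval, hx, map_zero, zero_add, aeval_C,
    Module.algebraMap_end_apply]

lemma exists_eq_smul_socle {T : Module.End F V} {lam : F} {e : ℕ} {u x : V}
    (hu : aeval T ((X - C lam) ^ (e + 1)) u = 0) (hu0 : aeval T ((X - C lam) ^ e) u ≠ 0)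
    (hxu : x ∈ cyclicSubspace T u) (hx : aeval T (X - C lam) x = 0) :
    ∃ α : F, x = α • aeval T ((X - C lam) ^ e) u := by
  by_cases hx0 : x = 0
  · exact ⟨0, by simp [hx0]⟩
  · obtain ⟨c, hc⟩ := exists_aeval_eq_socle (irreducible_X_sub_C lam) hu hxu hx0
    rw [aeval_apply_of_sub_apply_eq_zero hx] at hc
    refine ⟨(c.eval lam)⁻¹, ?_⟩
    rw [← hc, inv_smul_smul₀]
    intro h0
    rw [h0, zero_smul] at hc
    exact hu0 hc.symm

lemma reflect_X_sub_C {lam : F} (hl : lam ^ 2 = 1) :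
    reflect (X - C lam).natDegree (X - C lam) = C (-lam) * (X - C lam) := by
  rw [natDegree_X_sub_C, reflect_sub, reflect_C, ← pow_one (X : F[X]), reflect_monomial,
    revAt_le le_rfl]
  have : C lam * C lam = (1 : F[X]) := by rw [← C_mul, ← sq, hl, C_1]
  simp only [map_neg, pow_one, Nat.sub_self, pow_zero]
  linear_combination -this

/-- The form `G (N ^ e u) w` on the top layer is, up to a sign, also `G u (N ^ e w)`. -/
lemma apply_top_layer {T : Module.End F V} {G : V →ₗ[F] V →ₗ[F] F}
    (hG : ∀ x y, G (T x) (T y) = G x y) {lam : F} (hl : lam ^ 2 = 1) {e : ℕ} {u : V}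
    (hu : aeval T ((X - C lam) ^ (e + 1)) u = 0) (w : V) :
    G u (aeval T ((X - C lam) ^ e) w) = (-1) ^ e * G (aeval T ((X - C lam) ^ e) u) w := by
  have h1 := aeval_pow_adjoint hG (reflect_X_sub_C hl) e u w
  rw [natDegree_X_sub_C, one_mul] at h1
  have hs : aeval T (X - C lam) (aeval T ((X - C lam) ^ e) u) = 0 := by
    rw [aeval_aeval, ← pow_succ', hu]
  have h2 := aeval_apply_of_sub_apply_eq_zero hs (X ^ e)
  have h3 := isometry_pow hG e (aeval T ((X - C lam) ^ e) u) w
  rw [aeval_X_pow, eval_pow, eval_X] at h2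
  rw [h2, map_smul, LinearMap.smul_apply, smul_eq_mul, h1, neg_pow] at h3
  have hle : lam ^ e * lam ^ e = 1 := by rw [← pow_add, ← two_mul, pow_mul, hl, one_pow]
  have hne : ((-1 : F) ^ e) * (-1) ^ e = 1 := by rw [← mul_pow]; simp
  rw [← h3]
  linear_combination (-G u (aeval T ((X - C lam) ^ e) w)) * (hne + (-1) ^ e * (-1) ^ e * hle)

/-- Two generators on which the top layer form is nondegenerate span a summand. -/
lemma exists_summand_of_pair [FiniteDimensional F V] {T : Module.End F V}
    (hinj : Function.Injective T) {G : V →ₗ[F] V →ₗ[F] F}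
    (hG : ∀ x y, G (T x) (T y) = G x y) {lam : F} (hl : lam ^ 2 = 1) {e : ℕ} {u w : V}
    (hu : aeval T ((X - C lam) ^ (e + 1)) u = 0) (hw : aeval T ((X - C lam) ^ (e + 1)) w = 0)
    (huw : G (aeval T ((X - C lam) ^ e) u) w ≠ 0)
    (hdet : G (aeval T ((X - C lam) ^ e) u) u * G (aeval T ((X - C lam) ^ e) w) w -
      G (aeval T ((X - C lam) ^ e) u) w * G (aeval T ((X - C lam) ^ e) w) u ≠ 0) :
    ∃ U : Submodule F V, U ≠ ⊥ ∧ (∀ x ∈ U, T x ∈ U) ∧ SepOn G U ∧ SymmIsometryOn T U := by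
  have hp := irreducible_X_sub_C lam
  have hiu := cyclicSubspace_invariant T u
  have hiw := cyclicSubspace_invariant T w
  have hu0 : aeval T ((X - C lam) ^ e) u ≠ 0 := fun h => huw (by rw [h]; simp)
  have hw0 : aeval T ((X - C lam) ^ e) w ≠ 0 := by
    intro h
    have := apply_top_layer hG hl hu w
    rw [h, map_zero] at this
    exact huw ((mul_eq_zero.1 this.symm).resolve_left (pow_ne_zero _ (by simp)))
  have hd : Disjoint (cyclicSubspace T u) (cyclicSubspace T w) := by
    refine Submodule.disjoint_def.2 fun x hx hx' => ?_
    by_contra hx0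
    obtain ⟨b, hb⟩ := exists_aeval_eq_socle hp hu hx hx0
    have h1 := aeval_apply_mem hiw b hx'
    rw [hb] at h1
    obtain ⟨α, hα⟩ := exists_eq_smul_socle hw hw0 h1 (by rw [aeval_aeval, ← pow_succ', hu])
    apply hdet
    rw [hα]
    simp only [map_smul, LinearMap.smul_apply, smul_eq_mul]
    ring
  have hinv : ∀ x ∈ cyclicSubspace T u ⊔ cyclicSubspace T w,
      T x ∈ cyclicSubspace T u ⊔ cyclicSubspace T w := by
    intro x hx
    obtain ⟨x₁, hx₁, x₂, hx₂, rfl⟩ := Submodule.mem_sup.1 hx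
    rw [map_add]
    exact Submodule.add_mem_sup (hiu _ hx₁) (hiw _ hx₂)
  refine ⟨cyclicSubspace T u ⊔ cyclicSubspace T w, fun h => ?_, hinv, fun z hz hzo => ?_,
    SymmIsometryOn.of_pairing hG hd hiu hiw (fun x hx h => ?_) (fun y hy h => ?_)⟩
  · refine cyclicSubspace_ne_bot (T := T) (v := u) ?_ (eq_bot_iff.2 (h ▸ le_sup_left))
    rintro rfl; simp at huw
  · by_contra hz0
    have hex : ∃ k, aeval T ((X - C lam) ^ k) z = 0 := by
      obtain ⟨_, ⟨a, rfl⟩, _, ⟨b, rfl⟩, rfl⟩ := Submodule.mem_sup.1 hz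
      refine ⟨e + 1, ?_⟩
      change aeval T ((X - C lam) ^ (e + 1)) (aeval T a u + aeval T b w) = 0
      rw [map_add, aeval_aeval, aeval_aeval, mul_comm _ a, mul_comm _ b, ← aeval_aeval,
        ← aeval_aeval, hu, hw, map_zero, map_zero, add_zero]
    classical
    obtain ⟨k, hk⟩ : ∃ k, Nat.find hex = k + 1 := by
      refine Nat.exists_eq_succ_of_ne_zero fun h0 => hz0 ?_
      have := Nat.find_spec hex
      rw [h0] at this
      simpa using this
    have hk0 := Nat.find_min hex (m := k) (by omega)
    have hk1 := Nat.find_spec hex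
    rw [hk, pow_succ', ← aeval_aeval] at hk1
    have hzU := aeval_apply_mem hinv ((X - C lam) ^ k) hz
    have hzO := aeval_apply_mem (leftOrth_invariant hinj hG hinv) ((X - C lam) ^ k)
      (show z ∈ leftOrth G (cyclicSubspace T u ⊔ cyclicSubspace T w) from hzo)
    generalize aeval T ((X - C lam) ^ k) z = z' at hk0 hk1 hzU hzO
    obtain ⟨x₁, hx₁, x₂, hx₂, rfl⟩ := Submodule.mem_sup.1 hzU
    rw [map_add] at hk1
    have hm₁ := aeval_apply_mem hiu (X - C lam) hx₁
    have hm₂ := aeval_apply_mem hiw (X - C lam) hx₂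
    have hz₁ : aeval T (X - C lam) x₁ = 0 := by
      refine Submodule.disjoint_def.1 hd _ hm₁ ?_
      rw [eq_neg_of_add_eq_zero_left hk1]
      exact Submodule.neg_mem _ hm₂
    have hz₂ : aeval T (X - C lam) x₂ = 0 := by rwa [hz₁, zero_add] at hk1
    obtain ⟨α, rfl⟩ := exists_eq_smul_socle hu hu0 hx₁ hz₁
    obtain ⟨β, rfl⟩ := exists_eq_smul_socle hw hw0 hx₂ hz₂
    have h1 := hzO u (Submodule.mem_sup_left (self_mem_cyclicSubspace T u))
    have h2 := hzO w (Submodule.mem_sup_right (self_mem_cyclicSubspace T w))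
    simp only [map_add, map_smul, LinearMap.add_apply, LinearMap.smul_apply, smul_eq_mul] at h1 h2
    have hα : α = 0 := by
      refine (mul_eq_zero.1 ?_).resolve_right hdet
      linear_combination G (aeval T ((X - C lam) ^ e) w) w * h1 -
        G (aeval T ((X - C lam) ^ e) w) u * h2
    have hβ : β = 0 := by
      refine (mul_eq_zero.1 ?_).resolve_right hdet
      linear_combination G (aeval T ((X - C lam) ^ e) u) u * h2 -
        G (aeval T ((X - C lam) ^ e) u) w * h1
    exact hk0 (by rw [hα, hβ]; simp)
  · by_contra hx0
    obtain ⟨b, hb⟩ := exists_aeval_eq_socle hp hu hx hx0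
    have h1 := aeval_apply_mem (leftOrth_invariant hinj hG hiw) b
      (show x ∈ leftOrth G (cyclicSubspace T w) from h)
    rw [hb] at h1
    exact huw (h1 w (self_mem_cyclicSubspace T w))
  · by_contra hy0
    obtain ⟨b, hb⟩ := exists_aeval_eq_socle hp hw hy hy0
    have h1 := aeval_apply_mem (leftOrth_invariant (G := G.flip) hinj (fun x y => hG y x) hiu) b
      (show y ∈ leftOrth G.flip (cyclicSubspace T u) from h)
    rw [hb] at h1
    have h2 := h1 u (self_mem_cyclicSubspace T u)
    rw [LinearMap.flip_apply, apply_top_layer hG hl hu] at h2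
    exact huw ((mul_eq_zero.1 h2).resolve_left (pow_ne_zero _ (by simp)))

/-- If the top layer form is alternating, then some pair of generators spans a summand. -/
lemma exists_summand_of_alternating [FiniteDimensional F V] {T : Module.End F V}
    (hinj : Function.Injective T) {G : V →ₗ[F] V →ₗ[F] F}
    (hG : ∀ x y, G (T x) (T y) = G x y) {lam : F} (hl : lam ^ 2 = 1) {e : ℕ}
    (hv : ∃ v, aeval T ((X - C lam) ^ (e + 1)) v = 0 ∧ aeval T ((X - C lam) ^ e) v ≠ 0)
    (hK : SepOn G (LinearMap.ker (aeval T ((X - C lam) ^ (e + 1)))))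
    (halt : ∀ v, aeval T ((X - C lam) ^ (e + 1)) v = 0 → G (aeval T ((X - C lam) ^ e) v) v = 0) :
    ∃ U : Submodule F V, U ≠ ⊥ ∧ (∀ x ∈ U, T x ∈ U) ∧ SepOn G U ∧ SymmIsometryOn T U := by
  obtain ⟨u, hu, hu0⟩ := hv
  obtain ⟨w, hw, huw⟩ : ∃ w, aeval T ((X - C lam) ^ (e + 1)) w = 0 ∧
      G (aeval T ((X - C lam) ^ e) u) w ≠ 0 := by
    by_contra! h
    refine hu0 (hK _ ?_ fun y hy => h y hy)
    rw [LinearMap.mem_ker, aeval_aeval, mul_comm, ← aeval_aeval, hu, map_zero]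
  refine exists_summand_of_pair hinj hG hl hu hw huw ?_
  have h := halt (u + w) (by rw [map_add, hu, hw, add_zero])
  simp only [map_add, LinearMap.add_apply, halt u hu, halt w hw] at h
  have h' : G (aeval T ((X - C lam) ^ e) w) u = - G (aeval T ((X - C lam) ^ e) u) w := by
    linear_combination h
  rw [halt u hu, halt w hw, h']
  intro h0
  have : G (aeval T ((X - C lam) ^ e) u) w ^ 2 = 0 := by linear_combination h0
  exact huw (pow_eq_zero_iff two_ne_zero |>.1 this)

/-- In the case of Jordan blocks of even size, the parity of their number provides a suitable
pair of generators. -/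
lemma exists_summand_of_not_mem_span [FiniteDimensional F V] {T : Module.End F V}
    (hinj : Function.Injective T) {G : V →ₗ[F] V →ₗ[F] F}
    (hG : ∀ x y, G (T x) (T y) = G x y) {lam : F} (hl : lam ^ 2 = 1) {e : ℕ}
    (hK : SepOn G (LinearMap.ker (aeval T ((X - C lam) ^ (e + 1))))) {v x : V}
    (hv : aeval T ((X - C lam) ^ (e + 1)) v = 0) (hx : aeval T ((X - C lam) ^ (e + 1)) x = 0)
    (hvv : G (aeval T ((X - C lam) ^ e) v) v ≠ 0)
    (hxv : aeval T ((X - C lam) ^ e) x ∉ Submodule.span F {aeval T ((X - C lam) ^ e) v}) :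
    ∃ U : Submodule F V, U ≠ ⊥ ∧ (∀ x ∈ U, T x ∈ U) ∧ SepOn G U ∧ SymmIsometryOn T U := by
  by_contra hno
  have hpair (u w : V) (hu : aeval T ((X - C lam) ^ (e + 1)) u = 0)
      (hw : aeval T ((X - C lam) ^ (e + 1)) w = 0)
      (huw : G (aeval T ((X - C lam) ^ e) u) w ≠ 0) :
      G (aeval T ((X - C lam) ^ e) u) u * G (aeval T ((X - C lam) ^ e) w) w -
        G (aeval T ((X - C lam) ^ e) u) w * G (aeval T ((X - C lam) ^ e) w) u = 0 := by
    by_contra hdet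
    exact hno (exists_summand_of_pair hinj hG hl hu hw huw hdet)
  have hadd {u w : V} (hu : aeval T ((X - C lam) ^ (e + 1)) u = 0)
      (hw : aeval T ((X - C lam) ^ (e + 1)) w = 0) (c : F) :
      aeval T ((X - C lam) ^ (e + 1)) (u + c • w) = 0 := by
    rw [map_add, map_smul, hu, hw, smul_zero, add_zero]
  have hsoc (u : V) (hu : aeval T ((X - C lam) ^ (e + 1)) u = 0) :
      aeval T ((X - C lam) ^ (e + 1)) (aeval T ((X - C lam) ^ e) u) = 0 := by
    rw [aeval_aeval, mul_comm, ← aeval_aeval, hu, map_zero]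
  generalize aeval T ((X - C lam) ^ e) = N at *
  have hzero (w : V) (hw : aeval T ((X - C lam) ^ (e + 1)) w = 0) (hvw : G (N v) w = 0) :
      G (N w) w = 0 := by
    have h1 := hpair v (v + (1 : F) • w) hv (hadd hv hw 1) (by simpa [hvw] using hvv)
    simp only [one_smul, map_add, LinearMap.add_apply, hvw] at h1
    refine (mul_eq_zero.1 ?_).resolve_left hvv
    linear_combination h1
  have hproj (x : V) (hx : aeval T ((X - C lam) ^ (e + 1)) x = 0) :
      ∃ c : F, aeval T ((X - C lam) ^ (e + 1)) (x + c • v) = 0 ∧ G (N v) (x + c • v) = 0 := by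
    refine ⟨-(G (N v) x / G (N v) v), hadd hx hv _, ?_⟩
    simp only [map_add, map_smul, smul_eq_mul]
    field_simp
    ring
  obtain ⟨c, hy, hvy⟩ := hproj x hx
  set y := x + c • v with hydef
  obtain ⟨z, hz, hne⟩ : ∃ z, aeval T ((X - C lam) ^ (e + 1)) z = 0 ∧
      G (N y) z * G (N v) v - G (N y) v * G (N v) z ≠ 0 := by
    by_contra! h
    have h0 : N y + (-(G (N y) v / G (N v) v)) • N v = 0 := by
      refine hK _ (hadd (hsoc y hy) (hsoc v hv) _) fun z hz => ?_
      have := h z hz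
      simp only [map_add, map_smul, LinearMap.add_apply, LinearMap.smul_apply, smul_eq_mul]
      field_simp
      linear_combination this
    refine hxv (Submodule.mem_span_singleton.2 ⟨G (N y) v / G (N v) v - c, ?_⟩)
    have h1 : N y = N x + c • N v := by rw [hydef, map_add, map_smul]
    rw [h1] at h0 ⊢
    rw [sub_smul, ← sub_eq_zero, ← neg_eq_zero, ← h0]
    module
  obtain ⟨c', hz', hvz'⟩ := hproj z hz
  set z' := z + c' • v with hz'def
  have hyz : G (N y) z' ≠ 0 := by
    intro h
    apply hne
    rw [hz'def, map_add, map_smul, smul_eq_mul] at h hvz'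
    linear_combination G (N v) v * h - G (N y) v * hvz'
  have h1 := hzero y hy hvy
  have h2 := hzero z' hz' hvz'
  have h3 := hzero (y + (1 : F) • z') (hadd hy hz' 1) (by simp [hvy, hvz'])
  have h4 := hpair y z' hy hz' hyz
  simp only [one_smul, map_add, LinearMap.add_apply, h1, h2] at h3
  have h5 : G (N y) z' ^ 2 = 0 := by
    rw [h1, h2] at h4
    linear_combination h4 + G (N y) z' * h3
  exact hyz (pow_eq_zero_iff two_ne_zero |>.1 h5)

/-- The orthogonal summand belonging to an eigenvalue `lam` with `lam ^ 2 = 1`. -/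
lemma exists_summand_of_eigenvalue [FiniteDimensional F V] {T : Module.End F V}
    (h2 : (2 : F) ≠ 0) (hinj : Function.Injective T) {G : V →ₗ[F] V →ₗ[F] F}
    (hG : ∀ x y, G (T x) (T y) = G x y) {lam : F} (hl : lam ^ 2 = 1) {e : ℕ}
    (hst : LinearMap.ker (aeval T ((X - C lam) ^ (e + 2))) =
      LinearMap.ker (aeval T ((X - C lam) ^ (e + 1))))
    (hv : ∃ v, aeval T ((X - C lam) ^ (e + 1)) v = 0 ∧ aeval T ((X - C lam) ^ e) v ≠ 0)
    (hK : SepOn G (LinearMap.ker (aeval T ((X - C lam) ^ (e + 1)))))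
    (hpar : ∀ m, 2 ≤ m → Even m → Even (endMultiplicity T lam m)) :
    ∃ U : Submodule F V, U ≠ ⊥ ∧ (∀ x ∈ U, T x ∈ U) ∧ SepOn G U ∧ SymmIsometryOn T U := by
  by_cases halt : ∀ v, aeval T ((X - C lam) ^ (e + 1)) v = 0 →
      G (aeval T ((X - C lam) ^ e) v) v = 0
  · exact exists_summand_of_alternating hinj hG hl hv hK halt
  push Not at halt
  obtain ⟨v, hv0, hvv⟩ := halt
  rcases Nat.even_or_odd e with he | he
  · refine ⟨cyclicSubspace T v, cyclicSubspace_ne_bot ?_, cyclicSubspace_invariant T v, ?_,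
      G + G.flip, fun x _ y _ => by simp [add_comm], fun x _ y _ => by simp [hG], ?_⟩
    · rintro rfl; simp at hvv
    · refine sepOn_cyclicSubspace hinj hG (irreducible_X_sub_C lam) hv0 1 1 ?_
      simpa using hvv
    · refine sepOn_cyclicSubspace hinj (fun x y => by simp [hG]) (irreducible_X_sub_C lam) hv0
        1 1 ?_
      rw [map_one, Module.End.one_apply, Module.End.one_apply, LinearMap.add_apply,
        LinearMap.add_apply, LinearMap.flip_apply, apply_top_layer hG hl hv0, he.neg_one_pow,
        one_mul, ← two_mul]
      exact mul_ne_zero h2 hvv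
  · obtain ⟨x, hx, hxv⟩ : ∃ x, aeval T ((X - C lam) ^ (e + 1)) x = 0 ∧
        aeval T ((X - C lam) ^ e) x ∉ Submodule.span F {aeval T ((X - C lam) ^ e) v} := by
      by_contra! hall
      have hN (k : ℕ) : aeval T ((X - C lam) ^ k) = (T - lam • 1) ^ k := by
        rw [map_pow, map_sub, aeval_X, aeval_C, Algebra.algebraMap_eq_smul_one]
      have hmap : (LinearMap.ker (aeval T ((X - C lam) ^ (e + 1)))).map
          (aeval T ((X - C lam) ^ e)) = Submodule.span F {aeval T ((X - C lam) ^ e) v} := by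
        refine le_antisymm (Submodule.map_le_iff_le_comap.2 fun x hx => hall x hx) ?_
        rw [Submodule.span_singleton_le_iff_mem]
        exact Submodule.mem_map_of_mem hv0
      have h0 : aeval T ((X - C lam) ^ e) v ≠ 0 := fun h => hvv (by rw [h]; simp)
      have hdim := finrank_map_add_finrank_inf_ker (aeval T ((X - C lam) ^ e))
        (LinearMap.ker (aeval T ((X - C lam) ^ (e + 1))))
      have hle : LinearMap.ker (aeval T ((X - C lam) ^ e)) ≤
          LinearMap.ker (aeval T ((X - C lam) ^ (e + 1))) := by
        intro x hx
        rw [LinearMap.mem_ker] at hx ⊢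
        rw [pow_succ', ← aeval_aeval, hx, map_zero]
      rw [hmap, inf_eq_right.2 hle, finrank_span_singleton h0] at hdim
      have hev := hpar (e + 1) (by have := he.pos; omega) he.add_one
      rw [endMultiplicity, Nat.add_sub_cancel, ← hN, ← hN, ← hN, hst, ← hdim] at hev
      obtain ⟨k, hk⟩ := hev
      push_cast at hk
      omega
    exact exists_summand_of_not_mem_span hinj hG hl hK hv0 hx hvv hxv

/-- An isometry of a nondegenerate bilinear form that satisfies the parity conditions admits a
nonzero nondegenerate invariant subspace on which it preserves a symmetric form. -/
lemma exists_symmIsometryOn_summand [FiniteDimensional F V] [Nontrivial V] {T : Module.End F V}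
    (h2 : (2 : F) ≠ 0) {G : V →ₗ[F] V →ₗ[F] F} (hsep : G.SeparatingLeft)
    (hG : ∀ x y, G (T x) (T y) = G x y)
    (hpar : ∀ lam : F, lam ^ 2 = 1 → ∀ m, 2 ≤ m → Even m → Even (endMultiplicity T lam m)) :
    ∃ U : Submodule F V, U ≠ ⊥ ∧ (∀ x ∈ U, T x ∈ U) ∧ SepOn G U ∧ SymmIsometryOn T U := by
  have hinj : Function.Injective T :=
    LinearMap.injective_iff_surjective.2 (surjective_of_isometry hsep hG)
  obtain ⟨p, hpm, hp, hker⟩ : ∃ p : F[X], p.Monic ∧ Irreducible p ∧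
      LinearMap.ker (aeval T p) ≠ ⊥ := by
    have hTi : IsIntegral F T := Algebra.IsIntegral.isIntegral T
    obtain ⟨p, hpm, hp, q, hq⟩ := exists_monic_irreducible_factor (minpoly F T)
      (minpoly.not_isUnit F T)
    refine ⟨p, hpm, hp, fun hk => ?_⟩
    have hq0 : q ≠ 0 := by rintro rfl; exact minpoly.ne_zero hTi (by rw [hq, mul_zero])
    have haq : aeval T q = 0 := by
      ext x
      refine LinearMap.ker_eq_bot.1 hk ?_
      rw [aeval_aeval, ← hq, minpoly.aeval]; simp
    have h1 := natDegree_le_of_dvd (minpoly.dvd F T haq) hq0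
    rw [hq, natDegree_mul hp.ne_zero hq0] at h1
    have := hp.natDegree_pos
    omega
  by_cases hdvd : p ∣ reflect p.natDegree p
  swap
  · exact exists_summand_of_isCoprime_reflect hsep hG hker (hp.coprime_iff_not_dvd.2 hdvd)
  obtain ⟨ε, hε, hr⟩ : ∃ ε : F, ε ≠ 0 ∧ reflect p.natDegree p = C ε * p := by
    obtain ⟨q, hq⟩ := hdvd
    have hr0 : reflect p.natDegree p ≠ 0 := fun h => hp.ne_zero (by
      rw [← reflect_reflect (N := p.natDegree) (p := p), h, reflect_zero])
    have hq0 : q ≠ 0 := by rintro rfl; exact hr0 (by rw [hq, mul_zero])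
    have hd : (reflect p.natDegree p).natDegree ≤ p.natDegree :=
      natDegree_reflect_le.trans (by simp)
    rw [hq, natDegree_mul hp.ne_zero hq0] at hd
    obtain ⟨ε, rfl⟩ := natDegree_eq_zero.1 (show q.natDegree = 0 by omega)
    exact ⟨ε, by rintro rfl; simp at hq0, by rw [hq, mul_comm]⟩
  obtain ⟨e, hst, hv, hK⟩ := exists_sepOn_ker_pow hsep hG hε hr hker
  by_cases hX : p ∣ X ^ 2 - 1
  swap
  · exact exists_summand_of_isCoprime_sq_sub_one hinj hG hp hε hr
      (hp.coprime_iff_not_dvd.2 hX).symm hv hK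
  obtain ⟨lam, hl, rfl⟩ : ∃ lam : F, lam ^ 2 = 1 ∧ p = X - C lam := by
    rw [show (X ^ 2 - 1 : F[X]) = (X - C 1) * (X - C (-1)) by simp; ring] at hX
    rcases hp.prime.dvd_or_dvd hX with h | h
    · exact ⟨1, by simp, eq_of_monic_of_associated hpm (monic_X_sub_C _)
        (hp.associated_of_dvd (irreducible_X_sub_C _) h)⟩
    · exact ⟨-1, by simp, eq_of_monic_of_associated hpm (monic_X_sub_C _)
        (hp.associated_of_dvd (irreducible_X_sub_C _) h)⟩
  exact exists_summand_of_eigenvalue h2 hinj hG hl hst hv hK (hpar lam hl)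

end Summand

/-- An isometry of a nondegenerate bilinear form that satisfies the parity conditions is an
isometry of a nondegenerate symmetric bilinear form. -/
lemma exists_symm_form_of_isometry {F : Type*} [Field F] (h2 : (2 : F) ≠ 0) (n : ℕ)
    {V : Type*} [AddCommGroup V] [Module F V] [FiniteDimensional F V]
    (hn : Module.finrank F V = n) {T : Module.End F V}
    {G : V →ₗ[F] V →ₗ[F] F} (hsep : G.SeparatingLeft) (hG : ∀ x y, G (T x) (T y) = G x y)
    (hpar : ∀ lam : F, lam ^ 2 = 1 → ∀ m, 2 ≤ m → Even m → Even (endMultiplicity T lam m)) :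
    ∃ H : V →ₗ[F] V →ₗ[F] F, H.SeparatingLeft ∧
      (∀ x y, H (T x) (T y) = H x y) ∧ ∀ x y, H x y = H y x := by
  induction n using Nat.strong_induction_on generalizing V with
  | _ n ih =>
    rcases subsingleton_or_nontrivial V with hV | hV
    · exact ⟨0, fun x _ => Subsingleton.elim _ _, fun _ _ => rfl, fun _ _ => rfl⟩
    obtain ⟨U, hU0, hU, hsepU, hsym⟩ := exists_symmIsometryOn_summand h2 hsep hG hpar
    have hinj : Function.Injective T :=
      LinearMap.injective_iff_surjective.2 (surjective_of_isometry hsep hG)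
    set W := leftOrth G U with hWdef
    have hUW : IsCompl U W := isCompl_leftOrth hsepU
    have hW : ∀ x ∈ W, T x ∈ W := leftOrth_invariant hinj hG hU
    obtain ⟨H₁, hsep₁, hi₁, hs₁⟩ := hsym.restrict hU
    have hlt : Module.finrank F W < n := by
      have h1 := Submodule.finrank_add_eq_of_isCompl hUW
      have h3 := Submodule.one_le_finrank_iff.2 hU0
      omega
    have hsepW : (G.domRestrict₁₂ W W).SeparatingLeft := by
      intro x hx
      refine Subtype.ext (hsep x fun v => ?_)
      obtain ⟨y, hy, z, hz, rfl⟩ := Submodule.mem_sup.1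
        (hUW.sup_eq_top ▸ Submodule.mem_top : v ∈ U ⊔ W)
      rw [map_add, x.2 y hy, zero_add]
      exact hx ⟨z, hz⟩
    obtain ⟨H₂, hsep₂, hi₂, hs₂⟩ := ih _ hlt rfl (T := T.restrict hW) hsepW
      (fun x y => hG x y) fun lam hl m hm hev => by
        have h1 := hpar lam hl m hm hev
        rw [endMultiplicity_eq_add hUW hU hW] at h1
        exact (Int.even_add.1 h1).1
          (even_endMultiplicity_of_isometry h2 hsep₁ hi₁ hs₁ hl hm hev)
    exact SymmIsometryOn.of_isCompl hUW hU hW hsep₁ hsep₂ hi₁ hi₂ hs₁ hs₂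

section MatrixForms

variable {F : Type*} [Field F] {n : ℕ}

lemma endMultiplicity_toLin'_transpose (X : Matrix (Fin n) (Fin n) F) (lam : F) (m : ℕ) :
    endMultiplicity (Matrix.toLin' Xᵀ) lam m = edMultiplicity X lam m := by
  have key (k : ℕ) : Module.finrank F (LinearMap.ker ((Matrix.toLin' Xᵀ - lam • 1) ^ k)) =
      Module.finrank F (LinearMap.ker (Matrix.toLin' ((X - lam • 1) ^ k))) := by
    have h : (Matrix.toLin' Xᵀ - lam • 1) ^ k = Matrix.toLin' ((X - lam • 1) ^ k)ᵀ := by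
      rw [Matrix.transpose_pow, Matrix.toLin'_pow, Matrix.transpose_sub, map_sub,
        Matrix.transpose_smul, Matrix.transpose_one, map_smul, Matrix.toLin'_one]
      rfl
    rw [h]
    have h1 := LinearMap.finrank_range_add_finrank_ker (Matrix.toLin' ((X - lam • 1) ^ k)ᵀ)
    have h2 := LinearMap.finrank_range_add_finrank_ker (Matrix.toLin' ((X - lam • 1) ^ k))
    have h3 := Matrix.rank_transpose ((X - lam • 1) ^ k)
    rw [Matrix.rank, Matrix.rank, ← Matrix.toLin'_apply', ← Matrix.toLin'_apply'] at h3
    omega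
  rw [endMultiplicity, edMultiplicity, key, key, key]

lemma vecMul_eq_toLin'_transpose (X : Matrix (Fin n) (Fin n) F) (v : Fin n → F) :
    v ᵥ* X = Matrix.toLin' Xᵀ v := by
  rw [Matrix.toLin'_apply, Matrix.mulVec_transpose]

/-- `X` is an isometry of the form with Gram matrix `M`. -/
lemma toLinearMap₂'_isometry_iff (X M : Matrix (Fin n) (Fin n) F) :
    (∀ x y, Matrix.toLinearMap₂' F M (Matrix.toLin' Xᵀ x) (Matrix.toLin' Xᵀ y) =
      Matrix.toLinearMap₂' F M x y) ↔ X * M * Xᵀ = M := by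
  have h : (Matrix.toLinearMap₂' F M).compl₁₂ (Matrix.toLin' Xᵀ) (Matrix.toLin' Xᵀ) =
      Matrix.toLinearMap₂' F (X * M * Xᵀ) := by
    rw [Matrix.toLinearMap₂'_comp, Matrix.transpose_transpose]
  have h' : X * M * Xᵀ = M ↔ Matrix.toLinearMap₂' F (X * M * Xᵀ) =
      (Matrix.toLinearMap₂' F M : (Fin n → F) →ₗ[F] (Fin n → F) →ₗ[F] F) :=
    (Matrix.toLinearMap₂' F).injective.eq_iff.symm
  rw [h', ← h]
  exact ⟨fun h => LinearMap.ext₂ h, fun h x y => LinearMap.congr_fun₂ h x y⟩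

lemma isUnit_iff_separatingLeft_toLinearMap₂' (M : Matrix (Fin n) (Fin n) F) :
    (Matrix.toLinearMap₂' F M : (Fin n → F) →ₗ[F] (Fin n → F) →ₗ[F] F).SeparatingLeft ↔ IsUnit M := by
  rw [LinearMap.separatingLeft_toLinearMap₂'_iff_det_ne_zero, Matrix.isUnit_iff_isUnit_det,
    isUnit_iff_ne_zero]

/-- An invertible matrix is similar to its inverse if and only if it preserves some nondegenerate
bilinear form. -/
lemma exists_similar_inv_iff_exists_isometry {X : Matrix (Fin n) (Fin n) F} (hX : IsUnit X) :
    (∃ P : Matrix (Fin n) (Fin n) F, IsUnit P ∧ X⁻¹ = P⁻¹ * X * P) ↔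
      ∃ M : Matrix (Fin n) (Fin n) F, IsUnit M ∧ X * M * Xᵀ = M := by
  obtain ⟨S, hS, hXS⟩ := exists_isUnit_transpose_mul_eq X
  have hXd := (Matrix.isUnit_iff_isUnit_det _).1 hX
  have hSd := (Matrix.isUnit_iff_isUnit_det _).1 hS
  constructor
  · rintro ⟨P, hP, hPX⟩
    have hPd := (Matrix.isUnit_iff_isUnit_det _).1 hP
    refine ⟨P⁻¹ * S⁻¹, (Matrix.isUnit_nonsing_inv_iff.2 hP).mul
      (Matrix.isUnit_nonsing_inv_iff.2 hS), ?_⟩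
    have h1 : S⁻¹ * Xᵀ = X * S⁻¹ := by
      calc S⁻¹ * Xᵀ = S⁻¹ * (Xᵀ * S) * S⁻¹ := by
            rw [← mul_assoc, Matrix.mul_nonsing_inv_cancel_right _ _ hSd]
        _ = X * S⁻¹ := by rw [hXS, Matrix.nonsing_inv_mul_cancel_left _ _ hSd]
    have h2 : P⁻¹ * X = X⁻¹ * P⁻¹ := by
      rw [hPX, Matrix.mul_nonsing_inv_cancel_right _ _ hPd]
    rw [mul_assoc, mul_assoc, h1, ← mul_assoc P⁻¹, h2, mul_assoc,
      Matrix.mul_nonsing_inv_cancel_left _ _ hXd]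
  · rintro ⟨M, hM, hXM⟩
    have hMd := (Matrix.isUnit_iff_isUnit_det _).1 hM
    have hu := hM.mul hS
    have hud := (Matrix.isUnit_iff_isUnit_det _).1 hu
    refine ⟨(M * S)⁻¹, Matrix.isUnit_nonsing_inv_iff.2 hu, ?_⟩
    rw [Matrix.nonsing_inv_nonsing_inv _ hud]
    have h1 : X * (M * S * X) = M * S := by
      rw [mul_assoc M, ← hXS, ← mul_assoc M, ← mul_assoc, ← mul_assoc, hXM]
    calc X⁻¹ = X⁻¹ * (M * S) * (M * S)⁻¹ := by
          rw [Matrix.mul_nonsing_inv_cancel_right _ _ hud]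
      _ = M * S * X * (M * S)⁻¹ := by
          congr 1
          conv_lhs => rw [← h1]
          rw [Matrix.nonsing_inv_mul_cancel_left _ _ hXd]

end MatrixForms

/-- Let `F` be a finite field of odd order and `X ∈ GL(n,F)`.  There is a nonsingular
quadratic form `Q` on `F^n` with `X` an isometry of `Q` iff `X` is similar to `X⁻¹` and for
every `λ ∈ {1,−1}` and every even `m ≥ 2` the multiplicity of `(t−λ)^m` as an elementary
divisor of `X` is even. -/
theorem exists_quadratic_form_iff_odd_char
    {F : Type*} [Field F] [Fintype F] (hodd : Odd (Fintype.card F)) {n : ℕ}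
    (X : Matrix (Fin n) (Fin n) F) (hX : IsUnit X) :
    (∃ Q : (Fin n → F) → F,
        (∀ (a : F) (v : Fin n → F), Q (a • v) = a ^ 2 * Q v) ∧
        (∀ u₁ u₂ v, QuadraticMap.polar Q (u₁ + u₂) v =
            QuadraticMap.polar Q u₁ v + QuadraticMap.polar Q u₂ v) ∧
        (∀ (a : F) (u v : Fin n → F), QuadraticMap.polar Q (a • u) v =
            a * QuadraticMap.polar Q u v) ∧
        (∀ u v₁ v₂, QuadraticMap.polar Q u (v₁ + v₂) =
            QuadraticMap.polar Q u v₁ + QuadraticMap.polar Q u v₂) ∧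
        (∀ (a : F) (u v : Fin n → F), QuadraticMap.polar Q u (a • v) =
            a * QuadraticMap.polar Q u v) ∧
        (∀ v, (∀ u, QuadraticMap.polar Q v u = 0) → v = 0) ∧
        (∀ v, Q (v ᵥ* X) = Q v)) ↔
      ((∃ P : Matrix (Fin n) (Fin n) F, IsUnit P ∧ X⁻¹ = P⁻¹ * X * P) ∧
        ∀ lam : F, (lam = 1 ∨ lam = -1) → ∀ m : ℕ, 2 ≤ m → Even m →
          Even (edMultiplicity X lam m)) := by
  have h2 : (2 : F) ≠ 0 := by
    refine Ring.two_ne_zero fun h => ?_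
    have h1 := FiniteField.even_card_of_char_two h
    have h3 := Nat.odd_iff.1 hodd
    omega
  have hlam (lam : F) : lam = 1 ∨ lam = -1 ↔ lam ^ 2 = 1 := by rw [← sq_eq_sq_iff_eq_or_eq_neg, one_pow]
  rw [exists_similar_inv_iff_exists_isometry hX]
  simp only [hlam, vecMul_eq_toLin'_transpose, ← endMultiplicity_toLin'_transpose]
  constructor
  · rintro ⟨Q, -, hadd₁, hsmul₁, hadd₂, hsmul₂, hnd, hQ⟩
    let B : (Fin n → F) →ₗ[F] (Fin n → F) →ₗ[F] F :=
      LinearMap.mk₂ F (QuadraticMap.polar Q) hadd₁ hsmul₁ hadd₂ hsmul₂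
    have hB : ∀ x y, B (Matrix.toLin' Xᵀ x) (Matrix.toLin' Xᵀ y) = B x y := fun x y => by
      simp only [B, LinearMap.mk₂_apply, QuadraticMap.polar, ← map_add, hQ]
    have hsep : B.SeparatingLeft := hnd
    have hs : ∀ x y, B x y = B y x := fun x y => QuadraticMap.polar_comm Q x y
    obtain ⟨M, hM⟩ := (Matrix.toLinearMap₂' F).surjective B
    refine ⟨⟨M, ?_, ?_⟩, fun lam hl m hm hev =>
      even_endMultiplicity_of_isometry h2 hsep hB hs hl hm hev⟩
    · rw [← isUnit_iff_separatingLeft_toLinearMap₂', hM]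
      exact hsep
    · rw [← toLinearMap₂'_isometry_iff, hM]
      exact hB
  · rintro ⟨⟨M, hM, hXM⟩, hpar⟩
    obtain ⟨H, hsep, hi, hs⟩ := exists_symm_form_of_isometry h2 _ rfl
      ((isUnit_iff_separatingLeft_toLinearMap₂' M).2 hM)
      ((toLinearMap₂'_isometry_iff X M).2 hXM) hpar
    have hpol (x y : Fin n → F) : QuadraticMap.polar (fun v => 2⁻¹ * H v v) x y = H x y := by
      simp only [QuadraticMap.polar, map_add, LinearMap.add_apply, hs y x]
      field_simp
      ring
    refine ⟨fun v => 2⁻¹ * H v v, fun a v => ?_, fun u₁ u₂ v => ?_, fun a u v => ?_,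
      fun u v₁ v₂ => ?_, fun a u v => ?_, fun v hv => hsep v fun u => ?_, fun v => ?_⟩
    · simp only [map_smul, LinearMap.smul_apply, smul_eq_mul]
      ring
    · simp only [hpol, map_add, LinearMap.add_apply]
    · simp only [hpol, map_smul, LinearMap.smul_apply, smul_eq_mul]
    · simp only [hpol, map_add]
    · simp only [hpol, map_smul, smul_eq_mul]
    · rw [← hpol]; exact hv u
    · simp only [hi]
end

section
/- Let F be a finite field of even order (characteristic 2) and let X ∈ M_n(F) be invertible. Then there exists a nonsingular quadratic form Q on F^n such that X is an isometry of Q if and only if X is similar to X⁻¹ and, for every odd m ≥ 1, the multiplicity of (t+1)^m as an elementary divisor of X is even. -/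
open Matrix

section
open Polynomial

theorem exists_linearEquiv_pi_adjoinRoot.{u, v} {F : Type u} {V : Type v} [Field F] [AddCommGroup V] [Module F V]
    [FiniteDimensional F V] (T : V →ₗ[F] V) :
    ∃ (ι : Type u) (_ : Fintype ι) (p : ι → F[X]) (e : ι → ℕ)
      (φ : V ≃ₗ[F] ∀ i, AdjoinRoot (p i ^ e i)),
      (∀ i, Irreducible (p i)) ∧ (∀ i, (p i).Monic) ∧
        ∀ v i, φ (T v) i = AdjoinRoot.root (p i ^ e i) * φ v i := by
  classical
  obtain ⟨ι, hι, q, hq, e, ⟨ψ⟩⟩ := Module.equiv_directSum_of_isTorsion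
    (Module.AEval.isTorsion_of_finiteDimensional F V T)
  have hm : ∀ i, Irreducible (normalize (q i)) := fun i =>
    (normalize_associated (q i)).irreducible_iff.mpr (hq i)
  have hs : ∀ i, Submodule.span F[X] {q i ^ e i} = Ideal.span {normalize (q i) ^ e i} := fun i =>
    Ideal.span_singleton_eq_span_singleton.mpr (((normalize_associated (q i)).pow_pow).symm)
  let χ : Module.AEval F V T ≃ₗ[F[X]] ∀ i, F[X] ⧸ Ideal.span {normalize (q i) ^ e i} :=
    ψ.trans ((DirectSum.linearEquivFunOnFintype F[X] ι _).trans
      (LinearEquiv.piCongrRight fun i => Submodule.quotEquivOfEq _ _ (hs i)))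
  let φ : V ≃ₗ[F] ∀ i, F[X] ⧸ Ideal.span {normalize (q i) ^ e i} :=
    (Module.AEval.of F V T).trans (χ.restrictScalars F)
  refine ⟨ι, hι, fun i => normalize (q i), e, φ, hm,
    fun i => Polynomial.monic_normalize (hq i).ne_zero, fun v i => ?_⟩
  have h1 : φ (T v) = (X : F[X]) • φ v := by
    change χ (Module.AEval.of F V T (T • v)) = (X : F[X]) • χ (Module.AEval.of F V T v)
    rw [← Module.AEval.X_smul_of, map_smul]
  exact (congrFun h1 i).trans rfl
end

theorem even_finrank_add_finrank_ker_of_isAlt {F V : Type*} [Field F] [AddCommGroup V]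
    [Module F V] [FiniteDimensional F V] (B : V →ₗ[F] V →ₗ[F] F) (hB : B.IsAlt) :
    Even (Module.finrank F V + Module.finrank F (LinearMap.ker B)) := by
  induction h : Module.finrank F V using Nat.strong_induction_on generalizing V with
  | _ d ih =>
  subst h
  by_cases hB0 : B = 0
  · subst hB0
    rw [LinearMap.ker_zero, finrank_top]
    exact ⟨_, rfl⟩
  obtain ⟨u, v, huv⟩ : ∃ u v, B u v = 1 := by
    by_contra! hne
    refine hB0 (LinearMap.ext₂ fun x y => ?_)
    by_contra hxy
    refine hne ((B x y)⁻¹ • x) y ?_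
    simp only [LinearMap.map_smul, LinearMap.smul_apply, smul_eq_mul]
    exact inv_mul_cancel₀ hxy
  have hvu : B v u = -1 := by rw [← hB.neg, huv]
  let f : V →ₗ[F] F × F := (B u).prod (B v)
  have hf : Function.Surjective f := by
    rintro ⟨a, b⟩
    refine ⟨a • v - b • u, ?_⟩
    simp [f, huv, hvu, hB u, hB v]
  have hdim := f.finrank_range_add_finrank_ker
  rw [LinearMap.range_eq_top.mpr hf, finrank_top, Module.finrank_prod, Module.finrank_self] at hdim
  let B' := B.domRestrict₁₂ (LinearMap.ker f) (LinearMap.ker f)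
  have hB' : B'.IsAlt := fun x => hB x
  have hker : Module.finrank F (LinearMap.ker B') = Module.finrank F (LinearMap.ker B) := by
    have : LinearMap.ker B = (LinearMap.ker B').map (LinearMap.ker f).subtype := by
      ext x
      simp only [Submodule.mem_map, LinearMap.mem_ker]
      constructor
      · intro hx
        refine ⟨⟨x, ?_⟩, ?_, rfl⟩
        · have h1 : B u x = 0 := by rw [← hB.neg, hx]; simp
          have h2 : B v x = 0 := by rw [← hB.neg, hx]; simp
          simp [f, h1, h2]
        · ext y
          simp [B', LinearMap.domRestrict₁₂_apply, hx]
      · rintro ⟨⟨y, hy⟩, hy0, rfl⟩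
        have h1 : B u y = 0 := congrArg Prod.fst hy
        have h2 : B v y = 0 := congrArg Prod.snd hy
        have h3 : B y u = 0 := by rw [← hB.neg, h1, neg_zero]
        have h4 : B y v = 0 := by rw [← hB.neg, h2, neg_zero]
        ext z
        have hz : f (z - (B u z • v - B v z • u)) = 0 := by
          simp [f, huv, hvu, hB u, hB v]
        have h5 : B y (z - (B u z • v - B v z • u)) = 0 :=
          LinearMap.congr_fun hy0 ⟨_, hz⟩
        simpa [h3, h4] using h5
    rw [this]
    exact (LinearEquiv.finrank_eq (Submodule.equivMapOfInjective _
      (LinearMap.ker f).injective_subtype _))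
  have := ih (Module.finrank F (LinearMap.ker f)) (by omega) B' hB' rfl
  rw [hker] at this
  rw [← hdim]
  obtain ⟨c, hc⟩ := this
  exact ⟨c + 1, by omega⟩

theorem finrank_eq_add_of_map_eq {F V W : Type*} [Field F] [AddCommGroup V] [Module F V]
    [AddCommGroup W] [Module F W] [FiniteDimensional F V] (f : V →ₗ[F] W) {P K : Submodule F V}
    {R : Submodule F W} (hR : P.map f = R) (hK : P ⊓ LinearMap.ker f = K) :
    Module.finrank F P = Module.finrank F R + Module.finrank F K := by
  have h := (f.domRestrict P).finrank_range_add_finrank_ker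
  rw [LinearMap.range_domRestrict, hR] at h
  rw [← h, ← hK]
  congr 1
  have : P ⊓ LinearMap.ker f = (LinearMap.ker (f.domRestrict P)).map P.subtype := by
    ext x
    simp only [Submodule.mem_inf, Submodule.mem_map, LinearMap.mem_ker]
    constructor
    · rintro ⟨h1, h2⟩
      exact ⟨⟨x, h1⟩, h2, rfl⟩
    · rintro ⟨y, h1, rfl⟩
      exact ⟨y.2, h1⟩
  rw [this]
  exact LinearEquiv.finrank_eq (Submodule.equivMapOfInjective _ P.injective_subtype _)

theorem even_finrank_ker_add_finrank_ker_of_isometry {F V : Type*} [Field F] [AddCommGroup V]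
    [Module F V] [FiniteDimensional F V] (β : LinearMap.BilinForm F V) (hβ : β.IsAlt)
    (hn : β.Nondegenerate) (T S : Module.End F V) (hTS : T * S = 1) (hST : S * T = 1)
    (hT : ∀ u v, β (T u) (T v) = β u v) (k : ℕ) :
    Even (Module.finrank F (LinearMap.ker ((T - 1) ^ (2 * k + 2))) +
      Module.finrank F (LinearMap.ker ((T - 1) ^ (2 * k)))) := by
  set N := T - 1 with hN
  have hTv : ∀ v, T (S v) = v := fun v => LinearMap.congr_fun hTS v
  have hcomm : Commute N (-S) := by
    change N * -S = -S * N
    rw [hN]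
    simp only [mul_sub, sub_mul, mul_neg, neg_mul, hTS, hST, mul_one, one_mul]
    abel
  have hadj1 : ∀ u v, β (N u) v = β u ((N * -S) v) := by
    intro u v
    have h1 : β (T u) v = β u (S v) := by rw [← hT u (S v), hTv]
    have h2 : (N * -S) v = S v - v := by
      simp [hN, hTv]
    rw [h2, map_sub, ← h1, hN]
    simp
  have hadj : ∀ (a : ℕ) u v, β ((N ^ a) u) v = β u ((N ^ a) (((-S) ^ a) v)) := by
    intro a u v
    have : ∀ (a : ℕ) u v, β ((N ^ a) u) v = β u (((N * -S) ^ a) v) := by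
      intro a
      induction a with
      | zero => intro u v; rfl
      | succ a ih =>
        intro u v
        rw [pow_succ, Module.End.mul_apply, ih, hadj1, ← Module.End.mul_apply, ← pow_succ']
    rw [this, hcomm.mul_pow, Module.End.mul_apply]
  have hunit : ∀ a : ℕ, (-T) ^ a * (-S) ^ a = 1 ∧ (-S) ^ a * (-T) ^ a = 1 := by
    intro a
    have hc : Commute (-T) (-S) := by
      change -T * -S = -S * -T
      rw [neg_mul_neg, neg_mul_neg, hTS, hST]
    rw [← hc.mul_pow, ← hc.symm.mul_pow, neg_mul_neg, neg_mul_neg, hTS, hST]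
    simp
  have hpc : ∀ a b : ℕ, ∀ v, (N ^ a) (((-S) ^ b) v) = ((-S) ^ b) ((N ^ a) v) := fun a b v =>
    LinearMap.congr_fun ((hcomm.pow_pow a b).eq) v
  have hSmem : ∀ a b : ℕ, ∀ v, ((-S) ^ b) v ∈ LinearMap.range (N ^ a) ↔
      v ∈ LinearMap.range (N ^ a) := by
    intro a b v
    constructor
    · rintro ⟨w, hw⟩
      refine ⟨((-T) ^ b) w, ?_⟩
      have h1 : ((-S) ^ b) ((-T) ^ b • w) = w := LinearMap.congr_fun (hunit b).2 w
      have h2 : ((-T) ^ b) (((-S) ^ b) v) = v := LinearMap.congr_fun (hunit b).1 v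
      rw [← h2, ← hw, ← h1, hpc]
      change _ = ((-T) ^ b * (-S) ^ b) _
      rw [(hunit b).1]
      simp only [Module.End.one_apply]
      rw [h1]
      rfl
    · rintro ⟨w, rfl⟩
      exact ⟨((-S) ^ b) w, hpc _ _ _⟩
  have horth : ∀ w, (∀ u ∈ LinearMap.ker (N ^ (2 * k + 1)), β u w = 0) ↔
      w ∈ LinearMap.range (N ^ (2 * k + 1)) := by
    intro w
    have h1 : LinearMap.ker (N ^ (2 * k + 1)) =
        β.orthogonal (LinearMap.range (N ^ (2 * k + 1))) := by
      ext u
      rw [LinearMap.BilinForm.mem_orthogonal_iff, LinearMap.mem_ker]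
      constructor
      · rintro hu _ ⟨x, rfl⟩
        rw [hadj, hpc, hu]
        simp
      · intro hu
        refine hn.1 _ fun x => ?_
        rw [hadj]
        exact (LinearMap.IsAlt.eq_iff hβ).mp (hu _ ⟨_, rfl⟩)
    rw [h1, ← LinearMap.BilinForm.mem_orthogonal_iff,
      LinearMap.BilinForm.orthogonal_orthogonal hn hβ.isRefl]
  let K := LinearMap.ker (N ^ (2 * k + 1))
  let φ := (β.compl₁₂ (N ^ k) (N ^ k)).domRestrict₁₂ K K
  have hφ : φ.IsAlt := fun x => hβ _
  have heven := even_finrank_add_finrank_ker_of_isAlt φ hφ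
  let R := LinearMap.ker N ⊓ LinearMap.range (N ^ (2 * k + 1))
  have hrad : Module.finrank F (LinearMap.ker φ) =
      Module.finrank F R + Module.finrank F (LinearMap.ker (N ^ (2 * k))) := by
    rw [LinearEquiv.finrank_eq
      (Submodule.equivMapOfInjective K.subtype K.injective_subtype (LinearMap.ker φ))]
    have hmem : ∀ v, v ∈ (LinearMap.ker φ).map K.subtype ↔
        v ∈ K ∧ (N ^ (2 * k)) v ∈ LinearMap.range (N ^ (2 * k + 1)) := by
      intro v
      have h3 : ∀ u, β ((N ^ k) u) ((N ^ k) v) = β u (((-S) ^ k) ((N ^ (2 * k)) v)) := by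
        intro u
        rw [hadj, hpc, two_mul, pow_add, Module.End.mul_apply]
      constructor
      · rintro ⟨⟨w, hw⟩, h1, rfl⟩
        refine ⟨hw, ?_⟩
        rw [← hSmem _ k, ← horth]
        intro u hu
        refine (h3 u).symm.trans ((LinearMap.IsAlt.eq_iff hβ).mp ?_)
        exact LinearMap.congr_fun h1 ⟨u, hu⟩
      · rintro ⟨hv, h1⟩
        refine ⟨⟨v, hv⟩, ?_, rfl⟩
        rw [← hSmem _ k, ← horth] at h1
        refine LinearMap.ext fun u => ?_
        exact (LinearMap.IsAlt.eq_iff hβ).mp ((h3 u).trans (h1 u u.2))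
    refine finrank_eq_add_of_map_eq (N ^ (2 * k)) ?_ ?_
    · ext y
      simp only [Submodule.mem_map, hmem]
      constructor
      · rintro ⟨v, ⟨h1, h2⟩, rfl⟩
        refine ⟨?_, h2⟩
        change N ((N ^ (2 * k)) v) = 0
        rw [← Module.End.mul_apply, ← pow_succ']
        exact h1
      · rintro ⟨h1, z, rfl⟩
        have h2 : (N ^ (2 * k)) (N z) = (N ^ (2 * k + 1)) z := by
          rw [← Module.End.mul_apply, ← pow_succ]
        refine ⟨N z, ⟨?_, ?_⟩, h2⟩
        · rw [LinearMap.mem_ker, pow_succ', Module.End.mul_apply, h2]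
          exact h1
        · rw [h2]
          exact ⟨z, rfl⟩
    · ext v
      rw [Submodule.mem_inf, hmem, LinearMap.mem_ker]
      constructor
      · exact fun h => h.2
      · intro h
        rw [LinearMap.mem_ker] at h
        refine ⟨⟨?_, ?_⟩, h⟩
        · change (N ^ (2 * k + 1)) v = 0
          rw [pow_succ', Module.End.mul_apply, h, map_zero]
        · rw [h]
          exact Submodule.zero_mem _
  have hsucc : Module.finrank F (LinearMap.ker (N ^ (2 * k + 2))) =
      Module.finrank F R + Module.finrank F K := by
    refine finrank_eq_add_of_map_eq (N ^ (2 * k + 1)) ?_ ?_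
    · ext y
      simp only [Submodule.mem_map, LinearMap.mem_ker]
      constructor
      · rintro ⟨v, h1, rfl⟩
        refine ⟨?_, ⟨v, rfl⟩⟩
        change N ((N ^ (2 * k + 1)) v) = 0
        rw [← Module.End.mul_apply, ← pow_succ']
        exact h1
      · rintro ⟨h1, z, rfl⟩
        refine ⟨z, ?_, rfl⟩
        rw [pow_succ', Module.End.mul_apply]
        exact h1
    · refine inf_eq_right.mpr fun v hv => ?_
      rw [LinearMap.mem_ker] at hv ⊢
      rw [pow_succ', Module.End.mul_apply, hv, map_zero]
  obtain ⟨c, hc⟩ := heven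
  exact ⟨c, by omega⟩

section
open Polynomial

/-- The coefficient of degree `natDegree f - 1` of the reduced representative of an element
of `F[X] / (f)`. -/
noncomputable def AdjoinRoot.topCoeff {F : Type*} [Field F] {f : F[X]} (hf : f.Monic) :
    AdjoinRoot f →ₗ[F] F :=
  (lcoeff F (f.natDegree - 1)).comp (AdjoinRoot.modByMonicHom hf)

theorem AdjoinRoot.topCoeff_mk {F : Type*} [Field F] {f : F[X]} (hf : f.Monic) (p : F[X])
    (hp : p.natDegree < f.natDegree) :
    AdjoinRoot.topCoeff hf (AdjoinRoot.mk f p) = p.coeff (f.natDegree - 1) := by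
  simp only [AdjoinRoot.topCoeff, LinearMap.comp_apply, AdjoinRoot.modByMonicHom_mk, lcoeff_apply]
  rw [(modByMonic_eq_self_iff hf).mpr (degree_lt_degree hp)]

theorem AdjoinRoot.eq_zero_of_topCoeff_mul_eq_zero {F : Type*} [Field F] {f : F[X]}
    (hf : f.Monic) (a : AdjoinRoot f) (h : ∀ b, AdjoinRoot.topCoeff hf (a * b) = 0) : a = 0 := by
  by_contra ha
  have h1 : AdjoinRoot.mk f (AdjoinRoot.modByMonicHom hf a) = a := AdjoinRoot.mk_leftInverse hf a
  set p := AdjoinRoot.modByMonicHom hf a with hp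
  have hp0 : p ≠ 0 := by
    intro h0
    rw [h0, map_zero] at h1
    exact ha h1.symm
  have hdeg : p.natDegree < f.natDegree := by
    obtain ⟨q, rfl⟩ := AdjoinRoot.mk_surjective a
    rw [hp, AdjoinRoot.modByMonicHom_mk] at hp0 ⊢
    exact natDegree_lt_natDegree hp0 (degree_modByMonic_lt q hf)
  have h2 := h (AdjoinRoot.mk f (X ^ (f.natDegree - 1 - p.natDegree)))
  rw [← h1, ← map_mul, AdjoinRoot.topCoeff_mk hf, coeff_mul_X_pow', if_pos (by omega)] at h2
  · rw [show f.natDegree - 1 - (f.natDegree - 1 - p.natDegree) = p.natDegree by omega] at h2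
    exact hp0 (leadingCoeff_eq_zero.mp h2)
  · rw [natDegree_mul_X_pow _ hp0]
    omega

theorem exists_nondegenerate_selfAdjoint.{u, v} {F : Type u} {V : Type v} [Field F]
    [AddCommGroup V] [Module F V] [FiniteDimensional F V] (T : V →ₗ[F] V) :
    ∃ γ : LinearMap.BilinForm F V, γ.Nondegenerate ∧ ∀ u v, γ (T u) v = γ u (T v) := by
  classical
  obtain ⟨ι, hι, p, e, φ, -, hm, hφ⟩ := exists_linearEquiv_pi_adjoinRoot T
  have hf : ∀ i, (p i ^ e i).Monic := fun i => (hm i).pow _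
  let γ : LinearMap.BilinForm F V :=
    LinearMap.mk₂ F (fun u v => ∑ i, AdjoinRoot.topCoeff (hf i) (φ u i * φ v i))
      (by intro x y z; simp [add_mul, Finset.sum_add_distrib])
      (by intro c x y; simp [Finset.mul_sum])
      (by intro x y z; simp [mul_add, Finset.sum_add_distrib])
      (by intro c x y; simp [Finset.mul_sum])
  have hγ : ∀ u v, γ u v = ∑ i, AdjoinRoot.topCoeff (hf i) (φ u i * φ v i) := fun _ _ => rfl
  have hsymm : γ.IsSymm := ⟨fun u v => by simp only [hγ, mul_comm]⟩
  refine ⟨γ, ?_, fun u v => ?_⟩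
  · refine (LinearMap.IsRefl.nondegenerate_iff_separatingLeft hsymm.isRefl).mpr ?_
    intro u hu
    rw [← φ.map_eq_zero_iff]
    funext i
    refine AdjoinRoot.eq_zero_of_topCoeff_mul_eq_zero (hf i) _ fun b => ?_
    have := hu (φ.symm (Pi.single i b))
    rw [hγ, LinearEquiv.apply_symm_apply, Finset.sum_eq_single i] at this
    · simpa using this
    · intro j _ hj
      simp [hj]
    · simp
  · rw [hγ, hγ]
    refine Finset.sum_congr rfl fun i _ => ?_
    rw [hφ, hφ]
    ring_nf

theorem exists_conj_inverse_of_isometry {F V : Type*} [Field F]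
    [AddCommGroup V] [Module F V] [FiniteDimensional F V] (β : LinearMap.BilinForm F V)
    (hn : β.Nondegenerate) (T S : Module.End F V) (hTS : T * S = 1)
    (hT : ∀ u v, β (T u) (T v) = β u v) :
    ∃ P : V ≃ₗ[F] V, ∀ v, P (S v) = T (P v) := by
  obtain ⟨γ, hγ, hTγ⟩ := exists_nondegenerate_selfAdjoint T
  let B := LinearMap.BilinForm.toDual β.flip hn.flip
  let G := LinearMap.BilinForm.toDual γ.flip hγ.flip
  refine ⟨B.trans G.symm, fun v => ?_⟩
  apply G.injective
  ext u
  have h1 : ∀ x y, G x y = γ y x := fun _ _ => rfl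
  have h2 : ∀ x y, B x y = β y x := fun _ _ => rfl
  rw [h1 (T _), ← hTγ, ← h1]
  simp only [LinearEquiv.trans_apply, LinearEquiv.apply_symm_apply]
  rw [h2, h2, ← hT, ← Module.End.mul_apply, hTS, Module.End.one_apply]

end

theorem Finset.pairing_induction {ι κ : Type*} [DecidableEq ι] [DecidableEq κ] (f : ι → κ)
    (r : κ → κ) (good : κ → Prop) (P : Finset ι → Prop) (empty : P ∅)
    (union : ∀ s t, Disjoint s t → P s → P t → P (s ∪ t))
    (single : ∀ i, good (f i) → P {i})
    (pair : ∀ i j, i ≠ j → f j = r (f i) → P {i, j})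
    (hgood : ∀ i, good (f i) → r (f i) = f i) (hr : ∀ i, r (r (f i)) = f i) (s : Finset ι)
    (hcard : ∀ l, (s.filter (fun x => f x = f l)).card = (s.filter (fun x => f x = r (f l))).card)
    (heven : ∀ l, r (f l) = f l → ¬ good (f l) → Even (s.filter (fun x => f x = f l)).card) :
    P s := by
  induction h : s.card using Nat.strong_induction_on generalizing s with
  | _ d ih =>
  subst h
  have hrr : ∀ a b, f a = r (f b) ↔ r (f a) = f b := fun a b =>
    ⟨fun h => by rw [h, hr], fun h => by rw [← h, hr]⟩
  have hrinj : ∀ a b, r (f a) = r (f b) ↔ f a = f b := fun a b =>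
    ⟨fun h => by rw [← hr a, h, hr], fun h => by rw [h]⟩
  rcases s.eq_empty_or_nonempty with rfl | ⟨i, hi⟩
  · exact empty
  by_cases hg : good (f i)
  · have hins : insert i (s.erase i) = s := Finset.insert_erase hi
    have hni : i ∉ s.erase i := Finset.notMem_erase i s
    have hcount : ∀ c, (s.filter (fun x => f x = c)).card =
        (if f i = c then 1 else 0) + ((s.erase i).filter (fun x => f x = c)).card := by
      intro c
      conv_lhs => rw [← hins]
      rw [Finset.card_filter, Finset.sum_insert hni, ← Finset.card_filter]
    have hu : {i} ∪ s.erase i = s := by rw [← Finset.insert_eq, hins]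
    rw [← hu]
    refine union _ _ (by simp) (single i hg)
      (ih _ (Finset.card_erase_lt_of_mem hi) _ ?_ ?_ rfl)
    · intro l
      have := hcard l
      rw [hcount, hcount] at this
      have h1 : f i = r (f l) ↔ f i = f l := by rw [hrr, hgood i hg]
      simp only [h1] at this
      omega
    · intro l hl hnl
      have := heven l hl hnl
      rw [hcount, if_neg (fun h : f i = f l => hnl (h ▸ hg)), zero_add] at this
      exact this
  · obtain ⟨j, hj, hij, hfj⟩ : ∃ j ∈ s, i ≠ j ∧ f j = r (f i) := by
      by_cases hri : r (f i) = f i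
      · have hlt : 1 < (s.filter (fun x => f x = f i)).card := by
          have h1 := heven i hri hg
          have h2 : 0 < (s.filter (fun x => f x = f i)).card :=
            Finset.card_pos.mpr ⟨i, by simp [hi]⟩
          obtain ⟨c, hc⟩ := h1
          omega
        obtain ⟨j, hj, hne⟩ := Finset.exists_mem_ne hlt i
        rw [Finset.mem_filter] at hj
        exact ⟨j, hj.1, hne.symm, by rw [hj.2, hri]⟩
      · have h2 : 0 < (s.filter (fun x => f x = r (f i))).card := by
          rw [← hcard]
          exact Finset.card_pos.mpr ⟨i, by simp [hi]⟩
        obtain ⟨j, hj⟩ := Finset.card_pos.mp h2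
        rw [Finset.mem_filter] at hj
        refine ⟨j, hj.1, ?_, hj.2⟩
        rintro rfl
        exact hri hj.2.symm
    have hji : j ∈ s.erase i := Finset.mem_erase.mpr ⟨hij.symm, hj⟩
    set t := (s.erase i).erase j with ht
    have hins : insert i (insert j t) = s := by
      rw [ht, Finset.insert_erase hji, Finset.insert_erase hi]
    have hnj : j ∉ t := Finset.notMem_erase _ _
    have hni : i ∉ insert j t := by
      rw [ht, Finset.insert_erase hji]
      exact Finset.notMem_erase _ _
    have hcount : ∀ c, (s.filter (fun x => f x = c)).card =
        (if f i = c then 1 else 0) + ((if f j = c then 1 else 0) +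
          (t.filter (fun x => f x = c)).card) := by
      intro c
      rw [← hins, Finset.card_filter, Finset.sum_insert hni, Finset.sum_insert hnj,
        ← Finset.card_filter]
    have hdisj : Disjoint {i, j} t := by
      rw [Finset.disjoint_insert_left, Finset.disjoint_singleton_left]
      exact ⟨fun h => hni (Finset.mem_insert_of_mem h), hnj⟩
    have hunion : {i, j} ∪ t = s := by
      rw [← hins]
      ext x
      simp only [Finset.mem_union, Finset.mem_insert, Finset.mem_singleton]
      tauto
    have hlt : t.card < s.card :=
      (Finset.card_erase_lt_of_mem hji).trans (Finset.card_erase_lt_of_mem hi)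
    rw [← hunion]
    refine union _ _ hdisj (pair i j hij hfj) (ih _ hlt _ ?_ ?_ rfl)
    · intro l
      have := hcard l
      rw [hcount, hcount, hfj] at this
      have h1 : r (f i) = f l ↔ f i = r (f l) := (hrr i l).symm
      simp only [h1, hrinj] at this
      omega
    · intro l hl hnl
      have := heven l hl hnl
      rw [hcount, hfj] at this
      have h1 : r (f i) = f l ↔ f i = f l := by rw [← hrr, hl]
      simp only [h1] at this
      obtain ⟨c, hc⟩ := this
      split_ifs at hc
      · exact ⟨c - 1, by omega⟩
      · exact ⟨c, by omega⟩

section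
open Polynomial

theorem AdjoinRoot.root_mul_mk_divX {F : Type*} [Field F] (f : F[X]) :
    AdjoinRoot.root f * AdjoinRoot.mk f f.divX = - AdjoinRoot.of f (f.coeff 0) := by
  have h := congrArg (AdjoinRoot.mk f) (X_mul_divX_add f)
  rw [map_add, map_mul, AdjoinRoot.mk_X, AdjoinRoot.mk_self, AdjoinRoot.mk_C] at h
  exact eq_neg_of_add_eq_zero_left h

theorem AdjoinRoot.exists_mul_root_eq_one {F : Type*} [Field F] (f : F[X])
    (hf : f.coeff 0 ≠ 0) : ∃ w : AdjoinRoot f, w * AdjoinRoot.root f = 1 := by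
  refine ⟨-(AdjoinRoot.of f (f.coeff 0)⁻¹ * AdjoinRoot.mk f f.divX), ?_⟩
  rw [neg_mul, mul_assoc, mul_comm (AdjoinRoot.mk f f.divX), AdjoinRoot.root_mul_mk_divX,
    mul_neg, neg_neg, ← map_mul, inv_mul_cancel₀ hf, map_one]

theorem AdjoinRoot.aeval_reverse_eq_zero {F : Type*} [Field F] {f : F[X]} {w : AdjoinRoot f}
    (hw : w * AdjoinRoot.root f = 1) : aeval w f.reverse = 0 := by
  let _ : Invertible (AdjoinRoot.root f) := ⟨w, hw, by rw [mul_comm, hw]⟩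
  have h := (eval₂_reverse_eq_zero_iff (AdjoinRoot.of f) (AdjoinRoot.root f) f).mpr
    (AdjoinRoot.eval₂_root f)
  exact h

theorem AdjoinRoot.exists_algHom_root_eq {F : Type*} [Field F] {f g : F[X]} {w : AdjoinRoot f}
    (hw : w * AdjoinRoot.root f = 1) {w' : AdjoinRoot g} (hw' : w' * AdjoinRoot.root g = 1)
    (h : aeval w g = 0) (h' : aeval w' f = 0) :
    ∃ σ : AdjoinRoot g →ₐ[F] AdjoinRoot f, σ (AdjoinRoot.root g) = w ∧ Function.Bijective σ := by
  let σ : AdjoinRoot g →ₐ[F] AdjoinRoot f := AdjoinRoot.liftAlgHom g (Algebra.ofId F _) w h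
  let σ' : AdjoinRoot f →ₐ[F] AdjoinRoot g := AdjoinRoot.liftAlgHom f (Algebra.ofId F _) w' h'
  have hσ : σ (AdjoinRoot.root g) = w := AdjoinRoot.liftAlgHom_root _ _ _ _
  have hσ' : σ' (AdjoinRoot.root f) = w' := AdjoinRoot.liftAlgHom_root _ _ _ _
  have h1 : σ w' = AdjoinRoot.root f := by
    have h2 : σ w' * w = 1 := by rw [← hσ, ← map_mul, hw', map_one]
    calc σ w' = σ w' * (w * AdjoinRoot.root f) := by rw [hw, mul_one]
      _ = _ := by rw [← mul_assoc, h2, one_mul]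
  have h3 : σ' w = AdjoinRoot.root g := by
    have h2 : σ' w * w' = 1 := by rw [← hσ', ← map_mul, hw, map_one]
    calc σ' w = σ' w * (w' * AdjoinRoot.root g) := by rw [hw', mul_one]
      _ = _ := by rw [← mul_assoc, h2, one_mul]
  have h4 : σ.comp σ' = AlgHom.id F _ := AdjoinRoot.algHom_ext (by simp [hσ', h1])
  have h5 : σ'.comp σ = AlgHom.id F _ := AdjoinRoot.algHom_ext (by simp [hσ, h3])
  exact ⟨σ, hσ, Function.bijective_iff_has_inverse.mpr
    ⟨σ', fun x => DFunLike.congr_fun h5 x, fun x => DFunLike.congr_fun h4 x⟩⟩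

theorem AdjoinRoot.exists_pairing {F : Type*} [Field F] {f g : F[X]} (hf : f.Monic)
    (hf0 : f.coeff 0 ≠ 0) (hg0 : g.coeff 0 ≠ 0) {c d : F} (hg : g = C c * f.reverse)
    (hfg : f = C d * g.reverse) :
    ∃ b : AdjoinRoot f →ₗ[F] AdjoinRoot g →ₗ[F] F,
      (∀ x y, b (AdjoinRoot.root f * x) (AdjoinRoot.root g * y) = b x y) ∧
      (∀ x, (∀ y, b x y = 0) → x = 0) ∧ ∀ y, (∀ x, b x y = 0) → y = 0 := by
  obtain ⟨w, hw⟩ := AdjoinRoot.exists_mul_root_eq_one f hf0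
  obtain ⟨w', hw'⟩ := AdjoinRoot.exists_mul_root_eq_one g hg0
  obtain ⟨σ, hσ, hbij⟩ := AdjoinRoot.exists_algHom_root_eq hw hw'
    (by rw [hg, map_mul, AdjoinRoot.aeval_reverse_eq_zero hw, mul_zero])
    (by rw [hfg, map_mul, AdjoinRoot.aeval_reverse_eq_zero hw', mul_zero])
  refine ⟨((LinearMap.mul F (AdjoinRoot f)).compl₂ σ.toLinearMap).compr₂
    (AdjoinRoot.topCoeff hf), fun x y => ?_, fun x hx => ?_, fun y hy => ?_⟩
  · simp only [LinearMap.compr₂_apply, LinearMap.compl₂_apply, LinearMap.mul_apply',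
      AlgHom.toLinearMap_apply, map_mul, hσ]
    congr 1
    linear_combination x * σ y * hw
  · refine AdjoinRoot.eq_zero_of_topCoeff_mul_eq_zero hf x fun b => ?_
    obtain ⟨y, rfl⟩ := hbij.2 b
    exact hx y
  · refine hbij.1 ?_
    rw [map_zero]
    refine AdjoinRoot.eq_zero_of_topCoeff_mul_eq_zero hf _ fun b => ?_
    rw [mul_comm]
    exact hy b

theorem AdjoinRoot.exists_alternating_of_reverse_eq {F : Type*} [Field F] [CharP F 2] {f : F[X]}
    (hf : f.Monic) (hrev : f.reverse = f) (hdeg : Even f.natDegree) :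
    ∃ b : AdjoinRoot f →ₗ[F] AdjoinRoot f →ₗ[F] F, (∀ x, b x x = 0) ∧
      (∀ x y, b (AdjoinRoot.root f * x) (AdjoinRoot.root f * y) = b x y) ∧
      ∀ x, (∀ y, b x y = 0) → x = 0 := by
  obtain ⟨j, hj⟩ := hdeg
  rcases Nat.eq_zero_or_pos j with rfl | hjpos
  · have h1 : f = 1 := hf.natDegree_eq_zero.mp hj
    have h2 : ∀ x : AdjoinRoot f, x = 0 := fun x => by
      obtain ⟨p, rfl⟩ := AdjoinRoot.mk_surjective x
      rw [AdjoinRoot.mk_eq_zero, h1]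
      exact one_dvd p
    exact ⟨0, fun _ => rfl, fun _ _ => rfl, fun x _ => h2 x⟩
  have hf0 : f.coeff 0 = 1 := by rw [← hrev, coeff_zero_reverse, hf]
  have hc2 : (2 : AdjoinRoot f) = 0 := by
    have h : (2 : F) = 0 := CharTwo.two_eq_zero
    have := congrArg (algebraMap F (AdjoinRoot f)) h
    rwa [map_ofNat, map_zero] at this
  set t := AdjoinRoot.root f with ht
  set w := AdjoinRoot.mk f f.divX with hwdef
  have hw : w * t = 1 := by
    have := AdjoinRoot.root_mul_mk_divX f
    rw [hf0, map_one] at this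
    linear_combination this - hc2
  have haev : aeval w f = 0 := by
    have h := AdjoinRoot.aeval_reverse_eq_zero hw
    rwa [hrev] at h
  obtain ⟨σ, hσ, hbij⟩ := AdjoinRoot.exists_algHom_root_eq hw hw haev haev
  have hσw : σ w = t := by
    have h2 : σ w * w = 1 := by rw [← hσ, ← map_mul, hσ, hw, map_one]
    linear_combination t * h2 - σ w * hw
  have hσσ : ∀ x, σ (σ x) = x := by
    have : σ.comp σ = AlgHom.id F _ := 
      AdjoinRoot.algHom_ext (by rw [AlgHom.comp_apply, hσ, hσw]; rfl)
    exact fun x => DFunLike.congr_fun this x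
  let top := AdjoinRoot.topCoeff hf
  have htop : ∀ i, i < 2 * j - 1 → top (t ^ i) = 0 := by
    intro i hi
    rw [ht, ← AdjoinRoot.mk_X, ← map_pow, AdjoinRoot.topCoeff_mk hf _ (by simp; omega), hj,
      coeff_X_pow, if_neg (by omega)]
  have htopw : top w = 1 := by
    have h1 : f.divX.natDegree < f.natDegree := by
      rw [natDegree_divX_eq_natDegree_tsub_one]; omega
    rw [AdjoinRoot.topCoeff_mk hf _ h1, coeff_divX,
      show f.natDegree - 1 + 1 = f.natDegree by omega, hf.coeff_natDegree]
  have hsymm : ∀ x, top (t ^ (j - 1) * σ x) = top (t ^ (j - 1) * x) := by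
    intro x
    obtain ⟨p, hp, hpx⟩ : ∃ p : F[X], p.natDegree < 2 * j ∧
        AdjoinRoot.mk f p = t ^ (j - 1) * x := by
      obtain ⟨q, hq⟩ := AdjoinRoot.mk_surjective (t ^ (j - 1) * x)
      refine ⟨q %ₘ f, ?_, ?_⟩
      · rw [two_mul, ← hj]
        exact natDegree_modByMonic_lt _ hf (fun h => by rw [h] at hj; simp at hj; omega)
      · rw [← hq, ← AdjoinRoot.modByMonicHom_mk hf]
        exact AdjoinRoot.mk_leftInverse hf _
    have h1 : x = w ^ (j - 1) * AdjoinRoot.mk f p := by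
      rw [hpx, ← mul_assoc, ← mul_pow, hw, one_pow, one_mul]
    have h2 : σ (AdjoinRoot.mk f p) = ∑ i ∈ Finset.range (2 * j), p.coeff i • w ^ i := by
      rw [← AdjoinRoot.aeval_eq, ← aeval_algHom_apply, hσ, aeval_eq_sum_range' hp]
    have h3 : ∀ a b, t ^ (a + b) * w ^ b = t ^ a := by
      intro a b
      rw [pow_add, mul_assoc, ← mul_pow, mul_comm t w, hw, one_pow, mul_one]
    rw [← hpx, AdjoinRoot.topCoeff_mk hf _ (by omega), h1, map_mul σ, map_pow σ, hσw, h2,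
      ← mul_assoc, ← pow_add, Finset.mul_sum, map_sum,
      Finset.sum_eq_single (2 * j - 1)]
    · rw [mul_smul_comm, map_smul]
      have h4 : t ^ (j - 1 + (j - 1)) * w ^ (2 * j - 1) = w := by
        have h5 := h3 0 (2 * j - 2)
        rw [show 2 * j - 1 = (2 * j - 2) + 1 by omega, pow_succ,
          show j - 1 + (j - 1) = 0 + (2 * j - 2) by omega, ← mul_assoc, h5, pow_zero, one_mul]
      rw [h4, htopw, smul_eq_mul, mul_one, hj, two_mul]
    · intro i hi hne
      rw [Finset.mem_range] at hi
      rw [mul_smul_comm, map_smul,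
        show j - 1 + (j - 1) = (2 * j - 2 - i) + i by omega, h3, htop _ (by omega), smul_zero]
    · intro h
      exact absurd (Finset.mem_range.mpr (by omega)) h
  let b : AdjoinRoot f →ₗ[F] AdjoinRoot f →ₗ[F] F :=
    ((LinearMap.mul F (AdjoinRoot f)).compl₂ σ.toLinearMap).compr₂
      (top.comp (LinearMap.mulLeft F (t ^ (j - 1))))
  have hb : ∀ x y, b x y = top (t ^ (j - 1) * (x * σ y)) := fun _ _ => rfl
  have hinv : ∀ x y, b (t * x) (t * y) = b x y := by
    intro x y
    rw [hb, hb, map_mul σ, hσ]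
    congr 1
    linear_combination t ^ (j - 1) * x * σ y * hw
  have hbsymm : ∀ x y, b x y = b y x := by
    intro x y
    rw [hb, hb, ← hsymm (y * σ x), map_mul σ, hσσ, mul_comm x]
  refine ⟨b, fun x => ?_, hinv, fun x hx => ?_⟩
  · have hadd : ∀ x y, b x x = 0 → b y y = 0 → b (x + y) (x + y) = 0 := by
      intro x y hx hy
      simp only [map_add, LinearMap.add_apply, hx, hy, hbsymm y x, zero_add, add_zero]
      exact CharTwo.add_self_eq_zero _
    obtain ⟨p, rfl⟩ := AdjoinRoot.mk_surjective x
    induction p using Polynomial.induction_on' with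
    | add p q hp hq => rw [map_add]; exact hadd _ _ hp hq
    | monomial n a =>
      have h1 : b (t ^ n) (t ^ n) = 0 := by
        induction n with
        | zero =>
          rw [pow_zero, hb, map_one, mul_one, mul_one]
          exact htop _ (by omega)
        | succ n ih => rw [pow_succ', hinv, ih]
      have h2 : AdjoinRoot.mk f (monomial n a) = a • t ^ n := by
        rw [← C_mul_X_pow_eq_monomial, map_mul, map_pow, AdjoinRoot.mk_X, AdjoinRoot.mk_C,
          Algebra.smul_def]
        rfl
      rw [h2, map_smul, map_smul, LinearMap.smul_apply, h1, smul_zero, smul_zero]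
  · have h1 : t ^ (j - 1) * x = 0 := by
      refine AdjoinRoot.eq_zero_of_topCoeff_mul_eq_zero hf _ fun y => ?_
      obtain ⟨z, rfl⟩ := hbij.2 y
      rw [mul_assoc]
      exact hx z
    calc x = w ^ (j - 1) * (t ^ (j - 1) * x) := by
          rw [← mul_assoc, ← mul_pow, hw, one_pow, one_mul]
      _ = 0 := by rw [h1, mul_zero]

end

section
open Polynomial

/-- The reciprocal polynomial, normalised to be monic. -/
noncomputable def Polynomial.recip {F : Type*} [Field F] (f : F[X]) : F[X] :=
  C (f.coeff 0)⁻¹ * f.reverse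

theorem Polynomial.natDegree_reverse_of_coeff_zero_ne {F : Type*} [Field F] {f : F[X]}
    (h0 : f.coeff 0 ≠ 0) : f.reverse.natDegree = f.natDegree := by
  rw [reverse_natDegree, natTrailingDegree_eq_zero.mpr (Or.inr h0), Nat.sub_zero]

theorem Polynomial.natDegree_recip {F : Type*} [Field F] {f : F[X]} (h0 : f.coeff 0 ≠ 0) :
    f.recip.natDegree = f.natDegree := by
  rw [recip, natDegree_C_mul (inv_ne_zero h0), natDegree_reverse_of_coeff_zero_ne h0]

theorem Polynomial.monic_recip {F : Type*} [Field F] {f : F[X]} (h0 : f.coeff 0 ≠ 0) :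
    f.recip.Monic := by
  rw [Monic, recip, leadingCoeff_mul, leadingCoeff_C, reverse_leadingCoeff,
    trailingCoeff, natTrailingDegree_eq_zero.mpr (Or.inr h0), inv_mul_cancel₀ h0]

theorem Polynomial.coeff_zero_recip {F : Type*} [Field F] {f : F[X]} (hf : f.Monic) :
    f.recip.coeff 0 = (f.coeff 0)⁻¹ := by
  rw [recip, coeff_C_mul, coeff_zero_reverse, hf, mul_one]

theorem Polynomial.recip_mul {F : Type*} [Field F] (f g : F[X]) :
    (f * g).recip = f.recip * g.recip := by
  rw [recip, recip, recip, reverse_mul_of_domain, mul_coeff_zero, mul_inv, C_mul]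
  ring

theorem Polynomial.recip_one {F : Type*} [Field F] : (1 : F[X]).recip = 1 := by
  rw [recip, coeff_one_zero, inv_one, C_1, one_mul, ← C_1, reverse_C]

theorem Polynomial.recip_pow {F : Type*} [Field F] (f : F[X]) (k : ℕ) :
    (f ^ k).recip = f.recip ^ k := by
  induction k with
  | zero => rw [pow_zero, pow_zero, recip_one]
  | succ k ih => rw [pow_succ, recip_mul, ih, pow_succ]

theorem Polynomial.reverse_reverse_of_coeff_zero_ne {F : Type*} [Field F] {f : F[X]}
    (h0 : f.coeff 0 ≠ 0) : f.reverse.reverse = f := by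
  rw [reverse, natDegree_reverse_of_coeff_zero_ne h0, reverse, reflect_reflect]

theorem Polynomial.eq_C_mul_reverse_recip {F : Type*} [Field F] {f : F[X]}
    (h0 : f.coeff 0 ≠ 0) : f = C (f.coeff 0) * f.recip.reverse := by
  rw [recip, reverse_mul_of_domain, reverse_C, reverse_reverse_of_coeff_zero_ne h0, ← mul_assoc,
    ← C_mul, mul_inv_cancel₀ h0, C_1, one_mul]

theorem Polynomial.recip_recip {F : Type*} [Field F] {f : F[X]} (hf : f.Monic)
    (h0 : f.coeff 0 ≠ 0) : f.recip.recip = f := by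
  conv_lhs => rw [recip]
  rw [coeff_zero_recip hf, inv_inv, ← eq_C_mul_reverse_recip h0]

theorem Polynomial.irreducible_recip {F : Type*} [Field F] {f : F[X]} (hf : f.Monic)
    (hirr : Irreducible f) (h0 : f.coeff 0 ≠ 0) : Irreducible f.recip := by
  refine (irreducible_of_monic (monic_recip h0) fun h => ?_).mpr fun a b ha hb hab => ?_
  · have h1 := natDegree_recip h0
    rw [h, natDegree_one] at h1
    exact hirr.not_isUnit (by rw [hf.natDegree_eq_zero.mp h1.symm]; exact isUnit_one)
  · have hab0 : a.coeff 0 * b.coeff 0 ≠ 0 := by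
      rw [← mul_coeff_zero, hab, coeff_zero_recip hf]
      exact inv_ne_zero h0
    have ha0 := left_ne_zero_of_mul hab0
    have hb0 := right_ne_zero_of_mul hab0
    have h2 : f = a.recip * b.recip := by rw [← recip_mul, hab, recip_recip hf h0]
    rcases hirr.isUnit_or_isUnit h2 with h | h
    · left
      rw [← recip_recip ha ha0, (monic_recip ha0).eq_one_of_isUnit h, recip_one]
    · right
      rw [← recip_recip hb hb0, (monic_recip hb0).eq_one_of_isUnit h, recip_one]

theorem Polynomial.reverse_eq_self_of_recip_eq_self {F : Type*} [Field F] [CharP F 2] {f : F[X]}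
    (hf : f.Monic) (h0 : f.coeff 0 ≠ 0) (h : f.recip = f) : f.reverse = f := by
  have h1 : (f.coeff 0)⁻¹ = f.coeff 0 := by rw [← coeff_zero_recip hf, h]
  have h2 : f.coeff 0 = 1 := by
    have h3 : f.coeff 0 * f.coeff 0 = 1 := by
      nth_rewrite 1 [← h1]
      exact inv_mul_cancel₀ h0
    rcases mul_self_eq_one_iff.mp h3 with h4 | h4
    · exact h4
    · rw [h4, CharTwo.neg_eq]
  conv_rhs => rw [← h]
  rw [recip, h2, inv_one, C_1, one_mul]

theorem Polynomial.eval_one_eq_zero_of_reverse_eq_self {F : Type*} [Field F] [CharP F 2]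
    {f : F[X]} (h : f.reverse = f) (hodd : Odd f.natDegree) : f.eval 1 = 0 := by
  rw [eval_eq_sum_range]
  refine Finset.sum_involution (fun i _ => f.natDegree - i) ?_ ?_ ?_ ?_
  · intro i hi
    have hi' : i ≤ f.natDegree := Nat.lt_succ_iff.mp (Finset.mem_range.mp hi)
    have h1 : f.coeff (f.natDegree - i) = f.coeff i := by
      conv_rhs => rw [← h]
      rw [coeff_reverse, revAt_le hi']
    rw [h1, one_pow, one_pow]
    exact CharTwo.add_self_eq_zero _
  · intro i hi _ he
    have hi' : i ≤ f.natDegree := Nat.lt_succ_iff.mp (Finset.mem_range.mp hi)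
    obtain ⟨c, hc⟩ := hodd
    omega
  · intro i hi
    exact Finset.mem_range.mpr (by omega)
  · intro i hi
    have hi' : i ≤ f.natDegree := Nat.lt_succ_iff.mp (Finset.mem_range.mp hi)
    omega

theorem Polynomial.eq_X_sub_one_of_recip_pow_eq {F : Type*} [Field F] [CharP F 2] {p : F[X]}
    (hp : p.Monic) (hirr : Irreducible p) {e : ℕ} (h0 : (p ^ e).coeff 0 ≠ 0)
    (hrec : (p ^ e).recip = p ^ e) (hdeg : Odd (p ^ e).natDegree) :
    p = X - C 1 ∧ Odd e := by
  have h1 := eval_one_eq_zero_of_reverse_eq_self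
    (reverse_eq_self_of_recip_eq_self (hp.pow e) h0 hrec) hdeg
  rw [eval_pow] at h1
  have h2 : p.IsRoot 1 := eq_zero_of_pow_eq_zero h1
  refine ⟨?_, ?_⟩
  · have h3 := (irreducible_X_sub_C (1 : F)).associated_of_dvd hirr (dvd_iff_isRoot.mpr h2)
    exact (eq_of_monic_of_associated (monic_X_sub_C 1) hp h3).symm
  · rw [natDegree_pow] at hdeg
    exact (Nat.odd_mul.mp hdeg).1

end

section
open Polynomial

/-- There is an alternating form on `∏ F[X]/(f i)`, invariant under multiplication by `X`, whose
radical consists of the vectors vanishing on `s`. -/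
def HasInvariantFormOn {ι F : Type*} [Field F] (f : ι → F[X]) (s : Finset ι) : Prop :=
  ∃ β : LinearMap.BilinForm F (∀ i, AdjoinRoot (f i)), β.IsAlt ∧
    (∀ u v, β (fun i => AdjoinRoot.root (f i) * u i) (fun i => AdjoinRoot.root (f i) * v i) =
      β u v) ∧
    ∀ u, (∀ v, β u v = 0) ↔ ∀ i ∈ s, u i = 0

theorem HasInvariantFormOn.union {ι F : Type*} [DecidableEq ι] [Field F] {f : ι → F[X]}
    {s t : Finset ι} (hst : Disjoint s t) (hs : HasInvariantFormOn f s)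
    (ht : HasInvariantFormOn f t) : HasInvariantFormOn f (s ∪ t) := by
  obtain ⟨β₁, ha₁, hi₁, hr₁⟩ := hs
  obtain ⟨β₂, ha₂, hi₂, hr₂⟩ := ht
  have key : ∀ (s t : Finset ι) (β₁ β₂ : LinearMap.BilinForm F (∀ i, AdjoinRoot (f i))),
      Disjoint s t → β₁.IsAlt → β₂.IsAlt → (∀ u, (∀ v, β₁ u v = 0) ↔ ∀ i ∈ s, u i = 0) →
      (∀ u, (∀ v, β₂ u v = 0) ↔ ∀ i ∈ t, u i = 0) → ∀ u, (∀ v, β₁ u v + β₂ u v = 0) →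
      ∀ i ∈ s, u i = 0 := by
    intro s t β₁ β₂ hst ha₁ ha₂ hr₁ hr₂ u hu
    rw [← hr₁]
    intro v
    let v' : ∀ i, AdjoinRoot (f i) := fun i => if i ∈ s then v i else 0
    have h1 : β₂ u v' = 0 := by
      rw [← LinearMap.BilinForm.IsAlt.neg_eq ha₂, neg_eq_zero]
      refine (hr₂ v').mpr (fun i hi => ?_) u
      exact if_neg (Finset.disjoint_right.mp hst hi)
    have h2 : β₁ u (v - v') = 0 := by
      rw [← LinearMap.BilinForm.IsAlt.neg_eq ha₁, neg_eq_zero]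
      refine (hr₁ _).mpr (fun i hi => ?_) u
      rw [Pi.sub_apply, sub_eq_zero]
      exact (if_pos hi).symm
    have h3 := hu v'
    rw [h1, add_zero] at h3
    rwa [map_sub, h3, sub_zero] at h2
  refine ⟨β₁ + β₂, fun u => ?_, fun u v => ?_, fun u => ⟨fun hu i hi => ?_, fun hu v => ?_⟩⟩
  · rw [LinearMap.add_apply, LinearMap.add_apply, ha₁ u, ha₂ u, add_zero]
  · rw [LinearMap.add_apply, LinearMap.add_apply, LinearMap.add_apply, LinearMap.add_apply,
      hi₁, hi₂]
  · have hu' : ∀ v, β₁ u v + β₂ u v = 0 := hu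
    rcases Finset.mem_union.mp hi with hi | hi
    · exact key s t β₁ β₂ hst ha₁ ha₂ hr₁ hr₂ u hu' i hi
    · exact key t s β₂ β₁ hst.symm ha₂ ha₁ hr₂ hr₁ u
        (fun v => by rw [add_comm, hu']) i hi
  · rw [LinearMap.add_apply, LinearMap.add_apply,
      (hr₁ u).mpr (fun i hi => hu i (Finset.mem_union_left t hi)),
      (hr₂ u).mpr (fun i hi => hu i (Finset.mem_union_right s hi)), add_zero]

theorem HasInvariantFormOn.empty {ι F : Type*} [Field F] (f : ι → F[X]) :
    HasInvariantFormOn f ∅ :=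
  ⟨0, fun _ => rfl, fun _ _ => rfl, fun _ => ⟨fun _ i hi => absurd hi (Finset.notMem_empty i),
    fun _ _ => rfl⟩⟩

theorem HasInvariantFormOn.singleton {ι F : Type*} [DecidableEq ι] [Field F] [CharP F 2]
    {f : ι → F[X]} {i : ι} (hf : (f i).Monic) (hrev : (f i).reverse = f i)
    (hdeg : Even (f i).natDegree) : HasInvariantFormOn f {i} := by
  obtain ⟨b, h1, h2, h3⟩ := AdjoinRoot.exists_alternating_of_reverse_eq hf hrev hdeg
  refine ⟨b.compl₁₂ (LinearMap.proj i) (LinearMap.proj i), fun u => h1 _, fun u v => h2 _ _,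
    fun u => ⟨fun hu j hj => ?_, fun hu v => ?_⟩⟩
  · obtain rfl := Finset.mem_singleton.mp hj
    refine h3 _ fun y => ?_
    have := hu (Pi.single j y)
    simpa using this
  · simp [hu i (Finset.mem_singleton_self i)]

theorem HasInvariantFormOn.pair {ι F : Type*} [DecidableEq ι] [Field F] [CharP F 2]
    {f : ι → F[X]} {i j : ι} (hij : i ≠ j) (hi : (f i).Monic) (hi0 : (f i).coeff 0 ≠ 0)
    (hj : f j = (f i).recip) : HasInvariantFormOn f {i, j} := by
  have hj0 : (f j).coeff 0 ≠ 0 := by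
    rw [hj, coeff_zero_recip hi]
    exact inv_ne_zero hi0
  obtain ⟨b, h1, h2, h3⟩ := AdjoinRoot.exists_pairing hi hi0 hj0 hj
    (by rw [hj]; exact eq_C_mul_reverse_recip hi0)
  let B := b.compl₁₂ (LinearMap.proj (R := F) (φ := fun i => AdjoinRoot (f i)) i)
    (LinearMap.proj (R := F) (φ := fun i => AdjoinRoot (f i)) j)
  have hB : ∀ u v, (B + B.flip) u v = b (u i) (v j) + b (v i) (u j) := fun _ _ => rfl
  refine ⟨B + B.flip, fun u => ?_, fun u v => ?_, fun u => ⟨fun hu l hl => ?_, fun hu v => ?_⟩⟩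
  · rw [hB]
    exact CharTwo.add_self_eq_zero _
  · rw [hB, hB, h1, h1]
  · rcases Finset.mem_insert.mp hl with rfl | hl
    · refine h2 _ fun y => ?_
      have := hu (Pi.single j y)
      rw [hB] at this
      simpa [hij] using this
    · obtain rfl := Finset.mem_singleton.mp hl
      refine h3 _ fun x => ?_
      have := hu (Pi.single i x)
      rw [hB] at this
      simpa [hij.symm] using this
  · rw [hB, hu i (by simp), hu j (by simp)]
    simp

theorem hasInvariantFormOn_univ {ι F : Type*} [Fintype ι] [DecidableEq ι] [Field F] [CharP F 2]
    [DecidableEq F[X]] {f : ι → F[X]} (hf : ∀ i, (f i).Monic) (h0 : ∀ i, (f i).coeff 0 ≠ 0)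
    (hcard : ∀ l, (Finset.univ.filter fun x => f x = f l).card =
      (Finset.univ.filter fun x => f x = (f l).recip).card)
    (heven : ∀ l, (f l).recip = f l → Odd (f l).natDegree →
      Even (Finset.univ.filter fun x => f x = f l).card) :
    HasInvariantFormOn f Finset.univ := by
  refine Finset.pairing_induction f recip (fun c => c.recip = c ∧ Even c.natDegree)
    (HasInvariantFormOn f) (.empty f) (fun s t => .union)
    (fun i hi => .singleton (hf i) (reverse_eq_self_of_recip_eq_self (hf i) (h0 i) hi.1) hi.2)
    (fun i j hij hj => .pair hij (hf i) (h0 i) hj) (fun i hi => hi.1)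
    (fun i => recip_recip (hf i) (h0 i)) Finset.univ hcard fun l hl hn => heven l hl ?_
  rw [← Nat.not_even_iff_odd]
  exact fun h => hn ⟨hl, h⟩

end

section
open Polynomial

theorem AdjoinRoot.finrank_eq_natDegree {F : Type*} [Field F] {f : F[X]} (hf : f.Monic) :
    Module.finrank F (AdjoinRoot f) = f.natDegree := by
  rw [(AdjoinRoot.powerBasis' hf).finrank, AdjoinRoot.powerBasis'_dim]

theorem AdjoinRoot.finite_of_monic {F : Type*} [Field F] {f : F[X]} (hf : f.Monic) :
    Module.Finite F (AdjoinRoot f) :=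
  (AdjoinRoot.powerBasis' hf).finite

theorem AdjoinRoot.finrank_ker_mulLeft_pow_of_le {F : Type*} [Field F] {q : F[X]} (hq : q.Monic)
    {k e : ℕ} (hk : k ≤ e) :
    Module.finrank F (LinearMap.ker (LinearMap.mulLeft F (AdjoinRoot.mk (q ^ e) (q ^ k)))) =
      k * q.natDegree := by
  have : Module.Finite F (AdjoinRoot (q ^ e)) := AdjoinRoot.finite_of_monic (hq.pow e)
  have hdvd : q ^ (e - k) ∣ q ^ e := pow_dvd_pow q (Nat.sub_le e k)
  let π : AdjoinRoot (q ^ e) →ₐ[F] AdjoinRoot (q ^ (e - k)) :=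
    AdjoinRoot.algHomOfDvd F _ _ hdvd
  have hπ : ∀ g, π (AdjoinRoot.mk _ g) = AdjoinRoot.mk _ g := fun g => by
    rw [← AdjoinRoot.aeval_eq, ← aeval_algHom_apply, AdjoinRoot.algHomOfDvd_root,
      AdjoinRoot.aeval_eq]
  have hsurj : Function.Surjective π := fun y => by
    obtain ⟨g, rfl⟩ := AdjoinRoot.mk_surjective y
    exact ⟨_, hπ g⟩
  have hker : LinearMap.ker (LinearMap.mulLeft F (AdjoinRoot.mk (q ^ e) (q ^ k))) =
      LinearMap.ker π.toLinearMap := by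
    ext x
    obtain ⟨g, rfl⟩ := AdjoinRoot.mk_surjective x
    rw [LinearMap.mem_ker, LinearMap.mem_ker, LinearMap.mulLeft_apply, AlgHom.toLinearMap_apply,
      hπ, ← map_mul, AdjoinRoot.mk_eq_zero, AdjoinRoot.mk_eq_zero]
    conv_lhs => rw [← Nat.add_sub_cancel' hk, pow_add]
    exact mul_dvd_mul_iff_left (pow_ne_zero k hq.ne_zero)
  have h := LinearMap.finrank_range_add_finrank_ker π.toLinearMap
  rw [LinearMap.range_eq_top.mpr hsurj, finrank_top, AdjoinRoot.finrank_eq_natDegree (hq.pow _),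
    AdjoinRoot.finrank_eq_natDegree (hq.pow _), natDegree_pow, natDegree_pow] at h
  rw [hker]
  have h2 : e * q.natDegree = (e - k) * q.natDegree + k * q.natDegree := by
    rw [← add_mul, Nat.sub_add_cancel hk]
  omega

theorem AdjoinRoot.finrank_ker_mulLeft_pow {F : Type*} [Field F] [DecidableEq F[X]] {p q : F[X]}
    (hp : p.Monic) (hq : q.Monic) (hpi : Irreducible p) (hqi : Irreducible q) (k e : ℕ) :
    Module.finrank F (LinearMap.ker (LinearMap.mulLeft F (AdjoinRoot.mk (p ^ e) (q ^ k)))) =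
      if p = q then min k e * q.natDegree else 0 := by
  split_ifs with h
  · subst h
    rcases le_total k e with hk | hk
    · rw [min_eq_left hk, AdjoinRoot.finrank_ker_mulLeft_pow_of_le hp hk]
    · rw [min_eq_right hk, ← AdjoinRoot.finrank_ker_mulLeft_pow_of_le hp (le_refl e),
        AdjoinRoot.mk_self, AdjoinRoot.mk_eq_zero.mpr (pow_dvd_pow p hk)]
  · have hcop : IsCoprime (q ^ k) (p ^ e) := by
      refine IsCoprime.pow (hqi.coprime_iff_not_dvd.mpr fun hd => h ?_)
      exact (eq_of_monic_of_associated hq hp (hqi.associated_of_dvd hpi hd)).symm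
    obtain ⟨a, b, hab⟩ := hcop
    have h1 : AdjoinRoot.mk (p ^ e) a * AdjoinRoot.mk (p ^ e) (q ^ k) = 1 := by
      have := congrArg (AdjoinRoot.mk (p ^ e)) hab
      rwa [map_add, map_mul, map_mul, AdjoinRoot.mk_self, mul_zero, add_zero, map_one] at this
    have h2 : LinearMap.ker (LinearMap.mulLeft F (AdjoinRoot.mk (p ^ e) (q ^ k))) = ⊥ := by
      rw [LinearMap.ker_eq_bot']
      intro x hx
      rw [← one_mul x, ← h1, mul_assoc]
      rw [LinearMap.mulLeft_apply] at hx
      rw [hx, mul_zero]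
    rw [h2, finrank_bot]

theorem map_aeval_apply_pi_adjoinRoot {ι F V : Type*} [Field F] [AddCommGroup V] [Module F V]
    {T : V →ₗ[F] V} {f : ι → F[X]} (φ : V ≃ₗ[F] ∀ i, AdjoinRoot (f i))
    (h : ∀ v i, φ (T v) i = AdjoinRoot.root (f i) * φ v i) (g : F[X]) (v : V) (i : ι) :
    φ (aeval T g v) i = AdjoinRoot.mk (f i) g * φ v i := by
  induction g using Polynomial.induction_on generalizing v with
  | C a =>
    rw [aeval_C, Module.algebraMap_end_apply, map_smul, Pi.smul_apply, AdjoinRoot.mk_C,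
      Algebra.smul_def]
    rfl
  | add p q hp hq => rw [map_add, LinearMap.add_apply, map_add, Pi.add_apply, hp, hq, map_add,
      add_mul]
  | monomial n a ih =>
    rw [pow_succ, ← mul_assoc, map_mul, Module.End.mul_apply, aeval_X, ih, h, map_mul _ _ X,
      AdjoinRoot.mk_X, mul_assoc]

theorem finrank_ker_aeval_of_pi_adjoinRoot {ι F V : Type*} [Fintype ι] [Field F]
    [AddCommGroup V] [Module F V] {T : V →ₗ[F] V} {f : ι → F[X]} (hf : ∀ i, (f i).Monic)
    (φ : V ≃ₗ[F] ∀ i, AdjoinRoot (f i))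
    (h : ∀ v i, φ (T v) i = AdjoinRoot.root (f i) * φ v i) (g : F[X]) :
    Module.finrank F (LinearMap.ker (aeval T g)) =
      ∑ i, Module.finrank F (LinearMap.ker (LinearMap.mulLeft F (AdjoinRoot.mk (f i) g))) := by
  have : ∀ i, Module.Finite F (AdjoinRoot (f i)) := fun i => AdjoinRoot.finite_of_monic (hf i)
  rw [← Module.finrank_pi_fintype F]
  have h1 : ∀ v ∈ LinearMap.ker (aeval T g), ∀ i,
      φ v i ∈ LinearMap.ker (LinearMap.mulLeft F (AdjoinRoot.mk (f i) g)) := by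
    intro v hv i
    rw [LinearMap.mem_ker, LinearMap.mulLeft_apply, ← map_aeval_apply_pi_adjoinRoot φ h,
      LinearMap.mem_ker.mp hv, map_zero, Pi.zero_apply]
  have h2 : ∀ w : ∀ i, LinearMap.ker (LinearMap.mulLeft F (AdjoinRoot.mk (f i) g)),
      φ.symm (fun i => w i) ∈ LinearMap.ker (aeval T g) := by
    intro w
    rw [LinearMap.mem_ker]
    refine φ.injective (funext fun i => ?_)
    rw [map_aeval_apply_pi_adjoinRoot φ h, LinearEquiv.apply_symm_apply, map_zero]
    exact LinearMap.mem_ker.mp (w i).2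
  exact LinearEquiv.finrank_eq
    { toFun := fun v i => ⟨φ v i, h1 v v.2 i⟩
      invFun := fun w => ⟨φ.symm fun i => w i, h2 w⟩
      map_add' := fun u v => funext fun i => Subtype.ext (by simp)
      map_smul' := fun a v => funext fun i => Subtype.ext (by simp)
      left_inv := fun v => Subtype.ext (φ.symm_apply_apply _)
      right_inv := fun w => funext fun i => Subtype.ext (by simp) }

theorem natDegree_mul_card_filter_eq {ι F V : Type*} [Fintype ι] [Field F] [DecidableEq F[X]]
    [AddCommGroup V] [Module F V] {T : V →ₗ[F] V} {p : ι → F[X]} {e : ι → ℕ}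
    (hp : ∀ i, (p i).Monic) (hpi : ∀ i, Irreducible (p i))
    (φ : V ≃ₗ[F] ∀ i, AdjoinRoot (p i ^ e i))
    (h : ∀ v i, φ (T v) i = AdjoinRoot.root (p i ^ e i) * φ v i)
    {q : F[X]} (hq : q.Monic) (hqi : Irreducible q) (k : ℕ) :
    ((q.natDegree * (Finset.univ.filter fun i => p i ^ e i = q ^ (k + 1)).card : ℕ) : ℤ) =
      2 * Module.finrank F (LinearMap.ker (aeval T (q ^ (k + 1)))) -
        Module.finrank F (LinearMap.ker (aeval T (q ^ (k + 2)))) -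
        Module.finrank F (LinearMap.ker (aeval T (q ^ k))) := by
  have hiff : ∀ i, p i ^ e i = q ^ (k + 1) ↔ p i = q ∧ e i = k + 1 := by
    intro i
    refine ⟨fun hi => ?_, fun hi => by rw [hi.1, hi.2]⟩
    have h1 : q ∣ p i := hqi.prime.dvd_of_dvd_pow (hi ▸ dvd_pow_self q (Nat.succ_ne_zero k))
    have h2 : p i = q :=
      (eq_of_monic_of_associated hq (hp i) (hqi.associated_of_dvd (hpi i) h1)).symm
    refine ⟨h2, ?_⟩
    rw [h2] at hi
    have h3 := congrArg natDegree hi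
    rw [natDegree_pow, natDegree_pow] at h3
    exact Nat.eq_of_mul_eq_mul_right hqi.natDegree_pos h3
  simp only [finrank_ker_aeval_of_pi_adjoinRoot (fun i => (hp i).pow (e i)) φ h,
    AdjoinRoot.finrank_ker_mulLeft_pow (hp _) hq (hpi _) hqi, hiff, Finset.card_filter]
  push_cast
  rw [Finset.mul_sum, Finset.mul_sum, ← Finset.sum_sub_distrib, ← Finset.sum_sub_distrib]
  refine Finset.sum_congr rfl fun i _ => ?_
  by_cases hpq : p i = q
  · simp only [hpq, true_and, if_true]
    by_cases he : e i = k + 1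
    · rw [if_pos he, min_eq_left (by omega), min_eq_right (by omega), min_eq_left (by omega), he]
      push_cast
      ring
    · rw [if_neg he]
      rcases Nat.lt_or_gt_of_ne he with h1 | h1
      · rw [min_eq_right (by omega), min_eq_right (by omega), min_eq_right (by omega)]
        ring
      · rw [min_eq_left (by omega), min_eq_left (by omega), min_eq_left (by omega)]
        ring
  · simp [hpq]

end

section
open Polynomial

theorem Polynomial.pow_mul_aeval_reverse {F A : Type*} [Field F] [Ring A] [Algebra F A]
    {T S : A} (hTS : T * S = 1) (hST : S * T = 1) (f : F[X]) :
    T ^ f.natDegree * aeval S f.reverse = aeval T f := by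
  have hcomm : Commute T S := hTS.trans hST.symm
  have key : ∀ N : ℕ, ∀ f : F[X], f.natDegree ≤ N →
      T ^ N * aeval S (reflect N f) = aeval T f := by
    intro N f hf
    refine induction_with_natDegree_le (fun f => T ^ N * aeval S (reflect N f) = aeval T f) N
      ?_ ?_ ?_ f hf
    · simp
    · intro n r _ hn
      have h : T ^ N * S ^ (N - n) = T ^ n := by
        conv_lhs => rw [← Nat.add_sub_cancel' hn]
        rw [pow_add, Nat.add_sub_cancel_left, mul_assoc, ← hcomm.mul_pow, hTS, one_pow, mul_one]
      rw [reflect_C_mul_X_pow, revAt_le hn, map_mul, map_mul, map_pow, map_pow, aeval_X, aeval_X,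
        aeval_C, aeval_C, ← mul_assoc, ← (Algebra.commutes r (T ^ N)), mul_assoc, h]
    · intro f g _ _ hf hg
      rw [reflect_add, map_add, mul_add, hf, hg, map_add]
  exact key _ f le_rfl

theorem finrank_ker_aeval_recip {F V : Type*} [Field F] [AddCommGroup V] [Module F V]
    {T S : Module.End F V} (hTS : T * S = 1) (hST : S * T = 1) (P : V ≃ₗ[F] V)
    (hP : ∀ v, P (S v) = T (P v)) {g : F[X]} (h0 : g.coeff 0 ≠ 0) :
    Module.finrank F (LinearMap.ker (aeval T g.recip)) =
      Module.finrank F (LinearMap.ker (aeval T g)) := by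
  have hconj : ∀ (f : F[X]) v, P (aeval S f v) = aeval T f (P v) := by
    intro f v
    induction f using Polynomial.induction_on generalizing v with
    | C a => rw [aeval_C, aeval_C, Module.algebraMap_end_apply, Module.algebraMap_end_apply,
        map_smul]
    | add p q hp hq => rw [map_add, map_add, LinearMap.add_apply, LinearMap.add_apply, map_add,
        hp, hq]
    | monomial n a ih =>
      rw [pow_succ, ← mul_assoc, map_mul, map_mul _ _ X, Module.End.mul_apply,
        Module.End.mul_apply, aeval_X, aeval_X, ih, hP]
  have hinj : Function.Injective T := fun x y h => by
    rw [← Module.End.one_apply (R := F) x, ← Module.End.one_apply (R := F) y, ← hST,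
      Module.End.mul_apply, Module.End.mul_apply, h]
  have h1 : LinearMap.ker (aeval T g.recip) = LinearMap.ker (aeval T g.reverse) := by
    ext v
    rw [LinearMap.mem_ker, LinearMap.mem_ker, recip, map_mul, aeval_C, Module.End.mul_apply,
      Module.algebraMap_end_apply, smul_eq_zero_iff_right (inv_ne_zero h0)]
  have h2 : LinearMap.ker (aeval T g.reverse) =
      (LinearMap.ker (aeval S g.reverse)).map (P : V →ₗ[F] V) := by
    ext v
    rw [LinearMap.mem_ker, Submodule.mem_map]
    refine ⟨fun hv => ⟨P.symm v, ?_, P.apply_symm_apply v⟩, ?_⟩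
    · rw [LinearMap.mem_ker]
      refine P.injective ?_
      rw [hconj, P.apply_symm_apply, hv, map_zero]
    · rintro ⟨u, hu, rfl⟩
      rw [LinearEquiv.coe_coe, ← hconj, LinearMap.mem_ker.mp hu, map_zero]
  have h3 : LinearMap.ker (aeval S g.reverse) = LinearMap.ker (aeval T g) := by
    ext v
    rw [LinearMap.mem_ker, LinearMap.mem_ker, ← pow_mul_aeval_reverse hTS hST,
      Module.End.mul_apply]
    refine ⟨fun h => by rw [h, map_zero], fun h => ?_⟩
    rw [Module.End.pow_apply] at h
    refine hinj.iterate g.natDegree ?_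
    rw [h, ← Module.End.pow_apply, map_zero]
  rw [h1, h2, LinearEquiv.finrank_map_eq, h3]

theorem exists_isAlt_nondegenerate_of_conj_inverse {F V : Type*} [Field F] [CharP F 2]
    [AddCommGroup V] [Module F V] [FiniteDimensional F V] {T S : Module.End F V}
    (hTS : T * S = 1) (hST : S * T = 1) (P : V ≃ₗ[F] V) (hP : ∀ v, P (S v) = T (P v))
    (heven : ∀ k, Even k → Even (2 * (Module.finrank F (LinearMap.ker ((T - 1) ^ (k + 1))) : ℤ) -
      Module.finrank F (LinearMap.ker ((T - 1) ^ (k + 2))) -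
      Module.finrank F (LinearMap.ker ((T - 1) ^ k)))) :
    ∃ β : LinearMap.BilinForm F V, β.IsAlt ∧ (∀ u v, β (T u) (T v) = β u v) ∧
      ∀ u, (∀ v, β u v = 0) → u = 0 := by
  classical
  obtain ⟨ι, _, p, e, φ, hpi, hp, hφ⟩ := exists_linearEquiv_pi_adjoinRoot T
  have h0 : ∀ i, (p i ^ e i).coeff 0 ≠ 0 := by
    intro i hi
    have h1 : φ (T (S (φ.symm fun _ => 1))) i = 1 := by
      rw [← Module.End.mul_apply, hTS, Module.End.one_apply, LinearEquiv.apply_symm_apply]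
    rw [hφ] at h1
    obtain ⟨g, hg⟩ := AdjoinRoot.mk_surjective (φ (S (φ.symm fun _ => 1)) i)
    rw [← hg, ← AdjoinRoot.mk_X, ← map_mul, ← sub_eq_zero, ← map_one (AdjoinRoot.mk _),
      ← map_sub, AdjoinRoot.mk_eq_zero] at h1
    have h2 := (X_dvd_iff.mpr hi).trans h1
    rw [X_dvd_iff] at h2
    simp at h2
  have hp0 : ∀ i, e i ≠ 0 → (p i).coeff 0 ≠ 0 := by
    intro i hi h
    refine h0 i ?_
    rw [coeff_zero_eq_eval_zero, eval_pow, ← coeff_zero_eq_eval_zero, h, zero_pow hi]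
  have hform : HasInvariantFormOn (fun i => p i ^ e i) Finset.univ := by
    refine hasInvariantFormOn_univ (fun i => (hp i).pow (e i)) h0 (fun l => ?_)
      fun l hrec hodd => ?_
    · by_cases hl : e l = 0
      · simp only [hl, pow_zero, recip_one]
      · obtain ⟨k, hk⟩ := Nat.exists_eq_succ_of_ne_zero hl
        have hq0 := hp0 l hl
        have hd : ∀ m, Module.finrank F (LinearMap.ker (aeval T ((p l).recip ^ m))) =
            Module.finrank F (LinearMap.ker (aeval T (p l ^ m))) := by
          intro m
          rw [← recip_pow]
          refine finrank_ker_aeval_recip hTS hST P hP ?_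
          rw [coeff_zero_eq_eval_zero, eval_pow, ← coeff_zero_eq_eval_zero]
          exact pow_ne_zero m hq0
        have h1 := natDegree_mul_card_filter_eq hp hpi φ hφ (hp l) (hpi l) k
        have h2 := natDegree_mul_card_filter_eq hp hpi φ hφ (monic_recip hq0)
          (irreducible_recip (hp l) (hpi l) hq0) k
        rw [hd, hd, hd, ← h1, natDegree_recip hq0, Nat.cast_inj] at h2
        simp only [hk, recip_pow]
        exact (Nat.eq_of_mul_eq_mul_left (hpi l).natDegree_pos h2).symm
    · obtain ⟨h1, k, hk⟩ := eq_X_sub_one_of_recip_pow_eq (hp l) (hpi l) (h0 l) hrec hodd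
      have h2 := natDegree_mul_card_filter_eq hp hpi φ hφ (hp l) (hpi l) (2 * k)
      have h3 : ∀ m, aeval T (p l ^ m) = (T - 1) ^ m := by
        intro m
        rw [map_pow, h1, map_sub, aeval_X, aeval_C, map_one]
      rw [h3, h3, h3, h1, natDegree_X_sub_C, one_mul, ← h1] at h2
      have h4 := heven (2 * k) (even_two_mul k)
      rw [← h2, Int.even_coe_nat] at h4
      simpa only [hk] using h4
  obtain ⟨β, ha, hinv, hr⟩ := hform
  refine ⟨β.compl₁₂ (φ : V →ₗ[F] _) (φ : V →ₗ[F] _), fun u => ha _, fun u v => ?_,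
    fun u hu => ?_⟩
  · have h1 : ∀ v, φ (T v) = fun i => AdjoinRoot.root (p i ^ e i) * φ v i := fun v =>
      funext fun i => hφ v i
    rw [LinearMap.compl₁₂_apply, LinearMap.compl₁₂_apply]
    simp only [LinearEquiv.coe_coe, h1]
    exact hinv _ _
  · refine φ.injective (funext fun i => ?_)
    rw [map_zero]
    refine (hr (φ u)).mp (fun v => ?_) i (Finset.mem_univ i)
    have := hu (φ.symm v)
    rwa [LinearMap.compl₁₂_apply, LinearEquiv.coe_coe, LinearEquiv.apply_symm_apply] at this

end

theorem LinearMap.BilinForm.IsAlt.exists_sub_swap_eq {F V : Type*} [Field F]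
    [AddCommGroup V] [Module F V] [FiniteDimensional F V] {β : LinearMap.BilinForm F V}
    (hβ : β.IsAlt) : ∃ b : LinearMap.BilinForm F V, ∀ u v, b u v - b v u = β u v := by
  let bm := Module.finBasis F V
  let b : LinearMap.BilinForm F V := bm.constr F fun i => bm.constr F fun j =>
    if i < j then β (bm i) (bm j) else 0
  have hb : ∀ i j, b (bm i) (bm j) = if i < j then β (bm i) (bm j) else 0 := by
    intro i j
    rw [Module.Basis.constr_basis, Module.Basis.constr_basis]
  have h : b - LinearMap.flip b = β := by
    refine LinearMap.BilinForm.ext_basis bm fun i j => ?_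
    rw [LinearMap.sub_apply, LinearMap.sub_apply, LinearMap.flip_apply, hb, hb]
    rcases lt_trichotomy i j with h | rfl | h
    · rw [if_pos h, if_neg h.not_gt, sub_zero]
    · rw [sub_self, hβ]
    · rw [if_neg h.not_gt, if_pos h, zero_sub, hβ.neg_eq]
  exact ⟨b, fun u v => by rw [← h]; rfl⟩

theorem exists_quadraticForm_polar_eq {F V : Type*} [Field F] [CharP F 2] [PerfectRing F 2]
    [AddCommGroup V] [Module F V] [FiniteDimensional F V] {T : Module.End F V}
    {β : LinearMap.BilinForm F V} (hβ : β.IsAlt) (hT : ∀ u v, β (T u) (T v) = β u v) :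
    ∃ Q : QuadraticForm F V, (∀ u v, QuadraticMap.polar Q u v = β u v) ∧
      ∀ v, Q (T v) = Q v := by
  obtain ⟨b, hb⟩ := hβ.exists_sub_swap_eq
  let Q₀ : QuadraticForm F V := LinearMap.BilinMap.toQuadraticMap b
  have hQ₀ : ∀ u v, Q₀ (u + v) = Q₀ u + Q₀ v + β u v := by
    intro u v
    have h1 : Q₀ (u + v) = b (u + v) (u + v) := rfl
    have h2 : Q₀ u = b u u := rfl
    have h3 : Q₀ v = b v v := rfl
    rw [h1, h2, h3, ← hb, CharTwo.sub_eq_add]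
    simp only [map_add, LinearMap.add_apply]
    ring
  let f : V →ₗ[F] F :=
    { toFun := fun v => (frobeniusEquiv F 2).symm (Q₀ (T v) + Q₀ v)
      map_add' := fun u v => by
        rw [← map_add (frobeniusEquiv F 2).symm, map_add T, hQ₀, hQ₀, hT]
        congr 1
        linear_combination β u v * CharTwo.two_eq_zero (R := F)
      map_smul' := fun a v => by
        rw [map_smul, QuadraticMap.map_smul, QuadraticMap.map_smul, ← smul_add, smul_eq_mul,
          map_mul, ← pow_two, frobeniusEquiv_symm_pow, RingHom.id_apply, smul_eq_mul] }
  have hf : ∀ v, f v ^ 2 = Q₀ (T v) + Q₀ v := fun v => frobeniusEquiv_symm_pow_p F 2 _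
  have hmem : f ∈ LinearMap.range (T - 1).dualMap := by
    rw [LinearMap.range_dualMap_eq_dualAnnihilator_ker, Submodule.mem_dualAnnihilator]
    intro v hv
    rw [LinearMap.mem_ker, LinearMap.sub_apply, Module.End.one_apply, sub_eq_zero] at hv
    have h := hf v
    rw [hv, CharTwo.add_self_eq_zero] at h
    exact pow_eq_zero_iff two_ne_zero |>.mp h
  obtain ⟨g, hg⟩ := hmem
  have hg' : ∀ v, g (T v) = g v + f v := by
    intro v
    rw [← hg, LinearMap.dualMap_apply, LinearMap.sub_apply, Module.End.one_apply, map_sub]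
    ring
  refine ⟨Q₀ + QuadraticMap.linMulLin g g, fun u v => ?_, fun v => ?_⟩
  · rw [QuadraticMap.polar]
    simp only [_root_.add_apply, QuadraticMap.linMulLin_apply, hQ₀, map_add]
    linear_combination g u * g v * CharTwo.two_eq_zero (R := F)
  · rw [_root_.add_apply, _root_.add_apply, QuadraticMap.linMulLin_apply,
      QuadraticMap.linMulLin_apply, hg']
    linear_combination hf v + (Q₀ (T v) + g v * f v) * CharTwo.two_eq_zero (R := F)

theorem Matrix.finrank_ker_toLin'_transpose {F : Type*} [Field F] {n : ℕ}
    (A : Matrix (Fin n) (Fin n) F) :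
    Module.finrank F (LinearMap.ker (toLin' Aᵀ)) = Module.finrank F (LinearMap.ker (toLin' A)) := by
  have h1 := LinearMap.finrank_range_add_finrank_ker (toLin' A)
  have h2 := LinearMap.finrank_range_add_finrank_ker (toLin' Aᵀ)
  have h3 : Aᵀ.rank = A.rank := A.rank_transpose
  rw [Matrix.rank, Matrix.rank, ← toLin'_apply', ← toLin'_apply'] at h3
  omega

theorem edMultiplicity_neg_one_eq {F : Type*} [Field F] [CharP F 2] {n : ℕ}
    (X : Matrix (Fin n) (Fin n) F) (m : ℕ) :
    edMultiplicity X (-1) m =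
      2 * (Module.finrank F (LinearMap.ker ((toLin' Xᵀ - 1) ^ m)) : ℤ)
        - Module.finrank F (LinearMap.ker ((toLin' Xᵀ - 1) ^ (m + 1)))
        - Module.finrank F (LinearMap.ker ((toLin' Xᵀ - 1) ^ (m - 1))) := by
  have h : ∀ k, Module.finrank F (LinearMap.ker (toLin' ((X - (-1 : F) • 1) ^ k))) =
      Module.finrank F (LinearMap.ker ((toLin' Xᵀ - 1) ^ k)) := by
    intro k
    rw [← finrank_ker_toLin'_transpose, CharTwo.neg_eq, one_smul, transpose_pow, transpose_sub,
      transpose_one, toLin'_pow, map_sub, toLin'_one]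
    rfl
  rw [edMultiplicity, h, h, h]

/-- Let `F` be a finite field of characteristic 2 and `X ∈ GL(n,F)`.  There is a nonsingular
quadratic form `Q` on `F^n` with `X` an isometry of `Q` iff `X` is similar to `X⁻¹` and for
every odd `m ≥ 1` the multiplicity of `(t+1)^m` as an elementary divisor of `X` is even. -/
theorem exists_quadratic_form_iff_char_two
    {F : Type*} [Field F] [Fintype F] [CharP F 2] {n : ℕ}
    (X : Matrix (Fin n) (Fin n) F) (hX : IsUnit X) :
    (∃ Q : (Fin n → F) → F,
        (∀ (a : F) (v : Fin n → F), Q (a • v) = a ^ 2 * Q v) ∧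
        (∀ u₁ u₂ v, QuadraticMap.polar Q (u₁ + u₂) v =
            QuadraticMap.polar Q u₁ v + QuadraticMap.polar Q u₂ v) ∧
        (∀ (a : F) (u v : Fin n → F), QuadraticMap.polar Q (a • u) v =
            a * QuadraticMap.polar Q u v) ∧
        (∀ u v₁ v₂, QuadraticMap.polar Q u (v₁ + v₂) =
            QuadraticMap.polar Q u v₁ + QuadraticMap.polar Q u v₂) ∧
        (∀ (a : F) (u v : Fin n → F), QuadraticMap.polar Q u (a • v) =
            a * QuadraticMap.polar Q u v) ∧
        (∀ v, (∀ u, QuadraticMap.polar Q v u = 0) → v = 0) ∧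
        (∀ v, Q (v ᵥ* X) = Q v)) ↔
      ((∃ P : Matrix (Fin n) (Fin n) F, IsUnit P ∧ X⁻¹ = P⁻¹ * X * P) ∧
        ∀ m : ℕ, 1 ≤ m → Odd m → Even (edMultiplicity X (-1) m)) := by
  have hXd : IsUnit X.det := (isUnit_iff_isUnit_det X).mp hX
  have hTv : ∀ v, toLin' Xᵀ v = v ᵥ* X := fun v => by rw [toLin'_apply, mulVec_transpose]
  have hTS : toLin' Xᵀ * toLin' (X⁻¹)ᵀ = 1 := by
    rw [Module.End.mul_eq_comp, ← toLin'_mul, ← transpose_mul, nonsing_inv_mul X hXd,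
      transpose_one, toLin'_one]
    rfl
  have hST : toLin' (X⁻¹)ᵀ * toLin' Xᵀ = 1 := by
    rw [Module.End.mul_eq_comp, ← toLin'_mul, ← transpose_mul, mul_nonsing_inv X hXd,
      transpose_one, toLin'_one]
    rfl
  constructor
  · rintro ⟨Q, hsmul, hal, hsl, har, hsr, hnd, hiso⟩
    let β : LinearMap.BilinForm F (Fin n → F) :=
      LinearMap.mk₂ F (QuadraticMap.polar Q) hal hsl har hsr
    have hβ : ∀ u v, β u v = QuadraticMap.polar Q u v := fun _ _ => rfl
    have hinv : ∀ u v, β (toLin' Xᵀ u) (toLin' Xᵀ v) = β u v := by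
      intro u v
      rw [hβ, hβ, QuadraticMap.polar, QuadraticMap.polar, ← map_add, hTv, hTv, hTv, hiso, hiso,
        hiso]
    have halt : β.IsAlt := by
      intro u
      have h0 : Q (u + u) = 0 := by
        rw [← two_smul F u, CharTwo.two_eq_zero, hsmul, zero_pow two_ne_zero, zero_mul]
      rw [hβ, QuadraticMap.polar, h0, sub_sub, CharTwo.add_self_eq_zero, sub_zero]
    have hn : β.Nondegenerate :=
      ⟨fun v hv => hnd v hv, fun v hv => hnd v fun u => by
        rw [QuadraticMap.polar_comm]
        exact hv u⟩
    refine ⟨?_, fun m _ hm => ?_⟩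
    · obtain ⟨P, hP⟩ := exists_conj_inverse_of_isometry β hn _ _ hTS hinv
      let A : Matrix (Fin n) (Fin n) F :=
        LinearMap.toMatrix' (P : (Fin n → F) →ₗ[F] (Fin n → F))
      have hPm : A * (X⁻¹)ᵀ = Xᵀ * A := by
        refine toLin'.injective (LinearMap.ext fun v => ?_)
        rw [toLin'_mul, toLin'_mul, toLin'_toMatrix', LinearMap.comp_apply, LinearMap.comp_apply]
        exact hP v
      have hPP : A * LinearMap.toMatrix' (P.symm : (Fin n → F) →ₗ[F] (Fin n → F)) = 1 := by
        rw [← LinearMap.toMatrix'_comp, LinearEquiv.comp_symm, LinearMap.toMatrix'_id]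
      have hPu : IsUnit A := IsUnit.of_mul_eq_one _ hPP
      have hAu : IsUnit Aᵀ := isUnit_transpose A |>.mpr hPu
      have hAd : IsUnit (Aᵀ).det := (isUnit_iff_isUnit_det _).mp hAu
      have h := congrArg transpose hPm
      rw [transpose_mul, transpose_mul, transpose_transpose, transpose_transpose] at h
      refine ⟨(Aᵀ)⁻¹, (isUnit_nonsing_inv_iff).mpr hAu, ?_⟩
      rw [nonsing_inv_nonsing_inv _ hAd, ← h, mul_assoc, mul_nonsing_inv _ hAd, mul_one]
    · obtain ⟨k, rfl⟩ := hm
      obtain ⟨c, hc⟩ :=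
        even_finrank_ker_add_finrank_ker_of_isometry β halt hn _ _ hTS hST hinv k
      rw [edMultiplicity_neg_one_eq, Nat.add_sub_cancel, show 2 * k + 1 + 1 = 2 * k + 2 from rfl]
      exact ⟨Module.finrank F (LinearMap.ker ((toLin' Xᵀ - 1) ^ (2 * k + 1))) - c, by omega⟩
  · rintro ⟨⟨P, hP, hXP⟩, hev⟩
    have hPd : IsUnit P.det := (isUnit_iff_isUnit_det P).mp hP
    have h1 : (P⁻¹)ᵀ * Pᵀ = 1 := by
      rw [← transpose_mul, mul_nonsing_inv P hPd, transpose_one]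
    have h2 : Pᵀ * (P⁻¹)ᵀ = 1 := by
      rw [← transpose_mul, nonsing_inv_mul P hPd, transpose_one]
    have h3 : (P⁻¹)ᵀ * (X⁻¹)ᵀ = Xᵀ * (P⁻¹)ᵀ := by
      rw [← transpose_mul, ← transpose_mul, hXP, mul_assoc, mul_nonsing_inv P hPd, mul_one]
    obtain ⟨β, halt, hinv, hn⟩ := exists_isAlt_nondegenerate_of_conj_inverse hTS hST
      (toLin'OfInv h2 h1) (fun v => by
        have h := congrArg (fun A => toLin' A v) h3
        simp only [toLin'_mul, LinearMap.comp_apply] at h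
        exact h) (fun k hk => by
        have h := hev (k + 1) (by omega) hk.add_one
        rwa [edMultiplicity_neg_one_eq, Nat.add_sub_cancel] at h)
    obtain ⟨Q, hpolar, hQ⟩ := exists_quadraticForm_polar_eq halt hinv
    refine ⟨Q, fun a v => ?_, fun u₁ u₂ v => QuadraticMap.polar_add_left Q u₁ u₂ v,
      fun a u v => QuadraticMap.polar_smul_left Q a u v,
      fun u v₁ v₂ => QuadraticMap.polar_add_right Q u v₁ v₂,
      fun a u v => QuadraticMap.polar_smul_right Q a u v,
      fun v hv => hn v fun u => by rw [← hpolar, hv], fun v => by rw [← hTv, hQ]⟩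
    rw [QuadraticMap.map_smul, smul_eq_mul, pow_two]
end

section
/- Let F be a finite field, let f ∈ F[t] be a monic irreducible polynomial of degree d > 1 with f = f* (self-dual), and let X ∈ M_d(F) be the companion matrix of f. Let Q be a nonsingular quadratic form on F^d such that X is an isometry of Q. Then every totally singular subspace W of F^d satisfies 2·dim W < d; that is, Q has minus type. -/
open Matrix Polynomial

/-- The dual polynomial `f*(t) = f(0)⁻¹ · t^(deg f) · f(1/t)`. -/
noncomputable def dualPoly {F : Type*} [Field F] (f : Polynomial F) : Polynomial F :=
  Polynomial.C (f.coeff 0)⁻¹ * f.reverse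

/-- The companion matrix of a polynomial `f` of degree `d`: the last column holds the
negated coefficients of `f`, the subdiagonal holds 1's. -/
def companionMatrix {F : Type*} [Field F] (f : Polynomial F) :
    Matrix (Fin f.natDegree) (Fin f.natDegree) F :=
  fun i j =>
    if (j : ℕ) = f.natDegree - 1 then -f.coeff i
    else if (i : ℕ) = (j : ℕ) + 1 then 1 else 0

section QuadraticForm

variable {F V : Type*} [Field F] [AddCommGroup V] [Module F V]

/-- All fibres of a nonzero linear functional have the same size. -/
lemma card_mul_card_fiber_of_ne_zero [Finite F] [Finite V] (l : V →ₗ[F] F) (hl : l ≠ 0) (a : F) :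
    Nat.card F * Nat.card {v // l v = a} = Nat.card V := by
  classical
  have := Fintype.ofFinite F
  have := Fintype.ofFinite V
  have hsurj : Function.Surjective l := LinearMap.surjective hl
  have hfib : ∀ b, Nat.card {v // l v = b} = Nat.card {v // l v = a} := fun b => by
    rw [Nat.card_eq_fintype_card, Nat.card_eq_fintype_card, Fintype.card_subtype,
      Fintype.card_subtype]
    exact AddMonoidHom.card_fiber_eq_of_mem_range l (hsurj b) (hsurj a)
  rw [← Nat.card_congr (Equiv.sigmaFiberEquiv l), Nat.card_sigma]
  simp only [hfib]
  simp

/-- A totally singular subspace of at least half the dimension is its own orthogonal. -/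
lemma QuadraticForm.orthogonal_eq_of_totallySingular [FiniteDimensional F V]
    (Q : QuadraticForm F V) (hQ : LinearMap.BilinForm.Nondegenerate Q.polarBilin)
    (W : Submodule F V) (hW : ∀ w ∈ W, Q w = 0)
    (hdim : Module.finrank F V ≤ 2 * Module.finrank F W) :
    LinearMap.BilinForm.orthogonal Q.polarBilin W = W ∧
      Module.finrank F V = 2 * Module.finrank F W := by
  have hle : W ≤ LinearMap.BilinForm.orthogonal Q.polarBilin W := by
    intro v hv
    rw [LinearMap.BilinForm.mem_orthogonal_iff]
    intro w hw
    simp [QuadraticMap.polar, hW _ hw, hW _ hv,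
      hW _ (W.add_mem hw hv)]
  have hfin := LinearMap.BilinForm.finrank_orthogonal hQ W
  have h1 := Submodule.finrank_mono hle
  have h2 := Submodule.finrank_le W
  exact ⟨(Submodule.eq_of_le_of_finrank_le hle (by lia)).symm, by lia⟩

/-- The number of vectors on which a quadratic form takes a given nonzero value, when there is a
self-orthogonal totally singular subspace. -/
lemma QuadraticForm.card_mul_card_fiber_add [Finite F] [Finite V]
    (Q : QuadraticForm F V) (W : Submodule F V) (hW : ∀ w ∈ W, Q w = 0)
    (horth : LinearMap.BilinForm.orthogonal Q.polarBilin W = W) {a : F} (ha : a ≠ 0) :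
    Nat.card F * Nat.card {v // Q v = a} + Nat.card W = Nat.card V := by
  classical
  have hsplit : Nat.card W + Nat.card {v // v ∉ W} = Nat.card V := by
    rw [← Nat.card_congr (Equiv.sumCompl (· ∈ W)), Nat.card_sum]
  -- Count the pairs `(v, w)` with `v ∉ W`, `w ∈ W` and `Q (v + w) = a` in two ways.
  let e : (Σ v : {v // v ∉ W}, {w : W // Q (v + w) = a}) ≃ {v // Q v = a} × W :=
    { toFun := fun p => (⟨p.1 + p.2.1, p.2.2⟩, p.2.1)
      invFun := fun p => ⟨⟨p.1 - p.2, fun h => ha (by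
          rw [← p.1.2, hW _ ((W.sub_mem_iff_left p.2.2).1 h)])⟩,
          ⟨p.2, by simpa using p.1.2⟩⟩
      left_inv := by
        rintro ⟨⟨v, hv⟩, ⟨w, hw⟩⟩
        have h : v + (w : V) - w = v := by simp
        simp only [Sigma.mk.injEq, Subtype.mk.injEq]
        refine ⟨h, ?_⟩
        congr!
      right_inv := by
        rintro ⟨⟨v, hv⟩, w⟩
        simp }
  have hfib : ∀ v : {v // v ∉ W},
      Nat.card F * Nat.card {w : W // Q (v + w) = a} = Nat.card W := by
    intro v
    have hl : (Q.polarBilin v.1).comp W.subtype ≠ 0 := by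
      intro h0
      refine v.2 (horth.le ?_)
      rw [LinearMap.BilinForm.mem_orthogonal_iff]
      intro w hw
      have := LinearMap.congr_fun h0 ⟨w, hw⟩
      simpa [QuadraticMap.polar_comm] using this
    rw [← card_mul_card_fiber_of_ne_zero _ hl (a - Q v)]
    congr 1
    refine Nat.card_congr (Equiv.subtypeEquivRight fun w => ?_)
    simp [QuadraticMap.polar, hW _ w.2]
  have hcount := Nat.card_congr e
  have := Fintype.ofFinite {v // v ∉ W}
  rw [Nat.card_sigma, Nat.card_prod] at hcount
  have hmul : Nat.card {v // v ∉ W} * Nat.card W =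
      Nat.card F * Nat.card {v // Q v = a} * Nat.card W := by
    rw [mul_assoc, ← hcount, Finset.mul_sum, Finset.sum_congr rfl fun v _ => hfib v]
    simp
  have := Nat.eq_of_mul_eq_mul_right Nat.card_pos hmul
  lia

end QuadraticForm

section FieldAction

variable {F K V : Type*} [Field F] [Field K] [Algebra F K] [AddCommGroup V] [Module F V]
  [Module K V] [IsScalarTower F K V]

/-- If the generator `t` of `K` acts by isometries of `Q` and `σ t = t⁻¹`, then every scalar `x`
has adjoint `σ x` with respect to the polar form. -/
lemma QuadraticForm.polar_smul_left_eq_of_adjoin (Q : QuadraticForm F V) (σ : K →ₐ[F] K) {t : K}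
    (ht : Algebra.adjoin F {t} = ⊤) (ht0 : t ≠ 0) (hσ : σ t = t⁻¹) (hQ : ∀ v, Q (t • v) = Q v)
    (x : K) (u v : V) :
    QuadraticMap.polar Q (x • u) v = QuadraticMap.polar Q u (σ x • v) := by
  have hx : x ∈ Algebra.adjoin F {t} := ht ▸ Algebra.mem_top
  induction hx using Algebra.adjoin_induction generalizing u v with
  | mem x hx =>
    obtain rfl : x = t := hx
    have h : v = x • x⁻¹ • v := by simp [smul_smul, ht0]
    rw [hσ]
    conv_lhs => rw [h]
    simp only [QuadraticMap.polar, ← smul_add, hQ]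
  | algebraMap r => simp [algebraMap_smul]
  | add x y _ _ hx hy => simp [add_smul, hx, hy]
  | mul x y _ _ hx hy => rw [mul_smul, hx, hy, ← mul_smul, map_mul, mul_comm]

/-- If the generator `t ≠ 1` of `K` acts by isometries of `Q` and `σ t = t⁻¹`, then so does every
`c` with `c * σ c = 1`. -/
lemma QuadraticForm.map_smul_of_mul_eq_one (Q : QuadraticForm F V) (σ : K →ₐ[F] K) {t : K}
    (ht : Algebra.adjoin F {t} = ⊤) (ht0 : t ≠ 0) (ht1 : t ≠ 1) (hσ : σ t = t⁻¹)
    (hQ : ∀ v, Q (t • v) = Q v) {c : K} (hc : c * σ c = 1) (v : V) : Q (c • v) = Q v := by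
  have hpolar : ∀ u v, QuadraticMap.polar Q (c • u) (c • v) = QuadraticMap.polar Q u v := by
    intro u v
    rw [Q.polar_smul_left_eq_of_adjoin σ ht ht0 hσ hQ, smul_smul, mul_comm, hc, one_smul]
  -- `Q (c • v) - Q v` is additive in `v` and invariant under `t`, so vanishes on `(t - 1) • V`.
  have hv : v = t • ((t - 1)⁻¹ • v) - (t - 1)⁻¹ • v := by
    rw [smul_smul t, ← sub_smul, ← sub_one_mul, mul_inv_cancel₀ (sub_ne_zero.2 ht1), one_smul]
  set w := (t - 1)⁻¹ • v
  have h1 := hpolar v w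
  have h2 : v + w = t • w := by rw [hv]; abel
  have h3 : Q (c • t • w) = Q (t • c • w) := by rw [smul_comm]
  simp only [QuadraticMap.polar, ← smul_add, h2, hQ, h3] at h1
  linear_combination -h1

/-- A unit of a field acts freely on nonzero vectors, so its order divides the size of any
invariant set of nonzero vectors. -/
lemma orderOf_dvd_card_of_smul_mem [Finite V] (c : Kˣ) (p : V → Prop)
    (hp : ∀ v, p v → p (c • v)) (h0 : ¬ p 0) : orderOf c ∣ Nat.card {v // p v} := by
  have hinj : Function.Injective fun v : {v // p v} => (⟨c • v.1, hp _ v.2⟩ : {v // p v}) := by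
    intro v w h
    simpa [Subtype.ext_iff] using h
  have hinv : ∀ v, p v → p (c⁻¹ • v) := by
    intro v hv
    obtain ⟨w, hw⟩ := Finite.surjective_of_injective hinj ⟨v, hv⟩
    have hw' : c • w.1 = v := congrArg Subtype.val hw
    rw [← hw', inv_smul_smul]
    exact w.2
  let S : SubMulAction (Subgroup.zpowers c) V :=
    { carrier := {v | p v}
      smul_mem' := by
        rintro ⟨g, hg⟩ v hv
        have hz : ∀ n : ℤ, p ((c ^ n) • v) := by
          intro n
          induction n with
          | zero => simpa using hv
          | succ n ih => rw [_root_.zpow_add_one, mul_comm, mul_smul]; exact hp _ ih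
          | pred n ih => rw [_root_.zpow_sub_one, mul_comm, mul_smul]; exact hinv _ ih
        obtain ⟨n, rfl⟩ := hg
        exact hz n }
  have hfree : ∀ b : S, MulAction.stabilizer (Subgroup.zpowers c) b = ⊥ := by
    intro b
    rw [eq_bot_iff]
    intro g hg
    have hb : (b : V) ≠ 0 := fun h => h0 (h ▸ b.2)
    have h1 : ((g : Kˣ) : K) • (b : V) = b := congrArg Subtype.val hg
    have h2 : (((g : Kˣ) : K) - 1) • (b : V) = 0 := by rw [sub_smul, h1, one_smul, sub_self]
    rw [Subgroup.mem_bot]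
    ext
    simpa [sub_eq_zero, hb] using h2
  have := Nat.card_congr (MulAction.selfEquivOrbitsQuotientProd hfree)
  rw [Nat.card_prod, Nat.card_zpowers] at this
  exact Dvd.intro_left _ this.symm

end FieldAction

/-- An automorphism of a finite field inverting a generator `t` with `t ^ 2 ≠ 1` is the
power map `x ↦ x ^ q ^ m`, where the degree of the extension is `2 * m`. -/
lemma FiniteField.algHom_apply_of_inv {F K : Type*} [Field F] [Fintype F] [Field K] [Finite K]
    [Algebra F K] (σ : K →ₐ[F] K) {t : K} (ht : Algebra.adjoin F {t} = ⊤)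
    (hσ : σ t = t⁻¹) (ht2 : t⁻¹ ≠ t) {m : ℕ} (hm : Module.finrank F K = 2 * m) (x : K) :
    σ x = x ^ Fintype.card F ^ m := by
  obtain ⟨⟨k, hk⟩, rfl⟩ := (FiniteField.bijective_frobeniusAlgHom_pow F K).2 σ
  dsimp only at hσ ⊢
  have hsq : FiniteField.frobeniusAlgHom F K ^ (2 * k) = 1 := by
    refine AlgHom.ext_of_adjoin_eq_top ht ?_
    rintro _ rfl
    rw [two_mul, pow_add, AlgHom.mul_apply, hσ, map_inv₀, hσ, inv_inv, AlgHom.one_apply]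
  have hdvd := orderOf_dvd_of_pow_eq_one hsq
  rw [FiniteField.orderOf_frobeniusAlgHom, hm] at hdvd
  have hmk : m ∣ k := Nat.dvd_of_mul_dvd_mul_left two_pos hdvd
  have hk0 : k ≠ 0 := by
    rintro rfl
    exact ht2 (by simpa using hσ.symm)
  have hkm : k = m := by
    obtain ⟨j, rfl⟩ := hmk
    rcases j with _ | _ | j
    · simp at hk0
    · simp
    · rw [hm] at hk
      nlinarith
  rw [hkm, AlgHom.coe_pow, FiniteField.coe_frobeniusAlgHom, pow_iterate]

/-- In a finite field with `n ^ 2` elements, there is a unit of order `n + 1`. -/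
lemma FiniteField.exists_orderOf_eq_add_one {K : Type*} [Field K] [Finite K] {n : ℕ}
    (hn : Nat.card K = n ^ 2) : ∃ c : Kˣ, orderOf c = n + 1 := by
  obtain ⟨g, hg⟩ := IsCyclic.exists_ofOrder_eq_natCard (α := Kˣ)
  have hcard : Nat.card Kˣ = (n - 1) * (n + 1) := by
    rw [Nat.card_units, hn, mul_comm, ← Nat.sq_sub_sq, one_pow]
  have hlt : 1 < n := by
    by_contra h
    have := Finite.one_lt_card (α := K)
    interval_cases n <;> simp_all
  refine ⟨g ^ (n - 1), ?_⟩
  rw [orderOf_pow_of_dvd (by lia) (by rw [hg, hcard]; exact dvd_mul_right _ _), hg, hcard,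
    Nat.mul_div_cancel_left _ (by lia)]

/-- Let a finite extension `K` of a finite field act on a space `V` of the same dimension. If a
generator `t` of `K` acts by isometries of a nondegenerate form and `t` is conjugate to
`t⁻¹ ≠ t`, then every totally singular subspace has less than half the dimension. -/
theorem QuadraticForm.two_mul_finrank_lt_of_isometry {F K V : Type*} [Field F] [Fintype F]
    [Field K] [Finite K] [Algebra F K] [AddCommGroup V] [Module F V] [Finite V] [Module K V]
    [IsScalarTower F K V] (hKV : Module.finrank F V = Module.finrank F K)
    (Q : QuadraticForm F V) (hQ : LinearMap.BilinForm.Nondegenerate Q.polarBilin)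
    (σ : K →ₐ[F] K) {t : K} (ht : Algebra.adjoin F {t} = ⊤) (hσ : σ t = t⁻¹) (ht2 : t⁻¹ ≠ t)
    (hiso : ∀ v, Q (t • v) = Q v) (W : Submodule F V) (hW : ∀ w ∈ W, Q w = 0) :
    2 * Module.finrank F W < Module.finrank F V := by
  by_contra! hdim
  obtain ⟨horth, hfin⟩ := Q.orthogonal_eq_of_totallySingular hQ W hW hdim
  set m := Module.finrank F W
  have ht0 : t ≠ 0 := by rintro rfl; simp at ht2
  have ht1 : t ≠ 1 := by rintro rfl; simp at ht2
  have hm : 0 < m := by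
    have : 0 < Module.finrank F K := Module.finrank_pos
    lia
  have hcardK : Nat.card K = (Nat.card F ^ m) ^ 2 := by
    rw [Module.natCard_eq_pow_finrank (K := F), ← hKV, hfin, ← pow_mul, mul_comm]
  obtain ⟨c, hc⟩ := FiniteField.exists_orderOf_eq_add_one hcardK
  have hcσ : (c : K) * σ c = 1 := by
    rw [FiniteField.algHom_apply_of_inv σ ht hσ ht2 (hKV ▸ hfin), ← pow_succ',
      ← Nat.card_eq_fintype_card, ← hc, ← Units.val_pow_eq_pow_val, pow_orderOf_eq_one,
      Units.val_one]
  have hdvd : orderOf c ∣ Nat.card {v // Q v = 1} :=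
    orderOf_dvd_card_of_smul_mem c (fun v => Q v = 1)
      (fun v hv => (Q.map_smul_of_mul_eq_one σ ht ht0 ht1 hσ hiso hcσ v).trans hv) (by simp)
  have hcount := Q.card_mul_card_fiber_add W hW horth one_ne_zero
  rw [Module.natCard_eq_pow_finrank (K := F) (V := W),
    Module.natCard_eq_pow_finrank (K := F) (V := V), hfin, mul_comm 2, pow_mul] at hcount
  rw [hc] at hdvd
  set n := Nat.card F ^ m
  have hn : 1 < n := Nat.one_lt_pow hm.ne' Finite.one_lt_card
  have h1 : n + 1 ∣ n * (n - 1) := by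
    have : n * (n - 1) = Nat.card F * Nat.card {v // Q v = 1} := by
      rw [Nat.mul_sub, ← sq]
      lia
    exact this ▸ hdvd.mul_left _
  have h2 : n + 1 ∣ n - 1 :=
    (Nat.coprime_self_add_left.2 (Nat.coprime_one_left n)).dvd_of_dvd_mul_left h1
  have := Nat.le_of_dvd (by lia) h2
  lia

/-- A polynomial annihilates its companion matrix. -/
lemma aeval_companionMatrix {F : Type*} [Field F] {f : F[X]} (hf : f.Monic) :
    aeval (companionMatrix f) f = 0 := by
  have hf0 := hf.ne_zero
  have h : companionMatrix f = Algebra.leftMulMatrix (AdjoinRoot.powerBasis hf0).basis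
      (AdjoinRoot.root f) := by
    have := (AdjoinRoot.powerBasis hf0).leftMulMatrix
    rw [AdjoinRoot.powerBasis_gen] at this
    rw [this]
    ext i j
    have hj : (j : ℕ) = f.natDegree - 1 ↔ (j : ℕ) + 1 = f.natDegree := by lia
    simp [companionMatrix, hj, PowerBasis.minpolyGen_eq, AdjoinRoot.minpoly_root hf0,
      hf.leadingCoeff]
    rfl
  have h0 : aeval (Algebra.leftMulMatrix (AdjoinRoot.powerBasis hf0).basis (AdjoinRoot.root f)) f =
      0 := by
    rw [aeval_algHom_apply, AdjoinRoot.aeval_eq, AdjoinRoot.mk_self, map_zero]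
  rw [h]
  exact h0

/-- The inverse of a root of a self-dual polynomial is a root. -/
lemma eval₂_inv_eq_zero_of_dualPoly_eq {F K : Type*} [Field F] [Field K] {f : F[X]}
    (hf : dualPoly f = f) (i : F →+* K) {x : K} (hx0 : x ≠ 0) (hx : f.eval₂ i x = 0) :
    f.eval₂ i x⁻¹ = 0 := by
  let := invertibleOfNonzero hx0
  have := (eval₂_reverse_eq_zero_iff i x f).2 hx
  rw [invOf_eq_inv] at this
  rw [← hf, dualPoly, eval₂_mul, this, mul_zero]

/-- Let `f` be a monic irreducible self-dual polynomial of degree `d > 1` over a finite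
field, and let `X` be its companion matrix.  If `Q` is a nonsingular quadratic form on
`F^d` preserved by `X`, then every totally singular subspace `W` satisfies
`2·dim W < d`: that is, `Q` has minus type. -/
theorem companion_selfdual_preserves_minus_type
    {F : Type*} [Field F] [Fintype F] (f : Polynomial F)
    (hmonic : f.Monic) (hirr : Irreducible f) (hdeg : 1 < f.natDegree)
    (hdual : dualPoly f = f)
    (Q : (Fin f.natDegree → F) → F)
    (hQsmul : ∀ (a : F) (v : Fin f.natDegree → F), Q (a • v) = a ^ 2 * Q v)
    (hpolar_addl : ∀ u₁ u₂ v, QuadraticMap.polar Q (u₁ + u₂) v =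
        QuadraticMap.polar Q u₁ v + QuadraticMap.polar Q u₂ v)
    (hpolar_smull : ∀ (a : F) (u v : Fin f.natDegree → F),
        QuadraticMap.polar Q (a • u) v = a * QuadraticMap.polar Q u v)
    (hpolar_addr : ∀ u v₁ v₂, QuadraticMap.polar Q u (v₁ + v₂) =
        QuadraticMap.polar Q u v₁ + QuadraticMap.polar Q u v₂)
    (hpolar_smulr : ∀ (a : F) (u v : Fin f.natDegree → F),
        QuadraticMap.polar Q u (a • v) = a * QuadraticMap.polar Q u v)
    (hnd : ∀ v, (∀ u, QuadraticMap.polar Q v u = 0) → v = 0)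
    (hiso : ∀ v, Q (v ᵥ* companionMatrix f) = Q v)
    (W : Submodule F (Fin f.natDegree → F))
    (hW : ∀ w ∈ W, Q w = 0) :
    2 * Module.finrank F W < f.natDegree := by
  have : Fact (Irreducible f) := ⟨hirr⟩
  have hf0 := hirr.ne_zero
  let T : Module.End F (Fin f.natDegree → F) := (companionMatrix f).vecMulLinear
  have hT : aeval T f = 0 := by
    have h : ∀ p : F[X], aeval T p = (aeval (companionMatrix f) p).vecMulLinear := by
      intro p
      induction p using Polynomial.induction_on' with
      | add p q hp hq => ext; simp [hp, hq]
      | monomial n a =>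
        have hpow : T ^ n = (companionMatrix f ^ n).vecMulLinear := by
          induction n with
          | zero => ext; simp
          | succ n ih =>
            rw [pow_succ', ih, pow_succ]
            exact LinearMap.ext fun v => by simp [T, Matrix.vecMul_vecMul]
        ext
        simp [aeval_monomial, hpow, ← Algebra.smul_def]
    rw [h, aeval_companionMatrix hmonic]
    ext
    simp
  let φ : AdjoinRoot f →ₐ[F] Module.End F (Fin f.natDegree → F) :=
    Ideal.Quotient.liftₐ (Ideal.span {f}) (aeval T) fun p hp => by
      obtain ⟨q, rfl⟩ := Ideal.mem_span_singleton'.1 hp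
      rw [map_mul, hT, mul_zero]
  have hφ : φ (AdjoinRoot.root f) = T := aeval_X T
  let : Module (AdjoinRoot f) (Fin f.natDegree → F) := Module.compHom _ φ.toRingHom
  have hsmul : ∀ (x : AdjoinRoot f) (v : Fin f.natDegree → F), x • v = φ x v := fun _ _ => rfl
  have : IsScalarTower F (AdjoinRoot f) (Fin f.natDegree → F) :=
    ⟨fun a x v => by rw [hsmul, hsmul, map_smul]; rfl⟩
  have : FiniteDimensional F (AdjoinRoot f) := (AdjoinRoot.powerBasis hf0).finite
  have : Finite (AdjoinRoot f) := Module.finite_of_finite F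
  have hK : Module.finrank F (AdjoinRoot f) = f.natDegree := by
    rw [(AdjoinRoot.powerBasis hf0).finrank, AdjoinRoot.powerBasis_dim]
  have hroot : ∀ a : F, AdjoinRoot.root f ≠ algebraMap F (AdjoinRoot f) a := by
    intro a h
    have h0 : AdjoinRoot.mk f (X - C a) = 0 := by
      rw [map_sub, AdjoinRoot.mk_X, AdjoinRoot.mk_C, h, AdjoinRoot.algebraMap_eq, sub_self]
    have := natDegree_le_of_dvd (AdjoinRoot.mk_eq_zero.1 h0) (X_sub_C_ne_zero a)
    rw [natDegree_X_sub_C] at this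
    lia
  have hr0 : AdjoinRoot.root f ≠ 0 := by simpa using hroot 0
  have hr2 : (AdjoinRoot.root f)⁻¹ ≠ AdjoinRoot.root f := by
    intro h
    rcases inv_eq_self₀.1 h with h | h | h
    · exact hroot (-1) (by simpa using h)
    · exact hr0 h
    · exact hroot 1 (by simpa using h)
  let σ : AdjoinRoot f →ₐ[F] AdjoinRoot f :=
    AdjoinRoot.liftAlgHom f (Algebra.ofId F _) (AdjoinRoot.root f)⁻¹
      (eval₂_inv_eq_zero_of_dualPoly_eq hdual _ hr0 (AdjoinRoot.eval₂_root f))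
  let Q' : QuadraticForm F (Fin f.natDegree → F) :=
    QuadraticMap.ofPolar Q (fun a v => by rw [hQsmul, sq, smul_eq_mul]) hpolar_addl hpolar_smull
  have hnondeg : LinearMap.BilinForm.Nondegenerate Q'.polarBilin :=
    ⟨fun v hv => hnd v hv, fun v hv => hnd v fun u => by
      rw [QuadraticMap.polar_comm]; exact hv u⟩
  have hmain := Q'.two_mul_finrank_lt_of_isometry (K := AdjoinRoot f) (by simp [hK]) hnondeg σ
    AdjoinRoot.adjoinRoot_eq_top (AdjoinRoot.liftAlgHom_root ..) hr2
    (fun v => by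
      rw [hsmul, hφ]
      exact hiso v) W hW
  simpa using hmain
end
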